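/- Let G be a simple graph on [n] with no isolated vertex whose edge ideal I = I(G) has almost maximal finite index t. Then n = t + 4 or n = t + 5. -/

import Mathlib

open Finsupp

namespace EP

variable (K : Type) [Field K]

/-! ## Simplicial chains over a linearly ordered vertex set -/

variable {V : Type} [Fintype V] [DecidableEq V] [LinearOrder V]

/-- Boundary of a single (oriented) face, given as a finset. -/
noncomputable def bdFace (s : Finset V) : Finset V →₀ K :=
  ∑ v ∈ s, ((-1 : K) ^ ((s.filter (fun w => w < v)).card)) • Finsupp.single (s.erase v) 1

/-- The simplicial boundary map on the free module on all finsets of vertices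
(the augmented oriented chain complex, with the empty set playing the role of
the `(-1)`-dimensional face). -/
noncomputable def bdS : (Finset V →₀ K) →ₗ[K] (Finset V →₀ K) :=
  Finsupp.lsum K fun s => LinearMap.toSpanSingleton K (Finset V →₀ K) (bdFace K s)

/-- Chains supported on faces of a complex `Δ` having `k` vertices. -/
noncomputable def faceSpan (Δ : Set (Finset V)) (k : ℕ) : Submodule K (Finset V →₀ K) :=
  Submodule.span K {c | ∃ F ∈ Δ, F.card = k ∧ c = Finsupp.single F 1}

/-- Dimension of the `d`-th reduced simplicial homology of `Δ` over `K`. -/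
noncomputable def redHomRank (Δ : Set (Finset V)) (d : ℕ) : ℕ :=
  Module.finrank K ↥(faceSpan K Δ (d+1) ⊓ LinearMap.ker (bdS K)) -
    Module.finrank K
      ↥(Submodule.map (bdS K) (faceSpan K Δ (d+2)) ⊓
          (faceSpan K Δ (d+1) ⊓ LinearMap.ker (bdS K)))

/-- The flag complex of a graph: faces are the cliques. -/
def flagComplex (G : SimpleGraph V) : Set (Finset V) :=
  {F | ∀ i ∈ F, ∀ j ∈ F, i ≠ j → G.Adj i j}

/-- The flag complex of the induced subgraph of `G` on `W`. -/
def flagComplexOn (G : SimpleGraph V) (W : Finset V) : Set (Finset V) :=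
  {F | (F : Set V) ⊆ (W : Set V) ∧ ∀ i ∈ F, ∀ j ∈ F, i ≠ j → G.Adj i j}

/-- The induced subcomplex of `Δ` on a vertex subset `W`. -/
def restrictComplex (Δ : Set (Finset V)) (W : Finset V) : Set (Finset V) :=
  {F | F ∈ Δ ∧ F ⊆ W}

/-- The oriented `1`-chain `[a,b]` (so `[a,b] = -[b,a]`). -/
noncomputable def edgeChain (a b : V) : Finset V →₀ K :=
  if a < b then Finsupp.single {a, b} 1 else -Finsupp.single {a, b} 1

/-- The oriented `2`-chain `[x,y,z]`, antisymmetric under transpositions. -/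
noncomputable def triChain (x y z : V) : Finset V →₀ K :=
  if (x < y ∧ y < z) ∨ (y < z ∧ z < x) ∨ (z < x ∧ x < y)
  then Finsupp.single {x, y, z} 1
  else -Finsupp.single {x, y, z} 1

/-! ## Graded Betti numbers of monomial ideals via the Taylor complex -/

variable {n : ℕ}

/-- The multidegree lcm of the monomial generators indexed by `S`. -/
def mlcm {r : ℕ} (g : Fin r → (Fin n → ℕ)) (S : Finset (Fin r)) : Fin n → ℕ :=
  fun x => S.sup fun k => g k x

/-- The differential of the Taylor complex tensored with the residue field `K`. -/
noncomputable def bdT {r : ℕ} (g : Fin r → (Fin n → ℕ)) :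
    (Finset (Fin r) →₀ K) →ₗ[K] (Finset (Fin r) →₀ K) :=
  Finsupp.lsum K fun S => LinearMap.toSpanSingleton K (Finset (Fin r) →₀ K)
    (∑ k ∈ S, if mlcm g (S.erase k) = mlcm g S
      then ((-1 : K) ^ ((S.filter (fun j => j < k)).card)) • Finsupp.single (S.erase k) (1 : K)
      else 0)

/-- The degree-`j` strand of the Taylor complex in homological degree `p`. -/
noncomputable def strand {r : ℕ} (g : Fin r → (Fin n → ℕ)) (p j : ℕ) :
    Submodule K (Finset (Fin r) →₀ K) :=
  Submodule.span K
    {c | ∃ S : Finset (Fin r), S.card = p ∧ (∑ x, mlcm g S x) = j ∧ c = Finsupp.single S 1}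

/-- `dim_K Tor_p(S/I, K)_j`, computed from the Taylor complex on the monomial
generators `g` of `I`. -/
noncomputable def torRank {r : ℕ} (g : Fin r → (Fin n → ℕ)) (p j : ℕ) : ℕ :=
  Module.finrank K ↥(strand K g p j ⊓ LinearMap.ker (bdT K g)) -
    Module.finrank K
      ↥(Submodule.map (bdT K g) (strand K g (p+1) j) ⊓
          (strand K g p j ⊓ LinearMap.ker (bdT K g)))

/-- The graded Betti number `β_{i,j}(I)` of the monomial ideal `I` generated by
the monomials with exponent vectors `g`, i.e. `dim_K Tor_i(I, K)_j = dim_K Tor_{i+1}(S/I, K)_j`. -/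
noncomputable def betti {r : ℕ} (g : Fin r → (Fin n → ℕ)) (i j : ℕ) : ℕ :=
  torRank K g (i+1) j

/-- The monomial with exponent vector `a`. -/
noncomputable def mono (a : Fin n → ℕ) : MvPolynomial (Fin n) K :=
  MvPolynomial.monomial (Finsupp.equivFunOnFinite.symm a) 1

/-- `g` is a list of exponent vectors of monomials generating the ideal `I`. -/
def IsGenSet {r : ℕ} (g : Fin r → (Fin n → ℕ)) (I : Ideal (MvPolynomial (Fin n) K)) : Prop :=
  Ideal.span (Set.range fun k => mono K (g k)) = I

/-- The ideal (generated by the monomials with exponent vectors `g`) has a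
`d`-linear resolution. -/
def HasLinRes {r : ℕ} (g : Fin r → (Fin n → ℕ)) (d : ℕ) : Prop :=
  ∀ i j, betti K g i j ≠ 0 → j = i + d

/-- Castelnuovo–Mumford regularity of a monomial ideal, from its Betti numbers. -/
noncomputable def regT {r : ℕ} (g : Fin r → (Fin n → ℕ)) : ℕ :=
  sSup {d | ∃ i j, betti K g i j ≠ 0 ∧ j = i + d}

/-! ## Edge ideals -/

/-- The edge ideal of a simple graph. -/
noncomputable def edgeIdeal (G : SimpleGraph (Fin n)) : Ideal (MvPolynomial (Fin n) K) :=
  Ideal.span {m | ∃ i j : Fin n, G.Adj i j ∧ m = MvPolynomial.X i * MvPolynomial.X j}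

/-- The edge set of `G` as a finset. -/
noncomputable def edgeFins (G : SimpleGraph (Fin n)) : Finset (Sym2 (Fin n)) :=
  letI : Fintype ↥G.edgeSet := Fintype.ofFinite _
  G.edgeFinset

/-- The canonical monomial (exponent vector) generators of the edge ideal of `G`. -/
noncomputable def edgeGens (G : SimpleGraph (Fin n)) : Fin (edgeFins G).card → (Fin n → ℕ) :=
  fun k x => if x ∈ ((edgeFins G).equivFin.symm k : Sym2 (Fin n)) then 1 else 0

/-- The graded Betti numbers `β_{i,j}(I(G))` of the edge ideal of `G` over `K`. -/
noncomputable def gBetti (G : SimpleGraph (Fin n)) (i j : ℕ) : ℕ :=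
  betti K (edgeGens G) i j

/-- The projective dimension `pd(I(G))` of the edge ideal of `G` over `K`. -/
noncomputable def gPd (G : SimpleGraph (Fin n)) : ℕ :=
  sSup {i | ∃ j, gBetti K G i j ≠ 0}

/-- The Green–Lazarsfeld index of the edge ideal of `G` over `K`
(`⊤` iff the ideal has a linear resolution). -/
noncomputable def gIndex (G : SimpleGraph (Fin n)) : ℕ∞ :=
  sInf {N : ℕ∞ | ∃ i j : ℕ, N = (i : ℕ∞) ∧ i + 2 < j ∧ gBetti K G i j ≠ 0}

/-- The regularity of the edge ideal of `G` over `K`. -/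
noncomputable def gReg (G : SimpleGraph (Fin n)) : ℕ :=
  sSup {d | ∃ i j, gBetti K G i j ≠ 0 ∧ j = i + d}

/-- The edge ideal of `G` has a (2-)linear resolution over `K`. -/
def gLinRes (G : SimpleGraph (Fin n)) : Prop :=
  ∀ i j, gBetti K G i j ≠ 0 → j = i + 2

/-- The edge ideal of `G` has almost maximal finite index over `K`:
`index(I(G)) = pd(I(G)) - 1` (with the index finite). -/
def AMFI (G : SimpleGraph (Fin n)) : Prop :=
  gIndex K G + 1 = (gPd K G : ℕ∞)

/-! ## Graph-theoretic notions -/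

/-- `H` contains an induced (chordless) cycle of length `l`. -/
def HasInducedCycle {W : Type} (H : SimpleGraph W) (l : ℕ) : Prop :=
  ∃ f : ZMod l → W, Function.Injective f ∧
    ∀ i j : ZMod l, H.Adj (f i) (f j) ↔ (j = i + 1 ∨ i = j + 1)

/-- `H` is chordal: it has no induced cycle of length greater than `3`. -/
def Chordal {W : Type} (H : SimpleGraph W) : Prop :=
  ∀ l : ℕ, 3 < l → ¬ HasInducedCycle H l

end EP


open Finsupp
set_option linter.unusedSectionVars false
set_option linter.unusedSimpArgs false
set_option linter.deprecated false
namespace AM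

section ops
variable {K : Type} [Field K] {α : Type} [LinearOrder α]

abbrev M (K α : Type) [Field K] := Finset α →₀ K

noncomputable def sg (K : Type) [Field K] (v : α) (s : Finset α) : K :=
  (-1 : K) ^ ((s.filter (fun w => w < v)).card)

theorem sg_mul_self (v : α) (s : Finset α) : sg K v s * sg K v s = 1 := by
  unfold sg
  rw [← pow_add, ← two_mul, pow_mul]; simp

theorem sg_ne (v : α) (s : Finset α) : sg K v s ≠ 0 := by
  unfold sg
  exact pow_ne_zero _ (by simp)

theorem sg_insert {v w : α} {s : Finset α} (h : v ∉ s) :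
    sg K w (insert v s) = if v < w then - sg K w s else sg K w s := by
  unfold sg
  rw [Finset.filter_insert]
  split_ifs with h1
  · rw [Finset.card_insert_of_notMem (by simp [h]), pow_succ]; ring
  · rfl

theorem sg_erase {v w : α} {s : Finset α} (h : v ∈ s) :
    sg K w (s.erase v) = if v < w then - sg K w s else sg K w s := by
  have := sg_insert (K := K) (v := v) (w := w) (s := s.erase v) (by simp)
  rw [Finset.insert_erase h] at this
  rw [this]; split_ifs <;> simp

noncomputable def up (K : Type) [Field K] (v : α) : M K α →ₗ[K] M K α :=
  Finsupp.lsum K fun s => LinearMap.toSpanSingleton K _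
    (if v ∈ s then 0 else sg K v s • Finsupp.single (insert v s) (1 : K))

noncomputable def dn (K : Type) [Field K] (v : α) : M K α →ₗ[K] M K α :=
  Finsupp.lsum K fun s => LinearMap.toSpanSingleton K _
    (if v ∈ s then sg K v s • Finsupp.single (s.erase v) (1 : K) else 0)

theorem up_single (v : α) (s : Finset α) : up K v (single s 1) =
    if v ∈ s then 0 else sg K v s • Finsupp.single (insert v s) (1 : K) := by
  simp [up]

theorem dn_single (v : α) (s : Finset α) : dn K v (single s 1) =
    if v ∈ s then sg K v s • Finsupp.single (s.erase v) (1 : K) else 0 := by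
  simp [dn]

theorem ext1 {N : Type} [AddCommGroup N] [Module K N] {f g : M K α →ₗ[K] N}
    (h : ∀ s, f (single s 1) = g (single s 1)) : f = g := by
  apply Finsupp.lhom_ext'
  intro s
  apply LinearMap.ext_ring
  simpa using h s

theorem up_dn_self (v : α) : up K v ∘ₗ dn K v + dn K v ∘ₗ up K v = LinearMap.id := by
  apply ext1
  intro s
  simp only [LinearMap.add_apply, LinearMap.comp_apply, up_single, dn_single, LinearMap.id_apply]
  by_cases h : v ∈ s
  · simp [-Finsupp.smul_single, h, up_single, sg_erase h, Finset.insert_erase h, sg_mul_self, smul_smul]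
  · simp [-Finsupp.smul_single, h, dn_single, sg_insert h, sg_mul_self, smul_smul]

theorem up_dn_ne {v w : α} (hvw : v ≠ w) : up K v ∘ₗ dn K w + dn K w ∘ₗ up K v = 0 := by
  apply ext1
  intro s
  simp only [LinearMap.add_apply, LinearMap.comp_apply, up_single, dn_single, LinearMap.zero_apply]
  by_cases h : v ∈ s <;> by_cases h' : w ∈ s
  · simp [-Finsupp.smul_single, h, h', up_single, hvw]
  · simp [h, h']
  · simp only [h, h', if_true, if_false, map_smul, up_single, dn_single, Finset.mem_erase,
      Finset.mem_insert, or_true, and_false, smul_smul]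
    rw [sg_erase h', sg_insert h, Finset.erase_insert_of_ne hvw]
    rcases lt_trichotomy v w with h1 | h1 | h1
    · simp [h1, not_lt_of_gt h1, mul_comm]
    · exact absurd h1 hvw
    · simp [h1, not_lt_of_gt h1, mul_comm]
  · simp [-Finsupp.smul_single, h, h', dn_single, hvw.symm]

theorem dn_dn_self (v : α) : dn K v ∘ₗ dn K v = 0 := by
  apply ext1
  intro s
  simp only [LinearMap.comp_apply, dn_single, LinearMap.zero_apply]
  by_cases h : v ∈ s <;> simp [-Finsupp.smul_single, h, dn_single]

theorem dn_dn (v w : α) : dn K v ∘ₗ dn K w + dn K w ∘ₗ dn K v = 0 := by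
  by_cases hvw : v = w
  · subst hvw; simp [dn_dn_self]
  apply ext1
  intro s
  simp only [LinearMap.add_apply, LinearMap.comp_apply, dn_single, LinearMap.zero_apply]
  by_cases h : v ∈ s <;> by_cases h' : w ∈ s
  · simp only [h, h', if_true, map_smul, dn_single, Finset.mem_erase, ne_eq, hvw,
      not_false_eq_true, and_self, smul_smul, Ne.symm hvw]
    rw [sg_erase h', sg_erase h, Finset.erase_right_comm]
    rcases lt_trichotomy v w with h1 | h1 | h1
    · simp [h1, not_lt_of_gt h1, mul_comm]
    · exact absurd h1 hvw
    · simp [h1, not_lt_of_gt h1, mul_comm]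
  · simp [-Finsupp.smul_single, h, h', dn_single]
  · simp [-Finsupp.smul_single, h, h', dn_single]
  · simp [h, h']

theorem up_up_self (v : α) : up K v ∘ₗ up K v = 0 := by
  apply ext1
  intro s
  simp only [LinearMap.comp_apply, up_single, LinearMap.zero_apply]
  by_cases h : v ∈ s <;> simp [-Finsupp.smul_single, h, up_single]

theorem up_up (v w : α) : up K v ∘ₗ up K w + up K w ∘ₗ up K v = 0 := by
  by_cases hvw : v = w
  · subst hvw; simp [up_up_self]
  apply ext1
  intro s
  simp only [LinearMap.add_apply, LinearMap.comp_apply, up_single, LinearMap.zero_apply]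
  by_cases h : v ∈ s <;> by_cases h' : w ∈ s
  · simp [h, h']
  · simp [-Finsupp.smul_single, h, h', up_single]
  · simp [-Finsupp.smul_single, h, h', up_single]
  · simp only [h, h', if_false, map_smul, up_single, Finset.mem_insert, hvw, or_self,
      smul_smul, Ne.symm hvw]
    rw [sg_insert h', sg_insert h, Finset.insert_comm]
    rcases lt_trichotomy v w with h1 | h1 | h1
    · simp [h1, not_lt_of_gt h1, mul_comm]
    · exact absurd h1 hvw
    · simp [h1, not_lt_of_gt h1, mul_comm]

variable [Fintype α]

noncomputable def D (K α : Type) [Field K] [LinearOrder α] [Fintype α] : M K α →ₗ[K] M K α :=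
  ∑ v : α, dn K v

theorem D_single (s : Finset α) : D K α (single s 1) =
    ∑ v ∈ s, sg K v s • Finsupp.single (s.erase v) (1 : K) := by
  simp [D, LinearMap.sum_apply, dn_single, Finset.sum_ite_mem]

theorem DD (x : M K α) : D K α (D K α x) = 0 := by
  have : ∀ T : Finset α, (∑ v ∈ T, dn K v) ∘ₗ (∑ v ∈ T, dn K v) = 0 := by
    intro T
    induction T using Finset.induction_on with
    | empty => simp
    | insert a T ha ih =>
      rw [Finset.sum_insert ha, LinearMap.add_comp, LinearMap.comp_add, LinearMap.comp_add, ih,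
        dn_dn_self]
      have : ∀ T : Finset α, dn K a ∘ₗ (∑ v ∈ T, dn K v) + (∑ v ∈ T, dn K v) ∘ₗ dn K a = 0 := by
        intro T
        apply LinearMap.ext
        intro x
        simp only [LinearMap.add_apply, LinearMap.comp_apply, LinearMap.sum_apply, map_sum]
        rw [← Finset.sum_add_distrib]
        exact Finset.sum_eq_zero fun w _ => LinearMap.congr_fun (dn_dn a w) x
      rw [zero_add, add_zero]; exact this T
  exact LinearMap.congr_fun (this Finset.univ) x

theorem D_up (v : α) (x : M K α) : D K α (up K v x) = x - up K v (D K α x) := by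
  have : ∀ w, up K v (dn K w x) + dn K w (up K v x) = if w = v then x else 0 := by
    intro w
    split_ifs with h
    · subst h; exact LinearMap.congr_fun (up_dn_self w) x
    · exact LinearMap.congr_fun (up_dn_ne (Ne.symm h)) x
  have h2 := Finset.sum_congr rfl (fun w (_ : w ∈ (Finset.univ : Finset α)) => this w)
  rw [Finset.sum_add_distrib] at h2
  simp only [Finset.sum_ite_eq', Finset.mem_univ, if_true] at h2
  simp only [D, LinearMap.sum_apply, map_sum]
  rw [eq_sub_iff_add_eq, add_comm]; exact h2

theorem D_dn (v : α) (x : M K α) : D K α (dn K v x) = - dn K v (D K α x) := by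
  simp only [D, LinearMap.sum_apply, map_sum]
  rw [eq_neg_iff_add_eq_zero, ← Finset.sum_add_distrib]
  exact Finset.sum_eq_zero fun w _ => LinearMap.congr_fun (dn_dn w v) x

/-- chains supported on a family -/
abbrev Sp (K : Type) [Field K] {α : Type} (A : Set (Finset α)) : Submodule K (M K α) :=
  Finsupp.supported K K A

theorem mem_Sp {A : Set (Finset α)} {x : M K α} : x ∈ Sp K A ↔ ∀ s, s ∉ A → x s = 0 := by
  rw [Finsupp.mem_supported']

theorem single_Sp {A : Set (Finset α)} {s : Finset α} (h : s ∈ A) (c : K) : single s c ∈ Sp K A :=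
  Finsupp.single_mem_supported K c h

theorem map_Sp {N : Type} [AddCommGroup N] [Module K N] (f : M K α →ₗ[K] N) (A : Set (Finset α))
    (B : Submodule K N) (h : ∀ s ∈ A, f (single s 1) ∈ B) {x : M K α} (hx : x ∈ Sp K A) :
    f x ∈ B := by
  have : Sp K A ≤ B.comap f := by
    unfold Sp
    rw [Finsupp.supported_eq_span_single K A, Submodule.span_le]
    rintro _ ⟨s, hs, rfl⟩
    exact h s hs
  exact this hx

def Down (A : Set (Finset α)) : Prop := ∀ s ∈ A, ∀ v ∈ s, s.erase v ∈ A

theorem D_Sp {A B : Set (Finset α)} (h : ∀ s ∈ A, ∀ v ∈ s, s.erase v ∈ B) {x : M K α}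
    (hx : x ∈ Sp K A) : D K α x ∈ Sp K B := by
  refine map_Sp _ A _ ?_ hx
  intro s hs
  rw [D_single]
  exact Submodule.sum_mem _ fun v hv => Submodule.smul_mem _ _ (single_Sp (h s hs v hv) 1)

theorem up_Sp {A B : Set (Finset α)} (v : α) (h : ∀ s ∈ A, v ∉ s → insert v s ∈ B) {x : M K α}
    (hx : x ∈ Sp K A) : up K v x ∈ Sp K B := by
  refine map_Sp _ A _ ?_ hx
  intro s hs
  rw [up_single]
  split_ifs with h1
  · simp
  · exact Submodule.smul_mem _ _ (single_Sp (h s hs h1) 1)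

theorem dn_Sp {A B : Set (Finset α)} (v : α) (h : ∀ s ∈ A, v ∈ s → s.erase v ∈ B) {x : M K α}
    (hx : x ∈ Sp K A) : dn K v x ∈ Sp K B := by
  refine map_Sp _ A _ ?_ hx
  intro s hs
  rw [dn_single]
  split_ifs with h1
  · exact Submodule.smul_mem _ _ (single_Sp (h s hs h1) 1)
  · simp

/-- split a chain -/
theorem split_Sp (A B C : Set (Finset α)) (h : ∀ s ∈ A, s ∈ B ∨ s ∈ C) {x : M K α}
    (hx : x ∈ Sp K A) : ∃ y ∈ Sp K B, ∃ z ∈ Sp K C, x = y + z := by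
  classical
  have : Sp K A ≤ Sp K B ⊔ Sp K C := by
    rw [← Finsupp.supported_union]
    exact Finsupp.supported_mono fun s hs => h s hs
  obtain ⟨y, hy, z, hz, e⟩ := Submodule.mem_sup.1 (this hx)
  exact ⟨y, hy, z, hz, e.symm⟩

theorem Sp_disj {A B : Set (Finset α)} (h : ∀ s ∈ A, s ∉ B) {x : M K α}
    (hx : x ∈ Sp K A) (hy : x ∈ Sp K B) : x = 0 := by
  ext s
  by_cases hs : s ∈ A
  · exact mem_Sp.1 hy s (h s hs)
  · exact mem_Sp.1 hx s hs

theorem Sp_mono {A B : Set (Finset α)} (h : A ⊆ B) {x : M K α} (hx : x ∈ Sp K A) : x ∈ Sp K B :=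
  Finsupp.supported_mono h hx

/-- acyclicity -/
def Acyc (K : Type) [Field K] (A : Set (Finset α)) : Prop :=
  ∀ a ∈ Sp K A, D K α a = 0 → ∃ b ∈ Sp K A, D K α b = a

theorem acyc_of_pivot (A : Set (Finset α)) (hA : Down A) (lev : Finset α → ℕ) (piv : Finset α → α)
    (h1 : ∀ s ∈ A, insert (piv s) s ∈ A)
    (h2 : ∀ s ∈ A, ∀ v ∈ s, piv (s.erase v) = piv s ∨
      (lev (insert (piv s) (s.erase v)) < lev s ∧ insert (piv s) (s.erase v) ∈ A ∧
        lev (insert (piv (s.erase v)) (s.erase v)) < lev s)) : Acyc K A := by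
  classical
  let h : M K α →ₗ[K] M K α :=
    Finsupp.lsum K fun s => LinearMap.toSpanSingleton K _ (up K (piv s) (single s 1))
  have hs : ∀ s, h (single s 1) = up K (piv s) (single s 1) := by intro s; simp [h]
  have hA' : ∀ a ∈ Sp K A, h a ∈ Sp K A := by
    intro a ha
    refine map_Sp _ A _ ?_ ha
    intro s hsA
    rw [hs]
    rw [up_single]
    split_ifs
    · simp
    · exact Submodule.smul_mem _ _ (single_Sp (h1 s hsA) 1)
  have key : ∀ k, ∀ a ∈ Sp K {s | s ∈ A ∧ lev s < k}, D K α a = 0 → ∃ b ∈ Sp K A, D K α b = a := by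
    intro k
    induction k with
    | zero =>
      intro a ha _
      refine ⟨0, by simp, ?_⟩
      have : a = 0 := by
        ext s; exact mem_Sp.1 ha s (by simp)
      simp [this]
    | succ k ih =>
      intro a ha hDa
      have hN : D K α (h a) + h (D K α a) - a ∈ Sp K {s | s ∈ A ∧ lev s < k} := by
        have := map_Sp (D K α ∘ₗ h + h ∘ₗ D K α - LinearMap.id) {s | s ∈ A ∧ lev s < k + 1}
          (Sp K {s | s ∈ A ∧ lev s < k}) ?_ ha
        · simpa using this
        rintro s ⟨hsA, hsk⟩
        simp only [LinearMap.sub_apply, LinearMap.add_apply, LinearMap.comp_apply,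
          LinearMap.id_apply, hs, D_up]
        rw [D_single, map_sum, map_sum]
        have : ∀ x y z : M K α, x - y + z - x = z - y := by intros; abel
        rw [this, ← Finset.sum_sub_distrib]
        refine Submodule.sum_mem _ fun v hv => ?_
        rw [map_smul, map_smul, hs, ← smul_sub]
        refine Submodule.smul_mem _ _ ?_
        rcases h2 s hsA v hv with h3 | ⟨h3, h4, h5⟩
        · rw [h3, sub_self]; simp
        · refine Submodule.sub_mem _ ?_ ?_
          · rw [up_single]
            split_ifs
            · simp
            · exact Submodule.smul_mem _ _ (single_Sp (A := {s | s ∈ A ∧ lev s < k}) ⟨h1 _ (hA s hsA v hv), by omega⟩ 1)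
          · rw [up_single]
            split_ifs
            · simp
            · exact Submodule.smul_mem _ _ (single_Sp (A := {s | s ∈ A ∧ lev s < k}) ⟨h4, by omega⟩ 1)
      rw [hDa, map_zero, add_zero] at hN
      obtain ⟨b, hb, hb'⟩ := ih _ hN (by rw [map_sub, DD, hDa, sub_zero])
      refine ⟨h a - b, Submodule.sub_mem _ (hA' a (Sp_mono (fun s hs => hs.1) ha)) hb, ?_⟩
      rw [map_sub, hb']; abel
  intro a ha
  refine key (Finset.univ.sup lev + 1) a (Sp_mono (B := {s | s ∈ A ∧ lev s < Finset.univ.sup lev + 1}) (fun s hs => ⟨hs, ?_⟩) ha)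
  exact Nat.lt_succ_of_le (Finset.le_sup (Finset.mem_univ s))

/-- nontrivial relative homology class in degree `p` (sets of size `p`) -/
def Rel (K : Type) [Field K] (Γ A : Set (Finset α)) (p : ℕ) : Prop :=
  ∃ z ∈ Sp K {s | s ∈ Γ ∧ s.card = p}, D K α z ∈ Sp K A ∧
    ¬ ∃ y ∈ Sp K Γ, z - D K α y ∈ Sp K A

theorem rel_swap {Γ A B : Set (Finset α)} {p : ℕ} (hAΓ : A ⊆ Γ) (hBΓ : B ⊆ Γ) 
    (hA : Acyc K A) (hB : Acyc K B) (h : Rel K Γ A p) : Rel K Γ B p := by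
  obtain ⟨z, hz, hDz, hn⟩ := h
  obtain ⟨a, ha, hDa⟩ := hA _ hDz (DD z)
  obtain ⟨a1, ha1, a2, ha2, rfl⟩ := split_Sp A {s | s ∈ A ∧ s.card = p} {s | s ∈ A ∧ s.card ≠ p}
    (fun s hs => by by_cases h : s.card = p <;> simp [h, hs]) ha
  have e : D K α a2 = 0 := by
    refine Sp_disj (A := {s | s.card + 1 = p}) (B := {s | s.card + 1 ≠ p}) (by simp) ?_ ?_
    · have : D K α a2 = D K α (z - a1) := by rw [map_sub, ← hDa, map_add]; abel
      rw [this]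
      refine D_Sp (A := {s | s.card = p}) ?_ (Submodule.sub_mem _ (Sp_mono ?_ hz) (Sp_mono ?_ ha1))
      · intro s hs v hv
        simp only [Set.mem_setOf_eq] at hs ⊢
        rw [Finset.card_erase_add_one hv, hs]
      · exact fun s hs => hs.2
      · exact fun s hs => hs.2
    · refine D_Sp ?_ ha2
      intro s hs v hv
      simp only [Set.mem_setOf_eq] at hs ⊢
      rw [Finset.card_erase_add_one hv]; exact hs.2
  refine ⟨z - a1, Submodule.sub_mem _ hz (Sp_mono (B := {s | s ∈ Γ ∧ s.card = p}) (fun s hs => ⟨hAΓ hs.1, hs.2⟩) ha1), ?_, ?_⟩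
  · rw [map_sub, ← hDa, map_add, e]; simp
  · rintro ⟨y, hy, hy'⟩
    have ecyc : D K α (z - a1 - D K α y) = 0 := by
      rw [map_sub, DD, map_sub, ← hDa, map_add, e]; simp
    obtain ⟨b, hb, hDb⟩ := hB _ hy' ecyc
    refine hn ⟨y + b, Submodule.add_mem _ hy (Sp_mono hBΓ hb), ?_⟩
    rw [map_add, hDb]
    have : z - (D K α y + (z - a1 - D K α y)) = a1 := by abel
    rw [this]
    exact Sp_mono (fun s hs => hs.1) ha1

end ops

section transfer
variable {K : Type} [Field K] {α X : Type} [LinearOrder α] [LinearOrder X] [Fintype α] [Fintype X]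

noncomputable def io (K : Type) [Field K] (f : α ↪ X) : M K α →ₗ[K] M K X :=
  Finsupp.lmapDomain K K (fun s => s.map f)

theorem io_single (f : α ↪ X) (s : Finset α) : io K f (single s 1) = single (s.map f) 1 := by
  simp [io]

theorem io_D (f : α ↪ X) (hf : StrictMono f) (x : M K α) : D K X (io K f x) = io K f (D K α x) := by
  have : D K X ∘ₗ io K f = io K f ∘ₗ D K α := by
    apply ext1
    intro s
    simp only [LinearMap.comp_apply, io_single, D_single, map_sum, map_smul, Finset.sum_map]
    refine Finset.sum_congr rfl fun v hv => ?_
    congr 1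
    · unfold sg
      congr 1
      rw [Finset.filter_map, Finset.card_map]
      congr 1
      ext w; simp [hf.lt_iff_lt]
    · congr 1; ext w
      simp only [Finset.mem_erase, Finset.mem_map]
      constructor
      · rintro ⟨h, w', h1, rfl⟩; exact ⟨w', ⟨fun h2 => h (by rw [h2]), h1⟩, rfl⟩
      · rintro ⟨w', ⟨h, h1⟩, rfl⟩; exact ⟨fun h2 => h (f.injective h2), w', h1, rfl⟩
  exact LinearMap.congr_fun this x

theorem io_apply (f : α ↪ X) (x : M K α) (s : Finset α) : io K f x (s.map f) = x s := by
  simp only [io, Finsupp.lmapDomain_apply]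
  exact Finsupp.mapDomain_apply (Finset.map_injective f) x s

theorem io_Sp (f : α ↪ X) {A : Set (Finset α)} {B : Set (Finset X)} (h : ∀ s ∈ A, s.map f ∈ B)
    {x : M K α} (hx : x ∈ Sp K A) : io K f x ∈ Sp K B := by
  refine map_Sp _ A _ ?_ hx
  intro s hs
  rw [io_single]; exact single_Sp (h s hs) 1

theorem io_surj (f : α ↪ X) {A : Set (Finset α)} {B : Set (Finset X)}
    (h : ∀ s ∈ B, ∃ S ∈ A, s = S.map f) {x : M K X} (hx : x ∈ Sp K B) :
    ∃ y ∈ Sp K A, io K f y = x := by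
  have := map_Sp (K := K) LinearMap.id B ((Sp K A).map (io K f)) ?_ hx
  · simpa using this
  intro s hs
  obtain ⟨S, hS, rfl⟩ := h s hs
  exact ⟨single S 1, single_Sp hS 1, io_single f S⟩

theorem rel_io (f : α ↪ X) (hf : StrictMono f) {Γ' A' : Set (Finset α)} {Γ A : Set (Finset X)}
    (hΓ' : Down Γ') (hA : Down A)
    (h1 : ∀ S ∈ Γ', S.map f ∈ Γ) (h2 : ∀ S ∈ Γ', (S.map f ∈ A ↔ S ∈ A')) (hA' : A' ⊆ Γ')
    (h3 : ∀ s ∈ Γ, s ∉ A → ∃ S ∈ Γ', s = S.map f) (p : ℕ) : Rel K Γ' A' p ↔ Rel K Γ A p := by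
  have back : ∀ x ∈ Sp K Γ', io K f x ∈ Sp K A → x ∈ Sp K A' := by
    intro x hx hx'
    rw [mem_Sp]
    intro s hs
    by_cases hs' : s ∈ Γ'
    · rw [← io_apply f]; exact mem_Sp.1 hx' _ (by rwa [h2 s hs'])
    · exact mem_Sp.1 hx s hs'
  have forw : ∀ x ∈ Sp K A', io K f x ∈ Sp K A := fun x hx =>
    io_Sp f (fun s hs => (h2 s (hA' hs)).2 hs) hx
  constructor
  · rintro ⟨z, hz, hDz, hn⟩
    refine ⟨io K f z, io_Sp f (B := {s | s ∈ Γ ∧ s.card = p}) (fun s hs => ⟨h1 s hs.1, by simpa using hs.2⟩) hz, ?_, ?_⟩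
    · rw [io_D f hf]; exact forw _ hDz
    · rintro ⟨g, hg, hg'⟩
      obtain ⟨g1, hg1, a, ha, rfl⟩ := split_Sp Γ {s | s ∈ Γ ∧ s ∉ A} A
        (fun s hs => by by_cases h : s ∈ A <;> simp [h, hs]) hg
      obtain ⟨y, hy, rfl⟩ := io_surj f (A := Γ') (fun s hs => h3 s hs.1 hs.2) hg1
      refine hn ⟨y, hy, back _ (Submodule.sub_mem _ (Sp_mono (fun s hs => hs.1) hz)
        (D_Sp hΓ' hy)) ?_⟩
      have e : io K f (z - D K α y) = (io K f z - D K X (io K f y + a)) + D K X a := by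
        rw [map_sub, map_add, io_D f hf]; abel
      rw [e]
      exact Submodule.add_mem _ hg' (D_Sp hA ha)
  · rintro ⟨z', hz', hDz', hn⟩
    obtain ⟨z1, hz1, a, ha, rfl⟩ := split_Sp _ {s | (s ∈ Γ ∧ s.card = p) ∧ s ∉ A} A
        (fun s hs => by by_cases h : s ∈ A <;> simp_all) hz'
    obtain ⟨z, hz, rfl⟩ := io_surj f (A := {s | s ∈ Γ' ∧ s.card = p}) (fun s hs => by
      obtain ⟨S, hS, rfl⟩ := h3 s hs.1.1 hs.2
      exact ⟨S, ⟨hS, by simpa using hs.1.2⟩, rfl⟩) hz1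
    have hzΓ : z ∈ Sp K Γ' := Sp_mono (fun s hs => hs.1) hz
    refine ⟨z, hz, back _ (D_Sp hΓ' hzΓ) ?_, ?_⟩
    · have : io K f (D K α z) = D K X (io K f z + a) - D K X a := by
        rw [map_add, io_D f hf]; abel
      rw [this]; exact Submodule.sub_mem _ hDz' (D_Sp hA ha)
    · rintro ⟨y, hy, hy'⟩
      refine hn ⟨io K f y, io_Sp f h1 hy, ?_⟩
      have : io K f z + a - D K X (io K f y) = io K f (z - D K α y) + a := by
        rw [io_D f hf, map_sub]; abel
      rw [this]; exact Submodule.add_mem _ (forw _ hy') ha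

end transfer
end AM

open Finsupp
set_option linter.unusedSectionVars false
set_option linter.unusedSimpArgs false
set_option linter.deprecated false
namespace AM

section hoch
variable {K : Type} [Field K] {α β : Type} [LinearOrder α] [LinearOrder β] [Fintype α] [Fintype β]

def GT (ed : α → Finset β) (W : Finset β) : Set (Finset α) := {S | ∀ k ∈ S, ed k ⊆ W}
def AT (ed : α → Finset β) (W : Finset β) : Set (Finset α) :=
  {S | S ∈ GT ed W ∧ ∃ x ∈ W, ∀ k ∈ S, x ∉ ed k}
def GK (W : Finset β) : Set (Finset β) := {F | F ⊆ W}
def AK (ed : α → Finset β) (W : Finset β) : Set (Finset β) :=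
  {F | F ⊆ W ∧ ∃ k, ed k ⊆ W \ F}

def GX (ed : α → Finset β) (W : Finset β) : Set (Finset (α ⊕ₗ β)) :=
  {s | (∀ k, Sum.inlₗ k ∈ s → ed k ⊆ W) ∧ (∀ x, Sum.inrₗ x ∈ s → x ∈ W) ∧
    ∀ k x, Sum.inlₗ k ∈ s → Sum.inrₗ x ∈ s → x ∉ ed k}
def GXT (ed : α → Finset β) (W : Finset β) : Set (Finset (α ⊕ₗ β)) :=
  {s | s ∈ GX ed W ∧ ∃ x, x ∈ W ∧ ∀ k, Sum.inlₗ k ∈ s → x ∉ ed k}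
def GXK (ed : α → Finset β) (W : Finset β) : Set (Finset (α ⊕ₗ β)) :=
  {s | s ∈ GX ed W ∧ ∃ k, ed k ⊆ W ∧ ∀ x, Sum.inrₗ x ∈ s → x ∉ ed k}

theorem inl_inj {a b : α} : (Sum.inlₗ a : α ⊕ₗ β) = Sum.inlₗ b ↔ a = b := by
  constructor
  · intro h; exact Sum.inl_injective (toLex.injective h)
  · rintro rfl; rfl
theorem inr_inj {a b : β} : (Sum.inrₗ a : α ⊕ₗ β) = Sum.inrₗ b ↔ a = b := by
  constructor
  · intro h; exact Sum.inr_injective (toLex.injective h)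
  · rintro rfl; rfl
theorem inl_inr {a : α} {b : β} : (Sum.inlₗ a : α ⊕ₗ β) ≠ Sum.inrₗ b := by
  intro h; exact Sum.inl_ne_inr (toLex.injective h)
theorem inr_inl {a : α} {b : β} : (Sum.inrₗ b : α ⊕ₗ β) ≠ Sum.inlₗ a := fun h => inl_inr h.symm
theorem lex_cases (v : α ⊕ₗ β) : (∃ k, v = Sum.inlₗ k) ∨ (∃ x, v = Sum.inrₗ x) := by
  rcases h : ofLex v with k | x
  · left; exact ⟨k, h⟩
  · right; exact ⟨x, h⟩

theorem down_GX (ed : α → Finset β) (W : Finset β) : Down (GX ed W) := by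
  rintro s ⟨h1, h2, h3⟩ v _
  refine ⟨fun k hk => h1 k (Finset.mem_of_mem_erase hk), fun x hx => h2 x (Finset.mem_of_mem_erase hx),
    fun k x hk hx => h3 k x (Finset.mem_of_mem_erase hk) (Finset.mem_of_mem_erase hx)⟩

theorem down_GXT (ed : α → Finset β) (W : Finset β) : Down (GXT ed W) := by
  rintro s ⟨h1, x, h2, h3⟩ v hv
  exact ⟨down_GX ed W s h1 v hv, x, h2, fun k hk => h3 k (Finset.mem_of_mem_erase hk)⟩

theorem down_GXK (ed : α → Finset β) (W : Finset β) : Down (GXK ed W) := by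
  rintro s ⟨h1, x, h2, h3⟩ v hv
  exact ⟨down_GX ed W s h1 v hv, x, h2, fun k hk => h3 k (Finset.mem_of_mem_erase hk)⟩

theorem acyc_empty {A : Set (Finset α)} (h : ∀ s, s ∉ A) : Acyc K A := by
  intro a ha _
  refine ⟨0, by simp, ?_⟩
  have : a = 0 := by ext s; exact mem_Sp.1 ha s (h s)
  simp [this]

theorem acyc_GXT (ed : α → Finset β) (W : Finset β) : Acyc K (GXT ed W) := by
  classical
  by_cases hne : Nonempty β
  swap
  · exact acyc_empty fun s hs => hne ⟨hs.2.choose⟩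
  let P : Finset (α ⊕ₗ β) → β → Prop := fun s x => x ∈ W ∧ ∀ k, Sum.inlₗ k ∈ s → x ∉ ed k
  let pv : Finset (α ⊕ₗ β) → β := fun s => Classical.epsilon (P s)
  have hpv : ∀ s ∈ GXT ed W, P s (pv s) := fun s hs => Classical.epsilon_spec hs.2
  let lev : Finset (α ⊕ₗ β) → ℕ := fun s => (Finset.univ.filter (fun k : α => Sum.inlₗ k ∈ s)).card
  have hins : ∀ s ∈ GXT ed W, ∀ x, P s x → insert (Sum.inrₗ x) s ∈ GXT ed W := by
    rintro s ⟨⟨h1, h2, h3⟩, h4⟩ x hx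
    refine ⟨⟨?_, ?_, ?_⟩, x, hx.1, ?_⟩
    · intro k hk
      simp only [Finset.mem_insert, inl_inr, false_or] at hk
      exact h1 k hk
    · intro y hy
      simp only [Finset.mem_insert, inr_inj] at hy
      rcases hy with rfl | hy
      · exact hx.1
      · exact h2 y hy
    · intro k y hk hy
      simp only [Finset.mem_insert, inr_inj, inl_inr, false_or] at hk hy
      rcases hy with rfl | hy
      · exact hx.2 k hk
      · exact h3 k y hk hy
    · intro k hk
      simp only [Finset.mem_insert, inl_inr, false_or] at hk
      exact hx.2 k hk
  have hlev : ∀ s : Finset (α ⊕ₗ β), ∀ k, Sum.inlₗ k ∈ s → ∀ x : β,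
      lev (insert (Sum.inrₗ x) (s.erase (Sum.inlₗ k))) < lev s := by
    intro s k hk x
    apply Finset.card_lt_card
    rw [Finset.ssubset_iff_of_subset]
    · exact ⟨k, by simp [hk], by simp [inl_inr]⟩
    · intro j
      simp [inl_inr]
  refine acyc_of_pivot _ (down_GXT ed W) lev (fun s => Sum.inrₗ (pv s)) ?_ ?_
  · intro s hs
    exact hins s hs _ (hpv s hs)
  · intro s hs v hv
    rcases lex_cases v with ⟨k, rfl⟩ | ⟨x, rfl⟩
    · right
      refine ⟨hlev s k hv _, ?_, hlev s k hv _⟩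
      refine hins _ (down_GXT ed W s hs _ hv) _ ⟨(hpv s hs).1, fun j hj => (hpv s hs).2 j
        (Finset.mem_of_mem_erase hj)⟩
    · left
      have hP : ∀ s', (∀ k, Sum.inlₗ k ∈ s' ↔ Sum.inlₗ k ∈ s) → P s' = P s := by
        intro s' hs'
        funext y
        simp [P, hs']
      exact congrArg (fun Q => Sum.inrₗ (Classical.epsilon Q)) (hP _ (by
        intro k; simp [inl_inr]))

theorem acyc_GXK (ed : α → Finset β) (W : Finset β) : Acyc K (GXK ed W) := by
  classical
  by_cases hne : Nonempty α
  swap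
  · exact acyc_empty fun s hs => hne ⟨hs.2.choose⟩
  let P : Finset (α ⊕ₗ β) → α → Prop := fun s k => ed k ⊆ W ∧ ∀ x, Sum.inrₗ x ∈ s → x ∉ ed k
  let pv : Finset (α ⊕ₗ β) → α := fun s => Classical.epsilon (P s)
  have hpv : ∀ s ∈ GXK ed W, P s (pv s) := fun s hs => Classical.epsilon_spec hs.2
  let lev : Finset (α ⊕ₗ β) → ℕ := fun s => (Finset.univ.filter (fun x : β => Sum.inrₗ x ∈ s)).card
  have hins : ∀ s ∈ GXK ed W, ∀ x, P s x → insert (Sum.inlₗ x) s ∈ GXK ed W := by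
    rintro s ⟨⟨h1, h2, h3⟩, h4⟩ x hx
    refine ⟨⟨?_, ?_, ?_⟩, x, hx.1, ?_⟩
    · intro y hy
      simp only [Finset.mem_insert, inl_inj] at hy
      rcases hy with rfl | hy
      · exact hx.1
      · exact h1 y hy
    · intro k hk
      simp only [Finset.mem_insert, inr_inl, false_or] at hk
      exact h2 k hk
    · intro k y hk hy
      simp only [Finset.mem_insert, inl_inj, inr_inl, false_or] at hk hy
      rcases hk with rfl | hk
      · exact hx.2 y hy
      · exact h3 k y hk hy
    · intro k hk
      simp only [Finset.mem_insert, inr_inl, false_or] at hk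
      exact hx.2 k hk
  have hlev : ∀ s : Finset (α ⊕ₗ β), ∀ k, Sum.inrₗ k ∈ s → ∀ x : α,
      lev (insert (Sum.inlₗ x) (s.erase (Sum.inrₗ k))) < lev s := by
    intro s k hk x
    apply Finset.card_lt_card
    rw [Finset.ssubset_iff_of_subset]
    · exact ⟨k, by simp [hk], by simp [inr_inl]⟩
    · intro j
      simp [inr_inl]
  refine acyc_of_pivot _ (down_GXK ed W) lev (fun s => Sum.inlₗ (pv s)) ?_ ?_
  · intro s hs
    exact hins s hs _ (hpv s hs)
  · intro s hs v hv
    rcases lex_cases v with ⟨k, rfl⟩ | ⟨x, rfl⟩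
    · left
      have hP : ∀ s', (∀ x, Sum.inrₗ x ∈ s' ↔ Sum.inrₗ x ∈ s) → P s' = P s := by
        intro s' hs'
        funext y
        simp [P, hs']
      exact congrArg (fun Q => Sum.inlₗ (Classical.epsilon Q)) (hP _ (by
        intro k; simp [inr_inl]))
    · right
      refine ⟨hlev s x hv _, ?_, hlev s x hv _⟩
      refine hins _ (down_GXK ed W s hs _ hv) _ ⟨(hpv s hs).1, fun j hj => (hpv s hs).2 j
        (Finset.mem_of_mem_erase hj)⟩

def fl (α β : Type) : α ↪ α ⊕ₗ β := ⟨Sum.inlₗ, fun _ _ h => Sum.inl_injective (toLex.injective h)⟩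
def fr (α β : Type) : β ↪ α ⊕ₗ β := ⟨Sum.inrₗ, fun _ _ h => Sum.inr_injective (toLex.injective h)⟩

theorem fl_mem (S : Finset α) (k : α) : Sum.inlₗ k ∈ S.map (fl α β) ↔ k ∈ S :=
  Finset.mem_map' (fl α β)
theorem fr_mem (S : Finset β) (k : β) : Sum.inrₗ k ∈ S.map (fr α β) ↔ k ∈ S :=
  Finset.mem_map' (fr α β)
theorem fl_nmem (S : Finset α) (k : β) : Sum.inrₗ k ∉ S.map (fl α β) := by
  intro h
  obtain ⟨a, _, h⟩ := Finset.mem_map.1 h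
  exact inl_inr h
theorem fr_nmem (S : Finset β) (k : α) : Sum.inlₗ k ∉ S.map (fr α β) := by
  intro h
  obtain ⟨a, _, h⟩ := Finset.mem_map.1 h
  exact inr_inl h

theorem rel_TX (ed : α → Finset β) (W : Finset β) (p : ℕ) :
    Rel K (GT ed W) (AT ed W) p ↔ Rel K (GX ed W) (GXT ed W) p := by
  classical
  have g1 : ∀ S ∈ GT ed W, S.map (fl α β) ∈ GX ed W := by
    intro S hS
    refine ⟨fun k hk => hS k ((fl_mem S k).1 hk), fun x hx => absurd hx (fl_nmem S x),
      fun k x _ hx => absurd hx (fl_nmem S x)⟩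
  refine rel_io (fl α β) ?_ ?_ (down_GXT ed W) g1 ?_ (fun S hS => hS.1) ?_ p
  · exact Sum.Lex.inl_strictMono
  · intro S hS v _ k hk
    exact hS k (Finset.mem_of_mem_erase hk)
  · intro S hS
    constructor
    · rintro ⟨_, x, hx, h⟩
      exact ⟨hS, x, hx, fun k hk => h k ((fl_mem S k).2 hk)⟩
    · rintro ⟨_, x, hx, h⟩
      exact ⟨g1 S hS, x, hx, fun k hk => h k ((fl_mem S k).1 hk)⟩
  · intro s hs hs'
    refine ⟨Finset.univ.filter fun k => Sum.inlₗ k ∈ s, ?_, ?_⟩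
    · intro k hk
      exact hs.1 k (by simpa using hk)
    · ext v
      rcases lex_cases v with ⟨k, rfl⟩ | ⟨x, rfl⟩
      · rw [fl_mem]; simp
      · simp only [fl_nmem, iff_false]
        intro hx
        exact hs' ⟨hs, x, hs.2.1 x hx, fun k hk => hs.2.2 k x hk hx⟩

theorem rel_KX (ed : α → Finset β) (W : Finset β) (p : ℕ) :
    Rel K (GK W) (AK ed W) p ↔ Rel K (GX ed W) (GXK ed W) p := by
  classical
  have g1 : ∀ S ∈ GK W, S.map (fr α β) ∈ GX ed W := by
    intro S hS
    refine ⟨fun x hx => absurd hx (fr_nmem S x), fun k hk => hS ((fr_mem S k).1 hk), 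
      fun k x hk _ => absurd hk (fr_nmem S k)⟩
  refine rel_io (fr α β) ?_ ?_ (down_GXK ed W) g1 ?_ (fun S hS => hS.1) ?_ p
  · exact Sum.Lex.inr_strictMono
  · intro S hS v _
    exact (Finset.erase_subset _ _).trans hS
  · intro S hS
    constructor
    · rintro ⟨_, k, hk, h⟩
      exact ⟨hS, k, fun x hx => Finset.mem_sdiff.2 ⟨hk hx, fun h' => h x ((fr_mem S x).2 h') hx⟩⟩
    · rintro ⟨_, k, hk⟩
      exact ⟨g1 S hS, k, fun x hx => (Finset.mem_sdiff.1 (hk hx)).1, fun x hx hx' =>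
        (Finset.mem_sdiff.1 (hk hx')).2 ((fr_mem S x).1 hx)⟩
  · intro s hs hs'
    refine ⟨Finset.univ.filter fun k => Sum.inrₗ k ∈ s, ?_, ?_⟩
    · intro k hk
      exact hs.2.1 k (by simpa using hk)
    · ext v
      rcases lex_cases v with ⟨k, rfl⟩ | ⟨x, rfl⟩
      · simp only [fr_nmem, iff_false]
        intro hx
        exact hs' ⟨hs, k, hs.1 k hx, fun x hk => hs.2.2 k x hx hk⟩
      · rw [fr_mem]; simp

theorem rel_TK (ed : α → Finset β) (W : Finset β) (p : ℕ) :
    Rel K (GT ed W) (AT ed W) p ↔ Rel K (GK W) (AK ed W) p := by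
  rw [rel_TX, rel_KX (α := α)]
  exact ⟨rel_swap (fun s hs => hs.1) (fun s hs => hs.1) (acyc_GXT ed W) (acyc_GXK ed W),
    rel_swap (fun s hs => hs.1) (fun s hs => hs.1) (acyc_GXK ed W) (acyc_GXT ed W)⟩

end hoch
end AM

open Finsupp
set_option linter.unusedSectionVars false
set_option linter.unusedSimpArgs false
set_option linter.deprecated false
namespace AM

section tor
variable {K : Type} [Field K] {n r : ℕ}

theorem mem_AT_iff (ed : Fin r → Finset (Fin n)) (W : Finset (Fin n)) (S : Finset (Fin r)) :
    S ∈ AT ed W ↔ S.biUnion ed ⊆ W ∧ S.biUnion ed ≠ W := by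
  constructor
  · rintro ⟨h1, x, hx, h2⟩
    refine ⟨Finset.biUnion_subset.2 h1, fun h => ?_⟩
    rw [← h, Finset.mem_biUnion] at hx
    obtain ⟨k, hk, hx⟩ := hx
    exact h2 k hk hx
  · rintro ⟨h1, h2⟩
    refine ⟨Finset.biUnion_subset.1 h1, ?_⟩
    obtain ⟨x, hx, hx'⟩ := Finset.exists_of_ssubset (h1.ssubset_of_ne h2)
    exact ⟨x, hx, fun k hk h => hx' (Finset.mem_biUnion.2 ⟨k, hk, h⟩)⟩

theorem down_AT (ed : Fin r → Finset (Fin n)) (W : Finset (Fin n)) : Down (AT ed W) := by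
  rintro S ⟨h1, x, hx, h2⟩ v _
  exact ⟨fun k hk => h1 k (Finset.mem_of_mem_erase hk), x, hx,
    fun k hk => h2 k (Finset.mem_of_mem_erase hk)⟩

theorem bdT_single (g : Fin r → (Fin n → ℕ)) (S : Finset (Fin r)) :
    EP.bdT K g (single S 1) = ∑ k ∈ S, if EP.mlcm g (S.erase k) = EP.mlcm g S
      then sg K k S • Finsupp.single (S.erase k) (1 : K) else 0 := by
  simp [EP.bdT, sg]

theorem strand_eq (g : Fin r → (Fin n → ℕ)) (p j : ℕ) :
    EP.strand K g p j = Sp K {S | S.card = p ∧ (∑ x, EP.mlcm g S x) = j} := by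
  unfold EP.strand Sp
  rw [Finsupp.supported_eq_span_single]
  congr 1
  ext c
  constructor
  · rintro ⟨S, h1, h2, rfl⟩; exact ⟨S, ⟨h1, h2⟩, rfl⟩
  · rintro ⟨S, ⟨h1, h2⟩, rfl⟩; exact ⟨S, h1, h2, rfl⟩

variable (g : Fin r → (Fin n → ℕ)) (ed : Fin r → Finset (Fin n))

theorem bdT_Sp (hml : ∀ S S', EP.mlcm g S = EP.mlcm g S' ↔ S.biUnion ed = S'.biUnion ed)
    {A B : Set (Finset (Fin r))}
    (h : ∀ S ∈ A, ∀ k ∈ S, (S.erase k).biUnion ed = S.biUnion ed → S.erase k ∈ B) {x : M K (Fin r)}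
    (hx : x ∈ Sp K A) : EP.bdT K g x ∈ Sp K B := by
  refine map_Sp _ A _ ?_ hx
  intro S hS
  rw [bdT_single]
  refine Submodule.sum_mem _ fun k hk => ?_
  split_ifs with h1
  · exact Submodule.smul_mem _ _ (single_Sp (h S hS k hk ((hml _ _).1 h1)) 1)
  · simp

theorem D_bdT (hml : ∀ S S', EP.mlcm g S = EP.mlcm g S' ↔ S.biUnion ed = S'.biUnion ed)
    (W : Finset (Fin n)) {x : M K (Fin r)} (hx : x ∈ Sp K {S | S.biUnion ed = W}) :
    D K (Fin r) x - EP.bdT K g x ∈ Sp K (AT ed W) := by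
  refine map_Sp (D K (Fin r) - EP.bdT K g) {S | S.biUnion ed = W} _ ?_ hx
  rintro S rfl
  rw [LinearMap.sub_apply, D_single, bdT_single, ← Finset.sum_sub_distrib]
  refine Submodule.sum_mem _ fun k hk => ?_
  split_ifs with h1
  · simp
  · rw [sub_zero]
    refine Submodule.smul_mem _ _ (single_Sp ?_ 1)
    rw [mem_AT_iff]
    exact ⟨Finset.biUnion_subset_biUnion_of_subset_left _ (Finset.erase_subset _ _),
      fun h => h1 ((hml _ _).2 h)⟩

theorem tor_iff (hml : ∀ S S', EP.mlcm g S = EP.mlcm g S' ↔ S.biUnion ed = S'.biUnion ed)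
    (hsum : ∀ S, (∑ x, EP.mlcm g S x) = (S.biUnion ed).card) (p j : ℕ) :
    EP.torRank K g p j ≠ 0 ↔ ∃ W : Finset (Fin n), W.card = j ∧ Rel K (GT ed W) (AT ed W) p := by
  classical
  have e1 : EP.torRank K g p j ≠ 0 ↔ ¬ (EP.strand K g p j ⊓ LinearMap.ker (EP.bdT K g) ≤
      Submodule.map (EP.bdT K g) (EP.strand K g (p+1) j)) := by
    unfold EP.torRank
    constructor
    · intro h1 h2
      rw [inf_eq_right.2 h2] at h1
      simp at h1
    · intro h1 h2
      rw [Nat.sub_eq_zero_iff_le] at h2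
      have := Submodule.eq_of_le_of_finrank_le (inf_le_right) h2
      exact h1 (inf_eq_right.1 this)
  rw [e1, strand_eq, strand_eq]
  simp only [hsum]
  constructor
  · intro h
    by_contra hcon
    push Not at hcon
    apply h
    have key : ∀ 𝒲 : Finset (Finset (Fin n)), ∀ z ∈ Sp K {S | (S.card = p ∧ (S.biUnion ed).card = j) ∧
        S.biUnion ed ∈ 𝒲}, EP.bdT K g z = 0 → z ∈ Submodule.map (EP.bdT K g)
          (Sp K {S | S.card = p + 1 ∧ (S.biUnion ed).card = j}) := by
      intro 𝒲
      induction 𝒲 using Finset.induction_on with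
      | empty =>
        intro z hz _
        have : z = 0 := by ext S; exact mem_Sp.1 hz S (by simp)
        rw [this]; simp
      | insert W 𝒲 hW ih =>
        intro z hz hbz
        obtain ⟨z1, hz1, z2, hz2, rfl⟩ := split_Sp _
          {S | (S.card = p ∧ (S.biUnion ed).card = j) ∧ S.biUnion ed = W}
          {S | (S.card = p ∧ (S.biUnion ed).card = j) ∧ S.biUnion ed ∈ 𝒲} (fun S hS => by
            rcases Finset.mem_insert.1 hS.2 with h | h
            · exact Or.inl ⟨hS.1, h⟩
            · exact Or.inr ⟨hS.1, h⟩) hz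
        have hb1 : EP.bdT K g z1 = 0 := by
          refine Sp_disj (A := {S | S.biUnion ed = W}) (B := {S | S.biUnion ed ∈ 𝒲}) ?_ ?_ ?_
          · rintro S rfl; exact hW
          · refine bdT_Sp g ed hml ?_ hz1
            intro S hS k _ e
            exact e.trans hS.2
          · have : EP.bdT K g z1 = - EP.bdT K g z2 := by
              rw [eq_neg_iff_add_eq_zero, ← map_add, hbz]
            rw [this]
            refine Submodule.neg_mem _ (bdT_Sp g ed hml ?_ hz2)
            intro S hS k _ e
            have : (S.erase k).biUnion ed ∈ 𝒲 := by rw [e]; exact hS.2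
            exact this
        have hb2 : EP.bdT K g z2 = 0 := by
          rw [map_add, hb1, zero_add] at hbz; exact hbz
        refine Submodule.add_mem _ ?_ (ih z2 hz2 hb2)
        by_cases hWj : W.card = j
        swap
        · have : z1 = 0 := by
            ext S
            refine mem_Sp.1 hz1 S ?_
            rintro ⟨⟨_, h2⟩, h3⟩
            exact hWj (by rw [← h3]; exact h2)
          rw [this]; simp
        have hz1W : z1 ∈ Sp K {S | S.biUnion ed = W} := Sp_mono (fun S hS => hS.2) hz1
        have hr := hcon W hWj
        have : ∃ y ∈ Sp K (GT ed W), z1 - D K (Fin r) y ∈ Sp K (AT ed W) := by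
          by_contra hno
          refine hr ⟨z1, Sp_mono (B := {S | S ∈ GT ed W ∧ S.card = p}) ?_ hz1, ?_, hno⟩
          · rintro S ⟨⟨h1, h2⟩, h3⟩
            exact ⟨Finset.biUnion_subset.1 h3.le, h1⟩
          · have := D_bdT g ed hml W hz1W
            rwa [hb1, sub_zero] at this
        obtain ⟨y, hy, hyA⟩ := this
        obtain ⟨y0, hy0, a, ha, rfl⟩ := split_Sp _ {S | S.biUnion ed = W} (AT ed W) (fun S hS => by
          by_cases h : S.biUnion ed = W
          · exact Or.inl h
          · exact Or.inr ((mem_AT_iff ed W S).2 ⟨Finset.biUnion_subset.2 hS, h⟩)) hy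
        have e0 : z1 - EP.bdT K g y0 = 0 := by
          refine Sp_disj (A := {S | S.biUnion ed = W}) (B := AT ed W) ?_ ?_ ?_
          · intro S hS hS'
            exact ((mem_AT_iff ed W S).1 hS').2 hS
          · refine Submodule.sub_mem _ hz1W (bdT_Sp g ed hml ?_ hy0)
            intro S hS k _ e
            exact e.trans hS
          · have : z1 - EP.bdT K g y0 = (z1 - D K (Fin r) (y0 + a)) +
              (D K (Fin r) y0 - EP.bdT K g y0) + D K (Fin r) a := by rw [map_add]; abel
            rw [this]
            exact Submodule.add_mem _ (Submodule.add_mem _ hyA (D_bdT g ed hml W hy0))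
              (D_Sp (down_AT ed W) ha)
        obtain ⟨y1, hy1, y2, hy2, rfl⟩ := split_Sp _ {S | S.biUnion ed = W ∧ S.card = p + 1}
          {S | S.biUnion ed = W ∧ S.card ≠ p + 1} (fun S hS => by
          by_cases h : S.card = p + 1
          · exact Or.inl ⟨hS, h⟩
          · exact Or.inr ⟨hS, h⟩) hy0
        have e2 : z1 - EP.bdT K g y1 = 0 := by
          refine Sp_disj (A := {S | S.card = p}) (B := {S | S.card ≠ p}) (fun S h h' => h' h) ?_ ?_
          · refine Submodule.sub_mem _ (Sp_mono (fun S hS => hS.1.1) hz1) (bdT_Sp g ed hml ?_ hy1)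
            intro S hS k hk _
            have := Finset.card_erase_add_one hk
            have h2 : S.card = p + 1 := hS.2
            show (S.erase k).card = p
            omega
          · have : z1 - EP.bdT K g y1 = EP.bdT K g y2 := by
              rw [map_add, ← sub_sub, sub_eq_zero] at e0
              exact e0
            rw [this]
            refine bdT_Sp g ed hml ?_ hy2
            intro S hS k hk _
            have := Finset.card_erase_add_one hk
            have h2 : S.card ≠ p + 1 := hS.2
            show (S.erase k).card ≠ p
            omega
        refine ⟨y1, Sp_mono (B := {S | S.card = p + 1 ∧ (S.biUnion ed).card = j}) ?_ hy1,
          (sub_eq_zero.1 e2).symm⟩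
        rintro S ⟨h1, h2⟩
        exact ⟨h2, by rw [h1]; exact hWj⟩
    rintro z ⟨hz, hbz⟩
    exact key Finset.univ z (Sp_mono (B := {S | (S.card = p ∧ (S.biUnion ed).card = j) ∧
        S.biUnion ed ∈ Finset.univ}) (fun S hS => ⟨hS, Finset.mem_univ _⟩) hz) hbz
  · rintro ⟨W, hWj, z, hz, hDz, hn⟩ hle
    obtain ⟨z1, hz1, a, ha, rfl⟩ := split_Sp _ {S | S.biUnion ed = W ∧ S.card = p} (AT ed W)
      (fun S hS => by
        by_cases h : S.biUnion ed = W
        · exact Or.inl ⟨h, hS.2⟩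
        · exact Or.inr ((mem_AT_iff ed W S).2 ⟨Finset.biUnion_subset.2 hS.1, h⟩)) hz
    have hz1W : z1 ∈ Sp K {S | S.biUnion ed = W} := Sp_mono (fun S hS => hS.1) hz1
    have hb : EP.bdT K g z1 = 0 := by
      refine Sp_disj (A := {S | S.biUnion ed = W}) (B := AT ed W) ?_ ?_ ?_
      · intro S hS hS'
        exact ((mem_AT_iff ed W S).1 hS').2 hS
      · refine bdT_Sp g ed hml ?_ hz1W
        intro S hS k _ e
        exact e.trans hS
      · have : EP.bdT K g z1 = D K (Fin r) (z1 + a) - D K (Fin r) a -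
          (D K (Fin r) z1 - EP.bdT K g z1) := by rw [map_add]; abel
        rw [this]
        exact Submodule.sub_mem _ (Submodule.sub_mem _ hDz (D_Sp (down_AT ed W) ha))
          (D_bdT g ed hml W hz1W)
    obtain ⟨y, hy, hyz⟩ := hle ⟨Sp_mono (B := {S | S.card = p ∧ (S.biUnion ed).card = j})
      (fun S hS => ⟨hS.2, by rw [hS.1]; exact hWj⟩) hz1, hb⟩
    obtain ⟨y1, hy1, y2, hy2, rfl⟩ := split_Sp _ {S | S.biUnion ed = W} {S | S.biUnion ed ≠ W}
      (fun S hS => by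
        by_cases h : S.biUnion ed = W
        · exact Or.inl h
        · exact Or.inr h) hy
    have e2 : z1 - EP.bdT K g y1 = 0 := by
      refine Sp_disj (A := {S | S.biUnion ed = W}) (B := {S | S.biUnion ed ≠ W})
        (fun S h h' => h' h) ?_ ?_
      · refine Submodule.sub_mem _ hz1W (bdT_Sp g ed hml ?_ hy1)
        intro S hS k _ e
        exact e.trans hS
      · have : z1 - EP.bdT K g y1 = EP.bdT K g y2 := by
          rw [← hyz, map_add]; abel
        rw [this]
        refine bdT_Sp g ed hml ?_ hy2
        intro S hS k _ e h
        exact hS (e.symm.trans h)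
    refine hn ⟨y1, Sp_mono (fun S hS => Finset.biUnion_subset.1 (le_of_eq hS)) hy1, ?_⟩
    have : z1 + a - D K (Fin r) y1 = (z1 - EP.bdT K g y1) + a -
      (D K (Fin r) y1 - EP.bdT K g y1) := by abel
    rw [this, e2, zero_add]
    exact Submodule.sub_mem _ ha (D_bdT g ed hml W hy1)

end tor
end AM

open Finsupp
set_option linter.unusedSectionVars false
set_option linter.unusedSimpArgs false
set_option linter.deprecated false
namespace AM

section gen
variable {β : Type} [LinearOrder β] [Fintype β]

def AL (Δ : Finset β → Prop) (W : Finset β) : Set (Finset β) := {F | F ⊆ W ∧ ¬ Δ (W \ F)}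

def NT (K : Type) [Field K] (Δ : Finset β → Prop) (W : Finset β) (p : ℕ) : Prop :=
  Rel K (GK W) (AL Δ W) p

def Ind (G : SimpleGraph β) (F : Finset β) : Prop := ∀ x ∈ F, ∀ y ∈ F, ¬ G.Adj x y

variable {K : Type} [Field K]

theorem NT_le {Δ : Finset β → Prop} {W : Finset β} {p : ℕ} (h : NT K Δ W p) : p ≤ W.card := by
  by_contra hp
  obtain ⟨z, hz, _, hn⟩ := h
  have : z = 0 := by
    ext S
    refine mem_Sp.1 hz S ?_
    rintro ⟨h1, h2⟩
    have : S.card ≤ W.card := Finset.card_le_card h1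
    omega
  exact hn ⟨0, by simp, by simp [this]⟩

theorem NT_pos {Δ : Finset β → Prop} {W : Finset β} {p : ℕ} (h : NT K Δ W p) (hW : W.Nonempty) :
    p ≠ 0 := by
  rintro rfl
  obtain ⟨x, hx⟩ := hW
  obtain ⟨z, hz, _, hn⟩ := h
  have hD : D K β z = 0 := by
    ext S
    refine mem_Sp.1 (D_Sp (B := {S | False}) ?_ hz) S (fun h => h)
    rintro S ⟨_, h2⟩ v hv
    rw [Finset.card_eq_zero] at h2
    subst h2; simp at hv
  refine hn ⟨up K x z, up_Sp (A := {s | s ∈ GK W ∧ s.card = 0}) x ?_ hz, ?_⟩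
  · rintro S ⟨h1, _⟩ _
    exact Finset.insert_subset hx h1
  · rw [D_up, hD]; simp

end gen

section main
variable {K : Type} [Field K] {n : ℕ}

noncomputable def edg (G : SimpleGraph (Fin n)) : Fin (EP.edgeFins G).card → Finset (Fin n) :=
  fun k => Finset.univ.filter (fun x => x ∈ ((EP.edgeFins G).equivFin.symm k : Sym2 (Fin n)))

theorem mem_edgeFins (G : SimpleGraph (Fin n)) (e : Sym2 (Fin n)) :
    e ∈ EP.edgeFins G ↔ e ∈ G.edgeSet := by
  simp [EP.edgeFins]

theorem mlcm_eq (G : SimpleGraph (Fin n)) (S) (x : Fin n) :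
    EP.mlcm (EP.edgeGens G) S x = if x ∈ S.biUnion (edg G) then 1 else 0 := by
  unfold EP.mlcm EP.edgeGens
  split_ifs with h
  · simp only [Finset.mem_biUnion, edg, Finset.mem_filter, Finset.mem_univ, true_and] at h
    obtain ⟨k, hk, hx⟩ := h
    apply le_antisymm
    · refine Finset.sup_le fun k _ => ?_
      split_ifs <;> simp
    · have := Finset.le_sup (f := fun k => if x ∈ ((EP.edgeFins G).equivFin.symm k : Sym2 (Fin n))
        then 1 else 0) hk
      simp only [hx, if_true] at this
      exact this
  · simp only [Finset.mem_biUnion, edg, Finset.mem_filter, Finset.mem_univ, true_and] at h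
    push Not at h
    apply Nat.eq_zero_of_le_zero
    refine Finset.sup_le fun k hk => ?_
    simp [h k hk]

theorem AK_eq (G : SimpleGraph (Fin n)) (W : Finset (Fin n)) : AK (edg G) W = AL (Ind G) W := by
  have key : ∀ A : Finset (Fin n), (∃ k, edg G k ⊆ A) ↔ ¬ Ind G A := by
    intro A
    constructor
    · rintro ⟨k, hk⟩ hI
      have h1 := ((EP.edgeFins G).equivFin.symm k).2
      rw [mem_edgeFins] at h1
      have h2 : ∀ x, x ∈ ((EP.edgeFins G).equivFin.symm k : Sym2 (Fin n)) → x ∈ A := fun x hx =>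
        hk (by simp [edg, hx])
      generalize ((EP.edgeFins G).equivFin.symm k : Sym2 (Fin n)) = e at h1 h2
      induction e with
      | h a b => exact hI a (h2 a (by simp)) b (h2 b (by simp)) h1
    · intro hI
      unfold Ind at hI
      push Not at hI
      obtain ⟨x, hx, y, hy, hxy⟩ := hI
      refine ⟨(EP.edgeFins G).equivFin ⟨s(x, y), (mem_edgeFins G _).2 hxy⟩, ?_⟩
      intro z hz
      simp [edg] at hz
      rcases hz with rfl | rfl <;> assumption
  unfold AK AL
  ext F
  exact and_congr Iff.rfl (key _)

theorem gb_iff (G : SimpleGraph (Fin n)) (i j : ℕ) : EP.gBetti K G i j ≠ 0 ↔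
    ∃ W : Finset (Fin n), W.card = j ∧ NT K (Ind G) W (i+1) := by
  unfold EP.gBetti EP.betti NT
  rw [tor_iff (EP.edgeGens G) (edg G)]
  · simp only [rel_TK, AK_eq]
  · intro S S'
    constructor
    · intro h
      ext x
      have := congrFun h x
      rw [mlcm_eq, mlcm_eq] at this
      generalize S.biUnion (edg G) = A at this ⊢
      generalize S'.biUnion (edg G) = B at this ⊢
      by_cases h1 : x ∈ A <;> by_cases h2 : x ∈ B <;> simp_all
    · intro h
      funext x
      rw [mlcm_eq, mlcm_eq, h]
  · intro S
    simp only [mlcm_eq]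
    rw [Finset.sum_ite_mem]; simp

structure Facts (K : Type) [Field K] {β : Type} [LinearOrder β] [Fintype β]
    (G : SimpleGraph β) (t : ℕ) : Prop where
  up : ∀ W p, NT K (Ind G) W p → p ≤ t + 2
  lo : ∀ W p, NT K (Ind G) W p → p + 2 ≤ W.card → t + 1 ≤ p
  ex1 : ∃ W, NT K (Ind G) W (t+1) ∧ t + 3 ≤ W.card
  ex2 : ∃ W, NT K (Ind G) W (t+2)

theorem facts (G : SimpleGraph (Fin n)) (t : ℕ)
    (hidx : EP.gIndex K G = (t : ℕ∞)) (hpd : EP.gPd K G = t + 1) : Facts K G t := by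
  have hb : BddAbove {i | ∃ j, EP.gBetti K G i j ≠ 0} := by
    refine ⟨n, ?_⟩
    rintro i ⟨j, h⟩
    obtain ⟨W, _, h⟩ := (gb_iff G i j).1 h
    have := NT_le h
    have := Finset.card_le_univ W
    simp at this; omega
  have hmem : EP.gIndex K G ∈ {N : ℕ∞ | ∃ i j : ℕ, N = (i : ℕ∞) ∧ i + 2 < j ∧ EP.gBetti K G i j ≠ 0} := by
    refine csInf_mem ?_
    by_contra hne
    rw [Set.not_nonempty_iff_eq_empty] at hne
    unfold EP.gIndex at hidx
    rw [hne, sInf_empty] at hidx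
    exact ENat.coe_ne_top t hidx.symm
  have hmem2 : EP.gPd K G ∈ {i | ∃ j, EP.gBetti K G i j ≠ 0} := by
    refine Nat.sSup_mem ?_ hb
    by_contra hne
    rw [Set.not_nonempty_iff_eq_empty] at hne
    unfold EP.gPd at hpd
    rw [hne] at hpd
    simp at hpd
  constructor
  · intro W p h
    rcases p with _ | i
    · omega
    have : i ≤ EP.gPd K G := le_csSup hb ⟨W.card, (gb_iff G i _).2 ⟨W, rfl, h⟩⟩
    omega
  · intro W p h hW
    rcases p with _ | i
    · exact absurd rfl (NT_pos h (Finset.card_pos.1 (by omega)))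
    have : EP.gIndex K G ≤ (i : ℕ∞) := sInf_le ⟨i, W.card, rfl, by omega, (gb_iff G i _).2 ⟨W, rfl, h⟩⟩
    rw [hidx] at this
    have := Nat.cast_le.1 this
    omega
  · obtain ⟨i, j, h1, h2, h3⟩ := hmem
    rw [hidx] at h1
    have h1 := Nat.cast_inj.1 h1
    subst h1
    obtain ⟨W, h4, h5⟩ := (gb_iff G _ _).1 h3
    exact ⟨W, h5, by omega⟩
  · obtain ⟨j, h⟩ := hmem2
    rw [hpd] at h
    obtain ⟨W, h4, h5⟩ := (gb_iff G _ _).1 h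
    exact ⟨W, h5⟩

end main
end AM

open Finsupp
set_option linter.unusedSectionVars false
set_option linter.unusedSimpArgs false
set_option linter.deprecated false
namespace AM

section crit
variable {K : Type} [Field K] {β : Type} [LinearOrder β] [Fintype β]

def Cyc (K : Type) [Field K] (G : SimpleGraph β) (W F : Finset β) : Prop :=
  F ⊆ W ∧ ∃ ζ : M K β →ₗ[K] K, (∀ x ∈ Sp K (GK W), ζ (D K β x) = 0) ∧
    (∀ Q ∈ AL (Ind G) W, ζ (single Q 1) = 0) ∧ ζ (single (W \ F) 1) ≠ 0

theorem ker_Sp (ζ : M K β →ₗ[K] K) {A : Set (Finset β)} (h : ∀ Q ∈ A, ζ (single Q 1) = 0)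
    {x : M K β} (hx : x ∈ Sp K A) : ζ x = 0 := by
  have := map_Sp ζ A ⊥ (fun s hs => by simpa using h s hs) hx
  simpa using this

theorem cyc_NT {G : SimpleGraph β} {W F : Finset β} (h : Cyc K G W F)
    (hf : ∀ w ∈ W, w ∉ F → ∃ f ∈ F, G.Adj w f) : NT K (Ind G) W (W.card - F.card) := by
  obtain ⟨hFW, ζ, h1, h2, h3⟩ := h
  refine ⟨single (W \ F) 1, single_Sp (A := {s | s ∈ GK W ∧ s.card = W.card - F.card})
    ⟨Finset.sdiff_subset, Finset.card_sdiff_of_subset hFW⟩ 1, ?_, ?_⟩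
  · rw [D_single]
    refine Submodule.sum_mem _ fun w hw => Submodule.smul_mem _ _ (single_Sp ?_ 1)
    rw [Finset.mem_sdiff] at hw
    obtain ⟨f, hf1, hf2⟩ := hf w hw.1 hw.2
    refine ⟨(Finset.erase_subset _ _).trans Finset.sdiff_subset, fun hI => hI w ?_ f ?_ hf2⟩
    · simp [hw.1]
    · simp [hFW hf1, hf1]
  · rintro ⟨y, hy, hy'⟩
    apply h3
    have := ker_Sp ζ h2 hy'
    rw [map_sub, h1 y hy, sub_zero] at this
    exact this

theorem crit {G : SimpleGraph β} {t : ℕ} (hF : Facts K G t) {W F : Finset β} (h : Cyc K G W F)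
    (hf : ∀ w ∈ W, w ∉ F → ∃ f ∈ F, G.Adj w f) :
    W.card ≤ F.card + t + 2 ∧ (2 ≤ F.card → F.card + t + 1 ≤ W.card) := by
  have h1 := cyc_NT h hf
  have h2 := Finset.card_le_card h.1
  have h3 := hF.up _ _ h1
  refine ⟨by omega, fun h4 => ?_⟩
  have := hF.lo _ _ h1 (by omega)
  omega

theorem cyc_empty (G : SimpleGraph β) : Cyc K G ∅ ∅ := by
  refine ⟨Finset.Subset.refl _, Finsupp.lapply ∅, ?_, ?_, by simp⟩
  · intro x hx
    have := D_Sp (B := {s | False}) ?_ hx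
    · exact mem_Sp.1 this _ (fun h => h)
    · intro s hs v hv
      have : s ⊆ ∅ := hs
      exact absurd (this hv) (by simp)
  · rintro Q ⟨_, h⟩
    exact absurd (fun x hx => by simp at hx) h

noncomputable def rho (K : Type) [Field K] (W : Finset β) : M K β →ₗ[K] M K β :=
  Finsupp.lsum K fun s => LinearMap.toSpanSingleton K _ (if s ⊆ W then single s (1 : K) else 0)

theorem rho_single (W s : Finset β) : rho K W (single s 1) = if s ⊆ W then single s (1 : K) else 0 := by
  simp [rho]

noncomputable def dl (K : Type) [Field K] (T : Finset β) : M K β →ₗ[K] M K β := ∑ v ∈ T, dn K v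

theorem dl_dl (T : Finset β) (x : M K β) : dl K T (dl K T x) = 0 := by
  have : dl K T ∘ₗ dl K T = 0 := by
    unfold dl
    induction T using Finset.induction_on with
    | empty => simp
    | insert a T ha ih =>
      rw [Finset.sum_insert ha, LinearMap.add_comp, LinearMap.comp_add, LinearMap.comp_add, ih,
        dn_dn_self]
      have : ∀ T : Finset β, dn K a ∘ₗ (∑ v ∈ T, dn K v) + (∑ v ∈ T, dn K v) ∘ₗ dn K a = 0 := by
        intro T
        apply LinearMap.ext
        intro x
        simp only [LinearMap.add_apply, LinearMap.comp_apply, LinearMap.sum_apply, map_sum]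
        rw [← Finset.sum_add_distrib]
        exact Finset.sum_eq_zero fun w _ => LinearMap.congr_fun (dn_dn a w) x
      rw [zero_add, add_zero]; exact this T
  exact LinearMap.congr_fun this x

theorem dl_D (T : Finset β) (x : M K β) : dl K T (D K β x) = - D K β (dl K T x) := by
  unfold dl
  simp only [LinearMap.sum_apply, map_sum]
  rw [← Finset.sum_neg_distrib]
  refine Finset.sum_congr rfl fun v _ => ?_
  rw [D_dn, neg_neg]

theorem dl_single (T s : Finset β) : dl K T (single s 1) =
    ∑ v ∈ T, if v ∈ s then sg K v s • Finsupp.single (s.erase v) (1 : K) else 0 := by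
  simp [dl, LinearMap.sum_apply, dn_single]

theorem rho_D (W T : Finset β) (hd : Disjoint W T) {x : M K β} (hx : x ∈ Sp K (GK (W ∪ T))) :
    rho K W (D K β x) = D K β (rho K W x) + rho K W (dl K T x) := by
  have := map_Sp (rho K W ∘ₗ D K β - D K β ∘ₗ rho K W - rho K W ∘ₗ dl K T) (GK (W ∪ T)) ⊥ ?_ hx
  · simp only [LinearMap.sub_apply, LinearMap.comp_apply, Submodule.mem_bot] at this
    rw [sub_sub, sub_eq_zero] at this
    exact this
  intro s hs
  simp only [LinearMap.sub_apply, LinearMap.comp_apply, Submodule.mem_bot]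
  have e : D K β (single s 1) = dl K W (single s 1) + dl K T (single s 1) := by
    unfold dl
    rw [← LinearMap.add_apply, ← Finset.sum_union hd, LinearMap.sum_apply, D_single]
    simp only [dn_single]
    rw [Finset.sum_ite_mem, Finset.inter_eq_right.2 hs]
  rw [e, map_add]
  have : rho K W (dl K W (single s 1)) = D K β (rho K W (single s 1)) := by
    rw [rho_single]
    split_ifs with h1
    · rw [dl_single, D_single, Finset.sum_ite_mem, Finset.inter_eq_right.2 h1, map_sum]
      refine Finset.sum_congr rfl fun v _ => ?_
      rw [map_smul, rho_single, if_pos ((Finset.erase_subset _ _).trans h1)]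
    · rw [map_zero, dl_single, map_sum]
      refine Finset.sum_eq_zero fun v hv => ?_
      split_ifs with h2
      · rw [map_smul, rho_single, if_neg, smul_zero]
        intro h3
        apply h1
        rw [← Finset.insert_erase h2]
        exact Finset.insert_subset hv h3
      · simp
  rw [this]; abel

theorem cyc_ext {G : SimpleGraph β} {W F T : Finset β} (h : Cyc K G W F) (hd : Disjoint W T)
    (hT : ∀ v ∈ T, ∀ x ∈ T, ∀ y ∈ W ∪ T, x ≠ v → y ≠ v → ¬ G.Adj x y) {v0 : β} (hv0 : v0 ∈ T) :
    Cyc K G (W ∪ T) (F ∪ T.erase v0) := by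
  obtain ⟨hFW, ζ, h1, h2, h3⟩ := h
  refine ⟨Finset.union_subset_union hFW (Finset.erase_subset _ _), ζ ∘ₗ rho K W ∘ₗ dl K T, ?_, ?_, ?_⟩
  · intro x hx
    have hdx : dl K T x ∈ Sp K (GK (W ∪ T)) := by
      unfold dl
      rw [LinearMap.sum_apply]
      refine Submodule.sum_mem _ fun v _ => dn_Sp v ?_ hx
      intro s hs _
      exact (Finset.erase_subset _ _).trans hs
    have hrx : rho K W (dl K T x) ∈ Sp K (GK W) := by
      refine map_Sp _ _ _ ?_ hdx
      intro s _
      rw [rho_single]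
      split_ifs with h
      · exact single_Sp h 1
      · simp
    simp only [LinearMap.comp_apply, dl_D, map_neg]
    rw [rho_D W T hd hdx, dl_dl, map_zero, add_zero, h1 _ hrx, neg_zero]
  · rintro Q ⟨hQ, hI⟩
    simp only [LinearMap.comp_apply, dl_single, map_sum]
    refine Finset.sum_eq_zero fun v hv => ?_
    split_ifs with hvQ
    swap
    · simp
    rw [map_smul, rho_single]
    split_ifs with hW
    swap
    · simp
    rw [map_smul, h2, smul_zero]
    refine ⟨hW, fun hI' => hI ?_⟩
    have hvW : v ∉ W := fun h => Finset.disjoint_left.1 hd h hv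
    have c : ∀ x ∈ (W ∪ T) \ Q, x ≠ v ∧ (x ∈ T ∨ x ∈ W \ Q.erase v) := by
      intro x hx
      simp only [Finset.mem_sdiff, Finset.mem_union, Finset.mem_erase] at hx ⊢
      have hne : x ≠ v := fun h => hx.2 (h ▸ hvQ)
      refine ⟨hne, ?_⟩
      rcases hx.1 with h | h
      · right; exact ⟨h, fun h' => hx.2 h'.2⟩
      · left; exact h
    intro x hx y hy hxy
    have hx' := c x hx
    have hy' := c y hy
    rw [Finset.mem_sdiff] at hx hy
    rcases hx'.2 with h | h
    · exact hT v hv x h y hy.1 hx'.1 hy'.1 hxy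
    · rcases hy'.2 with h' | h'
      · exact hT v hv y h' x hx.1 hy'.1 hx'.1 hxy.symm
      · exact hI' x h y h' hxy
  · have e : (W ∪ T) \ (F ∪ T.erase v0) = insert v0 (W \ F) := by
      ext x
      simp only [Finset.mem_sdiff, Finset.mem_union, Finset.mem_erase, Finset.mem_insert]
      have hxd : x ∈ W → x ∉ T := fun h => Finset.disjoint_left.1 hd h
      have : x ∈ F → x ∈ W := fun h => hFW h
      by_cases hx : x = v0
      · subst hx; tauto
      · tauto
    have hvW : v0 ∉ W := fun h => Finset.disjoint_left.1 hd h hv0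
    simp only [LinearMap.comp_apply]
    rw [e, dl_single, map_sum, map_sum, Finset.sum_eq_single v0]
    · rw [if_pos (Finset.mem_insert_self _ _), Finset.erase_insert (by simp [hvW]), map_smul, map_smul, rho_single,
        if_pos Finset.sdiff_subset, smul_eq_mul]
      exact mul_ne_zero (sg_ne _ _) h3
    · intro v hv hne
      have : v ∉ W := fun h => Finset.disjoint_left.1 hd h hv
      rw [if_neg (by simp [hne, this])]; simp
    · intro h; exact absurd hv0 h

theorem om_D {W : Finset β} {x : M K β} (hx : x ∈ Sp K (GK W)) : D K β x W = 0 := by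
  refine mem_Sp.1 (D_Sp (B := {s | s ≠ W}) ?_ hx) W (fun h => h rfl)
  intro s hs v hv h
  have h2 : v ∈ s.erase v := by rw [h]; exact hs hv
  simp at h2

theorem up_GK {W : Finset β} {v : β} (hv : v ∈ W) {x : M K β} (hx : x ∈ Sp K (GK W)) :
    up K v x ∈ Sp K (GK W) :=
  up_Sp v (fun _ hs _ => Finset.insert_subset hv hs) hx

theorem om_uuD {W : Finset β} {Y : M K β} (hY : Y ∈ Sp K (GK W)) {x y : β} (hx : x ∈ W) (hy : y ∈ W) :
    up K x (up K y (D K β Y)) W = up K x Y W - up K y Y W := by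
  have e1 : up K y (D K β Y) = Y - D K β (up K y Y) := by rw [D_up]; abel
  have e2 : up K x (D K β (up K y Y)) = up K y Y - D K β (up K x (up K y Y)) := by
    rw [D_up x (up K y Y)]; abel
  rw [e1, map_sub, e2]
  simp [om_D (up_GK hx (up_GK hy hY))]

theorem om_uu_single {W Q : Finset β} {x y : β} (hQ : Q ⊆ W)
    (h : up K x (up K y (single Q 1)) W ≠ 0) : W \ Q = {x, y} := by
  rw [up_single] at h
  split_ifs at h with h1
  · simp at h
  rw [map_smul, up_single] at h
  split_ifs at h with h2
  · simp at h
  by_cases h3 : insert x (insert y Q) = W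
  · rw [← h3]
    ext z
    simp only [Finset.mem_sdiff, Finset.mem_insert, Finset.mem_singleton] at h1 h2 ⊢
    constructor
    · tauto
    · rintro (rfl | rfl)
      · tauto
      · tauto
  · simp [h3] at h

theorem uu_ne {W : Finset β} {a b : β} (ha : a ∈ W) (hb : b ∈ W) (hab : a ≠ b) :
    up K a (up K b (single (W \ {a, b}) 1)) W ≠ 0 := by
  rw [up_single, if_neg (by simp), map_smul, up_single, if_neg (by simp [hab])]
  have : insert a (insert b (W \ {a, b})) = W := by
    ext z
    simp only [Finset.mem_insert, Finset.mem_sdiff, Finset.mem_singleton]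
    by_cases h1 : z = a
    · subst h1; simp [ha]
    · by_cases h2 : z = b
      · subst h2; simp [hb]
      · simp [h1, h2]
  rw [this]
  simp [sg_ne]

def St (G : SimpleGraph β) (W : Finset β) (a b x y : β) : Prop :=
  x ∈ W ∧ y ∈ W ∧ ¬ G.Adj x y ∧ ({x, y} : Finset β) ≠ {a, b}

theorem cyc_poly {G : SimpleGraph β} {W : Finset β} {a b : β} (ha : a ∈ W) (hb : b ∈ W) (hab : a ≠ b)
    (hG : ¬ G.Adj a b) (hw : Relation.ReflTransGen (St G W a b) a b) : Cyc K G W {a, b} := by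
  have ndj : ∀ x y, ¬ G.Adj x y → Ind G {x, y} := by
    intro x y h u hu v hv
    simp only [Finset.mem_insert, Finset.mem_singleton] at hu hv
    rcases hu with rfl | rfl <;> rcases hv with rfl | rfl
    · exact G.loopless.irrefl _
    · exact h
    · exact fun h' => h h'.symm
    · exact G.loopless.irrefl _
  have hθ : ∀ c, Relation.ReflTransGen (St G W a b) a c → ∃ θ : M K β →ₗ[K] K,
      (∀ x ∈ Sp K (GK W), θ (D K β x) = up K a x W - up K c x W) ∧
      (∀ Q ∈ AL (Ind G) W, θ (single Q 1) = 0) ∧ θ (single (W \ {a, b}) 1) = 0 := by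
    intro c hc
    induction hc with
    | refl => exact ⟨0, by simp⟩
    | @tail c d _ hcd ih =>
      obtain ⟨θ, h1, h2, h3⟩ := ih
      obtain ⟨g1, g2, g3, g4⟩ := hcd
      refine ⟨θ + Finsupp.lapply W ∘ₗ up K c ∘ₗ up K d, ?_, ?_, ?_⟩
      · intro x hx
        simp only [LinearMap.add_apply, LinearMap.comp_apply, Finsupp.lapply_apply]
        rw [h1 x hx, om_uuD hx g1 g2]; abel
      · intro Q hQ
        simp only [LinearMap.add_apply, LinearMap.comp_apply, Finsupp.lapply_apply]
        rw [h2 Q hQ, zero_add]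
        by_contra hne
        have := om_uu_single hQ.1 hne
        exact hQ.2 (this ▸ ndj c d g3)
      · simp only [LinearMap.add_apply, LinearMap.comp_apply, Finsupp.lapply_apply]
        rw [h3, zero_add]
        by_contra hne
        have := om_uu_single Finset.sdiff_subset hne
        apply g4
        rw [← this, Finset.sdiff_sdiff_eq_self]
        intro z hz
        simp only [Finset.mem_insert, Finset.mem_singleton] at hz
        rcases hz with rfl | rfl <;> assumption
  obtain ⟨θ, h1, h2, h3⟩ := hθ b hw
  have hs : ({a, b} : Finset β) ⊆ W := by
    intro z hz
    simp only [Finset.mem_insert, Finset.mem_singleton] at hz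
    rcases hz with rfl | rfl <;> assumption
  refine ⟨hs, Finsupp.lapply W ∘ₗ up K a ∘ₗ up K b - θ, ?_, ?_, ?_⟩
  · intro x hx
    simp only [LinearMap.sub_apply, LinearMap.comp_apply, Finsupp.lapply_apply]
    rw [h1 x hx, om_uuD hx ha hb]; abel
  · intro Q hQ
    simp only [LinearMap.sub_apply, LinearMap.comp_apply, Finsupp.lapply_apply]
    rw [h2 Q hQ, sub_zero]
    by_contra hne
    have := om_uu_single hQ.1 hne
    exact hQ.2 (this ▸ ndj a b hG)
  · simp only [LinearMap.sub_apply, LinearMap.comp_apply, Finsupp.lapply_apply]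
    rw [h3, sub_zero]
    exact uu_ne ha hb hab

/-- polygon criterion -/
theorem crit1 {G : SimpleGraph β} {t : ℕ} (hF : Facts K G t) {W : Finset β} {a b : β}
    (ha : a ∈ W) (hb : b ∈ W) (hab : a ≠ b)
    (hG : ¬ G.Adj a b) (hw : Relation.ReflTransGen (St G W a b) a b)
    (hf : ∀ w ∈ W, w ≠ a → w ≠ b → G.Adj w a ∨ G.Adj w b) : t + 3 ≤ W.card ∧ W.card ≤ t + 4 := by
  have := crit hF (cyc_poly (K := K) ha hb hab hG hw) (by
    intro w hw hw'
    simp only [Finset.mem_insert, Finset.mem_singleton, not_or] at hw'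
    rcases hf w hw hw'.1 hw'.2 with h | h
    · exact ⟨a, by simp, h⟩
    · exact ⟨b, by simp, h⟩)
  rw [Finset.card_pair hab] at this
  have h2 := this.2 le_rfl
  omega

end crit
end AM

open Finsupp
set_option linter.unusedSectionVars false
set_option linter.unusedSimpArgs false
set_option linter.deprecated false
set_option linter.unusedVariables false
namespace AM

section stepsec
variable {K : Type} [Field K] {β : Type} [LinearOrder β] [Fintype β]

theorem rel_homog {Γ A : Set (Finset β)} {p : ℕ} {z : M K β}
    (hz : z ∈ Sp K {s | s ∈ Γ ∧ s.card = p}) (h : ∃ y ∈ Sp K Γ, z - D K β y ∈ Sp K A) :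
    ∃ y ∈ Sp K {s | s ∈ Γ ∧ s.card = p + 1}, z - D K β y ∈ Sp K A := by
  obtain ⟨y, hy, hyA⟩ := h
  obtain ⟨y1, hy1, y2, hy2, rfl⟩ := split_Sp _ {s | s ∈ Γ ∧ s.card = p + 1}
    {s | s ∈ Γ ∧ s.card ≠ p + 1} (fun s hs => by
      by_cases h : s.card = p + 1
      · exact Or.inl ⟨hs, h⟩
      · exact Or.inr ⟨hs, h⟩) hy
  refine ⟨y1, hy1, mem_Sp.2 fun s hs => ?_⟩
  have h1 : z - D K β y1 ∈ Sp K {s | s.card = p} := by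
    refine Submodule.sub_mem _ (Sp_mono (fun s hs => hs.2) hz) (D_Sp ?_ hy1)
    intro s hs v hv
    have := Finset.card_erase_add_one hv
    have h2 := hs.2
    show (s.erase v).card = p
    omega
  have h2 : D K β y2 ∈ Sp K {s | s.card ≠ p} := by
    refine D_Sp ?_ hy2
    intro s hs v hv
    have := Finset.card_erase_add_one hv
    have h2 := hs.2
    show (s.erase v).card ≠ p
    omega
  by_cases hc : s.card = p
  · have h3 := mem_Sp.1 hyA s hs
    have h4 := mem_Sp.1 h2 s (fun h => h hc)
    rw [map_add, ← sub_sub, Finsupp.sub_apply, h4, sub_zero] at h3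
    exact h3
  · exact mem_Sp.1 h1 s hc

theorem down_AL {Θ : Finset β → Prop} (hΘ : ∀ A B, A ⊆ B → Θ B → Θ A) (W : Finset β) :
    Down (AL Θ W) := by
  rintro s ⟨h1, h2⟩ v _
  exact ⟨(Finset.erase_subset _ _).trans h1, fun h => h2 (hΘ _ _
    (Finset.sdiff_subset_sdiff (Finset.Subset.refl _) (Finset.erase_subset _ _)) h)⟩

theorem NT_step {Θ : Finset β → Prop} (hΘ : ∀ A B, A ⊆ B → Θ B → Θ A) {W : Finset β} {v : β}
    (hv : v ∈ W) {q : ℕ} (h : NT K Θ W (q+1)) :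
    NT K Θ (W.erase v) q ∨ NT K (fun F => Θ (insert v F)) (W.erase v) (q+1) := by
  by_contra hcon
  push Not at hcon
  obtain ⟨hn1, hn2⟩ := hcon
  obtain ⟨Y, hY, hDY, hno⟩ := h
  -- basic transport
  have t1 : ∀ x ∈ Sp K (AL Θ W), dn K v x ∈ Sp K (AL Θ (W.erase v)) := by
    intro x hx
    refine dn_Sp v ?_ hx
    rintro s ⟨h1, h2⟩ hvs
    refine ⟨Finset.erase_subset_erase _ h1, ?_⟩
    have : W.erase v \ s.erase v = W \ s := by
      ext z
      simp only [Finset.mem_sdiff, Finset.mem_erase]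
      by_cases hz : z = v
      · subst hz; simp [hvs]
      · simp [hz]
    rwa [this]
  have t2 : ∀ x ∈ Sp K (AL Θ (W.erase v)), up K v x ∈ Sp K (AL Θ W) := by
    intro x hx
    refine up_Sp v ?_ hx
    rintro s ⟨h1, h2⟩ hvs
    refine ⟨Finset.insert_subset hv (h1.trans (Finset.erase_subset _ _)), ?_⟩
    have : W \ insert v s = W.erase v \ s := by
      ext z
      simp only [Finset.mem_sdiff, Finset.mem_erase, Finset.mem_insert]
      tauto
    rwa [this]
  have t3 : ∀ s ∈ GK (W.erase v), (s ∈ AL (fun F => Θ (insert v F)) (W.erase v) ↔ s ∈ AL Θ W) := by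
    intro s hs
    have hvs : v ∉ s := fun h => by simpa using hs h
    have : W \ s = insert v (W.erase v \ s) := by
      ext z
      simp only [Finset.mem_sdiff, Finset.mem_erase, Finset.mem_insert]
      by_cases hz : z = v
      · subst hz; simp [hvs, hv]
      · simp [hz]
    unfold AL
    show (s ⊆ W.erase v ∧ ¬ Θ (insert v (W.erase v \ s))) ↔ (s ⊆ W ∧ ¬ Θ (W \ s))
    rw [this]
    have h3 : s ⊆ W.erase v := hs
    have h4 : s ⊆ W := h3.trans (Finset.erase_subset _ _)
    simp [h3, h4]
  have hY1 : dn K v Y ∈ Sp K {s | s ∈ GK (W.erase v) ∧ s.card = q} := by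
    refine dn_Sp v ?_ hY
    rintro s ⟨h1, h2⟩ hvs
    refine ⟨Finset.erase_subset_erase _ h1, ?_⟩
    rw [Finset.card_erase_of_mem hvs, h2]; rfl
  have hY0 : dn K v (up K v Y) ∈ Sp K {s | s ∈ GK (W.erase v) ∧ s.card = q + 1} := by
    have : up K v Y ∈ Sp K {s | s ⊆ W ∧ s.card = q + 2} := by
      refine up_Sp v ?_ hY
      rintro s ⟨h1, h2⟩ hvs
      exact ⟨Finset.insert_subset hv h1, by rw [Finset.card_insert_of_notMem hvs, h2]⟩
    refine dn_Sp v ?_ this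
    rintro s ⟨h1, h2⟩ hvs
    refine ⟨Finset.erase_subset_erase _ h1, ?_⟩
    rw [Finset.card_erase_of_mem hvs, h2]; rfl
  have eY : up K v (dn K v Y) + dn K v (up K v Y) = Y := LinearMap.congr_fun (up_dn_self v) Y
  have hDY1 : D K β (dn K v Y) ∈ Sp K (AL Θ (W.erase v)) := by
    rw [D_dn]; exact Submodule.neg_mem _ (t1 _ hDY)
  have hU : ∃ U ∈ Sp K (GK (W.erase v)), dn K v Y - D K β U ∈ Sp K (AL Θ (W.erase v)) := by
    by_contra hno
    exact hn1 ⟨_, hY1, hDY1, hno⟩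
  obtain ⟨U, hU, hUA⟩ := rel_homog hY1 hU
  have hUg : U ∈ Sp K (GK (W.erase v)) := Sp_mono (fun s hs => hs.1) hU
  have incl : ∀ x ∈ Sp K (GK (W.erase v)), x ∈ Sp K (GK W) := fun x hx =>
    Sp_mono (fun s (hs : s ⊆ W.erase v) => (hs.trans (Finset.erase_subset _ _) : s ⊆ W)) hx
  have hN := t2 _ hUA
  have dAL := down_AL hΘ W
  have hZ : dn K v (up K v Y) + U ∈ Sp K {s | s ∈ GK (W.erase v) ∧ s.card = q + 1} :=
    Submodule.add_mem _ hY0 hU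
  have hDZ1 : D K β (dn K v (up K v Y) + U) ∈ Sp K (AL Θ W) := by
    have : D K β (dn K v (up K v Y) + U) = D K β Y - D K β (up K v (dn K v Y - D K β U)) := by
      have eD := (congrArg (D K β) eY).symm.trans (map_add _ _ _)
      rw [map_sub (up K v), map_sub (D K β), D_up v (D K β U), DD, map_zero, sub_zero,
        map_add, eD]
      abel
    rw [this]
    exact Submodule.sub_mem _ hDY (D_Sp dAL hN)
  have hDZ2 : D K β (dn K v (up K v Y) + U) ∈ Sp K (GK (W.erase v)) := by
    refine D_Sp ?_ hZ
    intro s hs v _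
    exact (Finset.erase_subset _ _).trans hs.1
  have hDZ : D K β (dn K v (up K v Y) + U) ∈ Sp K (AL (fun F => Θ (insert v F)) (W.erase v)) := by
    rw [mem_Sp]
    intro s hs
    by_cases h : s ∈ GK (W.erase v)
    · exact mem_Sp.1 hDZ1 s (fun h' => hs ((t3 s h).2 h'))
    · exact mem_Sp.1 hDZ2 s h
  refine hn2 ⟨_, hZ, hDZ, ?_⟩
  rintro ⟨y, hy, hyA⟩
  refine hno ⟨y - up K v U, Submodule.sub_mem _ (incl _ hy) (up_GK hv (incl _ hUg)), ?_⟩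
  have : Y - D K β (y - up K v U) = up K v (dn K v Y - D K β U) +
      (dn K v (up K v Y) + U - D K β y) := by
    conv_lhs => rw [← eY]
    rw [map_sub (D K β), D_up v U, map_sub (up K v)]
    abel
  rw [this]
  refine Submodule.add_mem _ hN (Sp_mono ?_ hyA)
  intro s hs
  exact (t3 s hs.1).1 hs

theorem NT_cone {Θ : Finset β → Prop} {W : Finset β} {v : β} (hv : v ∈ W)
    (hc : ∀ A, A ⊆ W → Θ A → Θ (insert v A)) {p : ℕ} : ¬ NT K Θ W p := by
  rintro ⟨Y, hY, hDY, hno⟩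
  refine hno ⟨up K v Y, up_GK hv (Sp_mono (fun s hs => hs.1) hY), ?_⟩
  rw [D_up, sub_sub_cancel]
  refine up_Sp v ?_ hDY
  rintro s ⟨h1, h2⟩ hvs
  refine ⟨Finset.insert_subset hv h1, fun h => h2 ?_⟩
  have := hc _ Finset.sdiff_subset h
  have e : insert v (W \ insert v s) = W \ s := by
    ext z
    simp only [Finset.mem_sdiff, Finset.mem_insert]
    by_cases hz : z = v
    · subst hz; simp [hv, hvs]
    · simp [hz]
  rwa [e] at this

theorem NT_void {Θ : Finset β → Prop} {W : Finset β} (h : ∀ A, ¬ Θ A) {p : ℕ} : ¬ NT K Θ W p := by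
  rintro ⟨Y, hY, hDY, hno⟩
  refine hno ⟨0, by simp, ?_⟩
  rw [map_zero, sub_zero]
  exact Sp_mono (B := AL Θ W) (fun s hs => (⟨hs.1, h _⟩ : s ⊆ W ∧ ¬ Θ (W \ s))) hY

theorem NT_peel {Θ : Finset β → Prop} (hΘ : ∀ A B, A ⊆ B → Θ B → Θ A) (O : Finset β) :
    ∀ (W : Finset β) (p : ℕ), O ⊆ W → (∀ o ∈ O, ∀ A, ¬ Θ (insert o A)) → NT K Θ W p →
    ∃ p', p' + O.card = p ∧ NT K Θ (W \ O) p' := by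
  induction O using Finset.induction_on with
  | empty => intro W p _ _ h; exact ⟨p, by simp, by simpa using h⟩
  | insert o O ho ih =>
    intro W p hW hO h
    have hoW : o ∈ W := hW (Finset.mem_insert_self _ _)
    have hp := NT_pos h ⟨o, hoW⟩
    obtain ⟨q, rfl⟩ := Nat.exists_eq_succ_of_ne_zero hp
    rcases NT_step hΘ hoW h with h1 | h1
    · obtain ⟨p', h2, h3⟩ := ih (W.erase o) q (fun x hx => Finset.mem_erase.2
        ⟨fun h => ho (h ▸ hx), hW (Finset.mem_insert_of_mem hx)⟩)
        (fun o' ho' => hO o' (Finset.mem_insert_of_mem ho')) h1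
      refine ⟨p', by rw [Finset.card_insert_of_notMem ho]; omega, ?_⟩
      have : W \ insert o O = W.erase o \ O := by
        ext z; simp only [Finset.mem_sdiff, Finset.mem_insert, Finset.mem_erase]; tauto
      rwa [this]
    · exact absurd h1 (NT_void (hO o (Finset.mem_insert_self _ _)))

theorem Ind_mono (G : SimpleGraph β) : ∀ A B, A ⊆ B → Ind G B → Ind G A :=
  fun _ _ h hB x hx y hy => hB x (h hx) y (h hy)

theorem card_eq_of_facts {G : SimpleGraph β} {t : ℕ} (hF : Facts K G t) {W : Finset β}
    (h : NT K (Ind G) W (t+1)) (hW : t + 3 ≤ W.card) : W.card = t + 3 := by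
  classical
  by_contra hne
  obtain ⟨v, hv⟩ : W.Nonempty := Finset.card_pos.1 (by omega)
  have hc := Finset.card_erase_of_mem hv
  rcases NT_step (Ind_mono G) hv h with h1 | h1
  · have := hF.lo _ _ h1 (by omega)
    omega
  · have hΘ : ∀ A B : Finset β, A ⊆ B → Ind G (insert v B) → Ind G (insert v A) := fun A B hAB hB =>
      Ind_mono G _ _ (Finset.insert_subset_insert v hAB) hB
    set O := (W.erase v).filter (fun x => G.Adj v x) with hO
    obtain ⟨p', h2, h3⟩ := NT_peel hΘ O (W.erase v) (t+1) (Finset.filter_subset _ _) (by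
      intro o ho A hI
      exact hI v (by simp) o (by simp) (Finset.mem_filter.1 ho).2) h1
    have h4 : NT K (Ind G) (W.erase v \ O) p' := by
      have : AL (fun F => Ind G (insert v F)) (W.erase v \ O) = AL (Ind G) (W.erase v \ O) := by
        unfold AL
        ext F
        refine and_congr Iff.rfl (not_congr ⟨Ind_mono G _ _ (Finset.subset_insert _ _), fun hI => ?_⟩)
        have key : ∀ y ∈ (W.erase v \ O) \ F, ¬ G.Adj v y := by
          intro y hy hvy
          simp only [hO, Finset.mem_sdiff, Finset.mem_filter] at hy
          exact hy.1.2 ⟨hy.1.1, hvy⟩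
        intro x hx y hy
        rcases Finset.mem_insert.1 hx with rfl | hx <;> rcases Finset.mem_insert.1 hy with rfl | hy
        · exact G.loopless.irrefl _
        · exact key y hy
        · exact fun h => key x hx h.symm
        · exact hI x hx y hy
      unfold NT at h3 ⊢
      rwa [this] at h3
    have h5 : (W.erase v \ O).card = (W.erase v).card - O.card :=
      Finset.card_sdiff_of_subset (Finset.filter_subset _ _)
    have h5' : O.card ≤ (W.erase v).card := Finset.card_le_card (Finset.filter_subset _ _)
    have h6 := hF.lo _ _ h4 (by omega)
    have h7 : O = ∅ := Finset.card_eq_zero.1 (by omega)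
    refine NT_cone hv ?_ h
    intro A hA hI
    have key : ∀ y ∈ A, ¬ G.Adj v y := by
      intro y hy hvy
      have : y ∈ O := Finset.mem_filter.2 ⟨Finset.mem_erase.2 ⟨fun h => G.loopless.irrefl _ (h ▸ hvy), hA hy⟩, hvy⟩
      rw [h7] at this; simp at this
    intro x hx y hy
    rcases Finset.mem_insert.1 hx with hx1 | hx1 <;> rcases Finset.mem_insert.1 hy with hy1 | hy1
    · rw [hx1, hy1]; exact G.loopless.irrefl _
    · rw [hx1]; exact key y hy1
    · rw [hy1]; exact fun h => key x hx1 h.symm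
    · exact hI x hx1 y hy1

theorem om_coef2 {W : Finset β} {x y : β} {N : M K β} (hN : N ∈ Sp K (GK W)) :
    up K x (up K y N) W = up K x (up K y (single (W \ {x, y}) 1)) W * N (W \ {x, y}) := by
  set c := up K x (up K y (single (W \ {x, y}) (1 : K))) W with hc
  have := ker_Sp (Finsupp.lapply W ∘ₗ up K x ∘ₗ up K y - c • Finsupp.lapply (W \ {x, y})) 
    (A := GK W) ?_ hN
  · simp only [LinearMap.sub_apply, LinearMap.comp_apply, Finsupp.lapply_apply, LinearMap.smul_apply,
      smul_eq_mul] at this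
    exact sub_eq_zero.1 this
  · intro Q hQ
    simp only [LinearMap.sub_apply, LinearMap.comp_apply, Finsupp.lapply_apply, LinearMap.smul_apply,
      smul_eq_mul]
    by_cases h : Q = W \ {x, y}
    · subst h; rw [← hc]; simp
    · rw [Finsupp.single_eq_of_ne (fun h' => h h'.symm), mul_zero, sub_zero]
      by_contra hne
      have := om_uu_single hQ hne
      apply h
      rw [← this, Finset.sdiff_sdiff_eq_self hQ]

theorem om_u_single {W Q : Finset β} {x : β} (hQ : Q ⊆ W)
    (h : up K x (single Q 1) W ≠ 0) : W \ Q = {x} := by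
  rw [up_single] at h
  split_ifs at h with h1
  · simp at h
  by_cases h3 : insert x Q = W
  · rw [← h3]
    ext z
    simp only [Finset.mem_sdiff, Finset.mem_insert, Finset.mem_singleton] at h1 ⊢
    constructor
    · tauto
    · rintro rfl
      tauto
  · simp [h3] at h

theorem om_coef1 {W : Finset β} {x : β} (hx : x ∈ W) {N : M K β} (hN : N ∈ Sp K (GK W))
    (h : up K x N W = 0) : N (W.erase x) = 0 := by
  set c := up K x (single (W.erase x) (1 : K)) W with hc
  have hc0 : c ≠ 0 := by
    rw [hc, up_single, if_neg (by simp), Finset.insert_erase hx]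
    simp [sg_ne]
  have := ker_Sp (Finsupp.lapply W ∘ₗ up K x - c • Finsupp.lapply (W.erase x)) 
    (A := GK W) ?_ hN
  · simp only [LinearMap.sub_apply, LinearMap.comp_apply, Finsupp.lapply_apply, LinearMap.smul_apply,
      smul_eq_mul, h, zero_sub, neg_eq_zero, mul_eq_zero, hc0, false_or] at this
    exact this
  · intro Q hQ
    simp only [LinearMap.sub_apply, LinearMap.comp_apply, Finsupp.lapply_apply, LinearMap.smul_apply,
      smul_eq_mul]
    by_cases h : Q = W.erase x
    · subst h; rw [← hc]; simp
    · rw [Finsupp.single_eq_of_ne (fun h' => h h'.symm), mul_zero, sub_zero]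
      by_contra hne
      have := om_u_single hQ hne
      apply h
      rw [← Finset.sdiff_singleton_eq_erase, ← this, Finset.sdiff_sdiff_eq_self hQ]

theorem exists_g {G : SimpleGraph β} {t : ℕ} (hF : Facts K G t) : ∃ W : Finset β, W.card = t + 3 ∧
    ∃ g : β → β → K, (∀ x y, g x y = - g y x) ∧
      (∀ x ∈ W, ∀ y ∈ W, ∀ z ∈ W, ¬ G.Adj x y → ¬ G.Adj x z → ¬ G.Adj y z →
        g x y - g x z + g y z = 0) ∧
      ¬ ∃ f : β → K, ∀ x ∈ W, ∀ y ∈ W, x ≠ y → ¬ G.Adj x y → g x y = f x - f y := by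
  obtain ⟨W, hNT, hW⟩ := hF.ex1
  have hWc := card_eq_of_facts hF hNT hW
  obtain ⟨Y, hY, hDY, hno⟩ := hNT
  have hYg : Y ∈ Sp K (GK W) := Sp_mono (fun s hs => hs.1) hY
  refine ⟨W, hWc, fun x y => up K x (up K y Y) W, ?_, ?_, ?_⟩
  · intro x y
    have := LinearMap.congr_fun (up_up (K := K) x y) Y
    simp only [LinearMap.add_apply, LinearMap.comp_apply, LinearMap.zero_apply] at this
    show up K x (up K y Y) W = - up K y (up K x Y) W
    rw [eq_neg_of_add_eq_zero_left this]; simp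
  · intro x hx y hy z hz hxy hxz hyz
    have e1 : up K z (D K β Y) = Y - D K β (up K z Y) := by rw [D_up]; abel
    have e2 : up K x (up K y (up K z (D K β Y))) W = up K x (up K y Y) W -
        (up K x (up K z Y) W - up K y (up K z Y) W) := by
      rw [e1, map_sub, map_sub, Finsupp.sub_apply, om_uuD (up_GK hz hYg) hx hy]
    have e3 : up K x (up K y (up K z (D K β Y))) W = 0 := by
      refine ker_Sp (Finsupp.lapply W ∘ₗ up K x ∘ₗ up K y ∘ₗ up K z) ?_ hDY
      rintro Q ⟨hQ, hI⟩
      simp only [LinearMap.comp_apply, Finsupp.lapply_apply]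
      by_contra hne
      apply hI
      rw [up_single] at hne
      split_ifs at hne with h1
      · simp at hne
      rw [map_smul, map_smul, Finsupp.smul_apply] at hne
      have := om_uu_single (Finset.insert_subset hz hQ) (right_ne_zero_of_mul hne)
      have hsub : W \ Q ⊆ {x, y, z} := by
        intro u hu
        by_cases huz : u = z
        · simp [huz]
        · have : u ∈ ({x, y} : Finset β) := by
            rw [← this]; simp only [Finset.mem_sdiff, Finset.mem_insert] at hu ⊢; tauto
          simp only [Finset.mem_insert, Finset.mem_singleton] at this ⊢; tauto
      refine Ind_mono G _ _ hsub ?_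
      intro u hu v hv huv
      have hvu := huv.symm
      have l := G.loopless.irrefl
      simp only [Finset.mem_insert, Finset.mem_singleton] at hu hv
      rcases hu with rfl | rfl | rfl <;> rcases hv with rfl | rfl | rfl <;>
        first | exact l _ huv | exact absurd huv (by assumption) | exact absurd hvu (by assumption)
    rw [e3] at e2
    rw [eq_comm, sub_eq_zero] at e2
    show up K x (up K y Y) W - up K x (up K z Y) W + up K y (up K z Y) W = 0
    rw [e2]; ring
  · rintro ⟨f, hf⟩
    let U : M K β := ∑ x ∈ W, f x • dn K x (single W 1)
    have hUs : U ∈ Sp K {s | s ∈ GK W ∧ s.card = t + 2} := by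
      refine Submodule.sum_mem _ fun x hx => Submodule.smul_mem _ _ ?_
      rw [dn_single, if_pos hx]
      refine Submodule.smul_mem _ _ (single_Sp (A := {s | s ∈ GK W ∧ s.card = t + 2}) ⟨Finset.erase_subset _ _, ?_⟩ 1)
      rw [Finset.card_erase_of_mem hx, hWc]; rfl
    have hU : U ∈ Sp K (GK W) := Sp_mono (fun s hs => hs.1) hUs
    have hUf : ∀ x ∈ W, up K x U W = f x := by
      intro x hx
      simp only [U, map_sum, map_smul, Finsupp.finsetSum_apply, Finsupp.smul_apply]
      rw [Finset.sum_eq_single x]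
      · have := LinearMap.congr_fun (up_dn_self (K := K) x) (single W 1)
        simp only [LinearMap.add_apply, LinearMap.comp_apply, LinearMap.id_apply] at this
        rw [up_single x W, if_pos hx, map_zero, add_zero] at this
        rw [this]; simp
      · intro y hy hyx
        rw [dn_single, if_pos hy, map_smul, up_single, if_pos (by simp [hx, Ne.symm hyx])]
        simp
      · intro h; exact absurd hx h
    refine hno ⟨U, hU, ?_⟩
    have hN1 : Y - D K β U ∈ Sp K {s | s ∈ GK W ∧ s.card = t + 1} := by
      refine Submodule.sub_mem _ hY (D_Sp ?_ hUs)
      rintro s ⟨h1, h2⟩ v hv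
      refine ⟨(Finset.erase_subset _ _).trans h1, ?_⟩
      rw [Finset.card_erase_of_mem hv, h2]; rfl
    have hN : Y - D K β U ∈ Sp K (GK W) := Sp_mono (fun s hs => hs.1) hN1
    rw [mem_Sp]
    intro Q hQ
    by_cases hQ' : Q ∈ GK W ∧ Q.card = t + 1
    swap
    · exact mem_Sp.1 hN1 Q hQ'
    obtain ⟨hQW, hQc⟩ := hQ'
    have hI : Ind G (W \ Q) := by
      by_contra h; exact hQ ⟨hQW, h⟩
    have h2 : (W \ Q).card = 2 := by rw [Finset.card_sdiff_of_subset hQW]; omega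
    obtain ⟨x, y, hxy, e⟩ := Finset.card_eq_two.1 h2
    have hxs : x ∈ W \ Q := by rw [e]; simp
    have hys : y ∈ W \ Q := by rw [e]; simp
    have hx := (Finset.mem_sdiff.1 hxs).1
    have hy := (Finset.mem_sdiff.1 hys).1
    have eQ : Q = W \ {x, y} := by rw [← e, Finset.sdiff_sdiff_eq_self hQW]
    have h3 := om_coef2 (x := x) (y := y) hN
    rw [map_sub, map_sub, Finsupp.sub_apply, om_uuD hU hx hy, hUf x hx, hUf y hy,
      ← hf x hx y hy hxy (hI x hxs y hys), sub_self, eq_comm, mul_eq_zero] at h3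
    rw [eQ]
    rcases h3 with h3 | h3
    · exact absurd h3 (uu_ne hx hy hxy)
    · exact h3

theorem NT_top {G : SimpleGraph β} {W : Finset β} (hW : W.Nonempty) : ¬ NT K (Ind G) W W.card := by
  rintro ⟨Y, hY, hDY, hno⟩
  obtain ⟨x, hx⟩ := hW
  have hYg : Y ∈ Sp K (GK W) := Sp_mono (fun s hs => hs.1) hY
  have e1 : up K x (D K β Y) = Y - D K β (up K x Y) := by rw [D_up]; abel
  have e2 : up K x (D K β Y) W = 0 := by
    refine ker_Sp (Finsupp.lapply W ∘ₗ up K x) ?_ hDY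
    rintro Q ⟨hQ, hI⟩
    simp only [LinearMap.comp_apply, Finsupp.lapply_apply]
    by_contra hne
    apply hI
    rw [om_u_single hQ hne]
    intro u hu v hv
    rw [Finset.mem_singleton.1 hu, Finset.mem_singleton.1 hv]; exact G.loopless.irrefl _
  rw [e1, Finsupp.sub_apply, om_D (up_GK hx hYg), sub_zero] at e2
  have : Y = 0 := by
    ext s
    by_cases hs : s = W
    · rw [hs, e2]; rfl
    · refine mem_Sp.1 hY s ?_
      rintro ⟨h1, h2⟩
      exact hs (Finset.eq_of_subset_of_card_le h1 h2.ge)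
  exact hno ⟨0, by simp, by simp [this]⟩

theorem NT_low {G : SimpleGraph β} {W : Finset β} {p : ℕ} (hp : p + 1 = W.card)
    (h : NT K (Ind G) W p) : ∃ f : β → K, (∀ x ∈ W, ∀ y ∈ W, ¬ G.Adj x y → f x = f y) ∧
      ¬ ∃ κ, ∀ x ∈ W, f x = κ := by
  obtain ⟨Y, hY, hDY, hno⟩ := h
  have hYg : Y ∈ Sp K (GK W) := Sp_mono (fun s hs => hs.1) hY
  refine ⟨fun x => up K x Y W, ?_, ?_⟩
  · intro x hx y hy hxy
    have e1 := om_uuD hYg hx hy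
    have e2 : up K x (up K y (D K β Y)) W = 0 := by
      refine ker_Sp (Finsupp.lapply W ∘ₗ up K x ∘ₗ up K y) ?_ hDY
      rintro Q ⟨hQ, hI⟩
      simp only [LinearMap.comp_apply, Finsupp.lapply_apply]
      by_contra hne
      apply hI
      rw [om_uu_single hQ hne]
      intro u hu v hv huv
      have hvu := huv.symm
      have l := G.loopless.irrefl
      simp only [Finset.mem_insert, Finset.mem_singleton] at hu hv
      rcases hu with rfl | rfl <;> rcases hv with rfl | rfl <;>
        first | exact l _ huv | exact absurd huv (by assumption) | exact absurd hvu (by assumption)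
    rw [e2] at e1
    exact (sub_eq_zero.1 e1.symm)
  · rintro ⟨κ, hκ⟩
    have hsW : single W (1 : K) ∈ Sp K (GK W) := single_Sp (A := GK W) (Finset.Subset.refl _) 1
    refine hno ⟨κ • single W 1, Submodule.smul_mem _ _ hsW, ?_⟩
    have hN1 : Y - D K β (κ • single W 1) ∈ Sp K {s | s ∈ GK W ∧ s.card = p} := by
      refine Submodule.sub_mem _ hY (D_Sp (A := {s | s ∈ GK W ∧ s.card = p + 1}) ?_
        (Submodule.smul_mem _ _ (single_Sp (A := {s | s ∈ GK W ∧ s.card = p + 1})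
          ⟨Finset.Subset.refl _, hp.symm⟩ 1)))
      rintro s ⟨h1, h2⟩ v hv
      refine ⟨(Finset.erase_subset _ _).trans h1, ?_⟩
      rw [Finset.card_erase_of_mem hv, h2]; rfl
    have hN : Y - D K β (κ • single W 1) ∈ Sp K (GK W) := Sp_mono (fun s hs => hs.1) hN1
    rw [mem_Sp]
    intro Q _
    by_cases hQ' : Q ∈ GK W ∧ Q.card = p
    swap
    · exact mem_Sp.1 hN1 Q hQ'
    obtain ⟨hQW, hQc⟩ := hQ'
    have h2 : (W \ Q).card = 1 := by rw [Finset.card_sdiff_of_subset hQW]; omega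
    obtain ⟨x, e⟩ := Finset.card_eq_one.1 h2
    have hxs : x ∈ W \ Q := by rw [e]; simp
    have hx := (Finset.mem_sdiff.1 hxs).1
    have eQ : Q = W.erase x := by
      rw [← Finset.sdiff_singleton_eq_erase, ← e, Finset.sdiff_sdiff_eq_self hQW]
    rw [eQ]
    refine om_coef1 hx hN ?_
    have e1 : up K x (D K β (single W (1 : K))) = single W 1 - D K β (up K x (single W 1)) := by
      rw [D_up]; abel
    have hk : up K x Y W = κ := hκ x hx
    rw [map_sub, map_smul (D K β), map_smul (up K x), e1, up_single x W, if_pos hx, map_zero, sub_zero,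
      Finsupp.sub_apply, hk]
    simp

end stepsec
end AM

open Finsupp
set_option linter.unusedSectionVars false
set_option linter.unusedSimpArgs false
set_option linter.deprecated false
set_option linter.unusedVariables false
namespace AM

section cycsec
variable {K : Type} [Field K] {β : Type} [LinearOrder β] [Fintype β]

structure IC (H : β → β → Prop) (m : ℕ) (c : ℕ → β) : Prop where
  inj : ∀ i j, i < j → j < m → c i ≠ c j
  adj : ∀ i j, i < j → j < m → (H (c i) (c j) ↔ (j = i + 1 ∨ (i = 0 ∧ j + 1 = m)))

def Hh (G : SimpleGraph β) (x y : β) : Prop := x ≠ y ∧ ¬ G.Adj x y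

theorem Hh.symm {G : SimpleGraph β} {x y : β} (h : Hh G x y) : Hh G y x :=
  ⟨h.1.symm, fun h' => h.2 h'.symm⟩

theorem Hh_comm {G : SimpleGraph β} {x y : β} : Hh G x y ↔ Hh G y x := ⟨Hh.symm, Hh.symm⟩

theorem ic_apex {G : SimpleGraph β} {s : ℕ → β} {k : ℕ} {v : β}
    (h1 : ∀ i j, i < j → j ≤ k → s i ≠ s j)
    (h2 : ∀ i j, i < j → j ≤ k → (Hh G (s i) (s j) ↔ j = i + 1))
    (h3 : ∀ i ≤ k, v ≠ s i) (h4 : ∀ i ≤ k, (Hh G v (s i) ↔ (i = 0 ∨ i = k))) :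
    IC (Hh G) (k + 2) (fun i => if i ≤ k then s i else v) := by
  constructor
  · intro i j hij hj
    have hi : i ≤ k := by omega
    by_cases hjk : j ≤ k
    · simp only [hi, hjk, if_true]; exact h1 i j hij hjk
    · simp only [hi, hjk, if_true, if_false]; exact (h3 i hi).symm
  · intro i j hij hj
    have hi : i ≤ k := by omega
    by_cases hjk : j ≤ k
    · simp only [hi, hjk, if_true]
      rw [h2 i j hij hjk]; omega
    · simp only [hi, hjk, if_true, if_false]
      rw [Hh_comm, h4 i hi]; omega

def Seq (G : SimpleGraph β) (S : Finset β) (k : ℕ) (s : ℕ → β) : Prop :=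
  (∀ i ≤ k, s i ∈ S) ∧ ∀ i < k, Hh G (s i) (s (i+1))

theorem seq_of_rtg {G : SimpleGraph β} {S : Finset β} {x y : β} (hx : x ∈ S)
    (h : Relation.ReflTransGen (fun a b => a ∈ S ∧ b ∈ S ∧ Hh G a b) x y) :
    ∃ k s, Seq G S k s ∧ s 0 = x ∧ s k = y := by
  induction h with
  | refl => exact ⟨0, fun _ => x, ⟨fun _ _ => hx, fun i hi => by omega⟩, rfl, rfl⟩
  | @tail b c _ hab ih =>
    obtain ⟨k, s, ⟨h1, h2⟩, h3, h4⟩ := ih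
    refine ⟨k+1, fun i => if i ≤ k then s i else c, ⟨?_, ?_⟩, ?_, ?_⟩
    · intro i hi
      by_cases h : i ≤ k
      · simp only [h, if_true]; exact h1 i h
      · simp only [h, if_false]; exact hab.2.1
    · intro i hi
      by_cases h : i + 1 ≤ k
      · have h' : i ≤ k := by omega
        simp only [h, h', if_true]; exact h2 i (by omega)
      · have h' : i = k := by omega
        subst h'
        simp only [le_refl, h, if_true, if_false]
        rw [h4]; exact hab.2.2
    · simp [h3]
    · simp

theorem cycle_of_g {G : SimpleGraph β} {W : Finset β} {g : β → β → K}
    (ga : ∀ x y, g x y = - g y x)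
    (gt : ∀ x ∈ W, ∀ y ∈ W, ∀ z ∈ W, ¬ G.Adj x y → ¬ G.Adj x z → ¬ G.Adj y z →
        g x y - g x z + g y z = 0)
    (gn : ¬ ∃ f : β → K, ∀ x ∈ W, ∀ y ∈ W, x ≠ y → ¬ G.Adj x y → g x y = f x - f y) :
    ∃ m c, 4 ≤ m ∧ IC (Hh G) m c ∧ ∀ i < m, c i ∈ W := by
  classical
  induction W using Finset.induction_on with
  | empty => exact absurd ⟨fun _ => 0, by simp⟩ gn
  | insert v S hv ih =>
    by_cases hS : ∃ f : β → K, ∀ x ∈ S, ∀ y ∈ S, x ≠ y → ¬ G.Adj x y → g x y = f x - f y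
    swap
    · obtain ⟨m, c, h1, h2, h3⟩ := ih (fun x hx y hy z hz => gt x (Finset.mem_insert_of_mem hx) y
        (Finset.mem_insert_of_mem hy) z (Finset.mem_insert_of_mem hz)) hS
      exact ⟨m, c, h1, h2, fun i hi => Finset.mem_insert_of_mem (h3 i hi)⟩
    obtain ⟨f, hf⟩ := hS
    let Q : ℕ → Prop := fun k => ∃ s, Seq G S k s ∧ Hh G v (s 0) ∧ Hh G v (s k) ∧
      g (s 0) v - f (s 0) ≠ g (s k) v - f (s k)
    have hQ : ∃ k, Q k := by
      by_contra hno
      apply gn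
      let R : β → β → Prop := Relation.ReflTransGen (fun a b => a ∈ S ∧ b ∈ S ∧ Hh G a b)
      have Rs : ∀ a b, R a b → R b a := by
        intro a b h
        induction h with
        | refl => exact Relation.ReflTransGen.refl
        | tail _ h ih => exact Relation.ReflTransGen.head ⟨h.2.1, h.1, h.2.2.symm⟩ ih
      have key : ∀ p q, p ∈ S → Hh G v p → Hh G v q → R p q →
          g p v - f p = g q v - f q := by
        intro p q hp hvp hvq hpq
        by_contra hne
        obtain ⟨k, s, h1, h2, h3⟩ := seq_of_rtg hp hpq
        exact hno ⟨k, s, h1, by rwa [h2], by rwa [h3], by rwa [h2, h3]⟩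
      let P : β → β → Prop := fun x p => p ∈ S ∧ Hh G v p ∧ R x p
      let cc : β → K := fun x => if h : ∃ p, P x p then g h.choose v - f h.choose else 0
      have ccv : ∀ x p, P x p → cc x = g p v - f p := by
        intro x p hp
        have hex : ∃ p, P x p := ⟨p, hp⟩
        have := hex.choose_spec
        simp only [cc, dif_pos hex]
        exact key _ _ this.1 this.2.1 hp.2.1 ((Rs _ _ this.2.2).trans hp.2.2)
      have cce : ∀ x y, R x y → cc x = cc y := by
        intro x y h
        by_cases hex : ∃ p, P x p
        · obtain ⟨p, hp⟩ := hex
          rw [ccv x p hp, ccv y p ⟨hp.1, hp.2.1, (Rs _ _ h).trans hp.2.2⟩]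
        · have hey : ¬ ∃ p, P y p := fun ⟨p, hp⟩ => hex ⟨p, hp.1, hp.2.1, h.trans hp.2.2⟩
          simp only [cc, dif_neg hex, dif_neg hey]
      have hvx : ∀ x ∈ S, ¬ G.Adj x v → g x v = f x + cc x := by
        intro x hx hxv
        rw [ccv x x ⟨hx, ⟨fun h => hv (h ▸ hx), fun h => hxv h.symm⟩, Relation.ReflTransGen.refl⟩]
        ring
      refine ⟨fun x => if x = v then 0 else f x + cc x, ?_⟩
      intro x hx y hy hxy hn
      beta_reduce
      rcases Finset.mem_insert.1 hx with hx1 | hx1 <;> rcases Finset.mem_insert.1 hy with hy1 | hy1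
      · exact absurd (hx1.trans hy1.symm) hxy
      · subst hx1
        rw [if_pos rfl, if_neg hxy.symm, ga, hvx y hy1 (fun h => hn h.symm)]; ring
      · subst hy1
        rw [if_pos rfl, if_neg hxy, hvx x hx1 hn]; ring
      · rw [if_neg (fun h : x = v => hv (h ▸ hx1)), if_neg (fun h : y = v => hv (h ▸ hy1)), hf x hx1 y hy1 hxy hn,
          cce x y (Relation.ReflTransGen.single ⟨hx1, hy1, hxy, hn⟩)]
        ring
    have hspec := Nat.find_spec hQ
    have hmin : ∀ l, l < Nat.find hQ → ¬ Q l := fun l hl => Nat.find_min hQ hl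
    generalize Nat.find hQ = k at hspec hmin
    obtain ⟨s, ⟨s1, s2⟩, v0, vk, hne⟩ := hspec
    have hint : ∀ i ≤ k, (Hh G v (s i) ↔ (i = 0 ∨ i = k)) := by
      intro i hi
      constructor
      · intro h
        by_contra hcon
        push Not at hcon
        by_cases he : g (s 0) v - f (s 0) = g (s i) v - f (s i)
        · refine hmin (k - i) (by omega) ⟨fun l => s (i + l), ⟨fun l hl => s1 _ (by omega), fun l hl => ?_⟩, ?_, ?_, ?_⟩
          · exact s2 (i + l) (by omega)
          · exact h
          · show Hh G v (s (i + (k - i)))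
            rwa [Nat.add_sub_cancel' hi]
          · show g (s i) v - f (s i) ≠ g (s (i + (k - i))) v - f (s (i + (k - i)))
            rw [Nat.add_sub_cancel' hi, ← he]; exact hne
        · exact hmin i (by omega) ⟨s, ⟨fun l hl => s1 l (by omega), fun l hl => s2 l (by omega)⟩, v0, h, he⟩
      · rintro (rfl | rfl)
        · exact v0
        · exact vk
    have hinj : ∀ i j, i < j → j ≤ k → s i ≠ s j := by
      intro i j hij hj he
      refine hmin (k - (j - i)) (by omega) ⟨fun l => if l ≤ i then s l else s (l + (j - i)), ⟨?_, ?_⟩, ?_, ?_, ?_⟩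
      · intro l hl
        dsimp only
        split_ifs with h
        · exact s1 l (by omega)
        · exact s1 _ (by omega)
      · intro l hl
        dsimp only
        by_cases h : l + 1 ≤ i
        · rw [if_pos h, if_pos (by omega)]; exact s2 l (by omega)
        · rw [if_neg h]
          split_ifs with h'
          · have : l = i := by omega
            subst this
            rw [he]
            have e : l + 1 + (j - l) = j + 1 := by omega
            rw [e]; exact s2 j (by omega)
          · have e : l + 1 + (j - i) = l + (j - i) + 1 := by omega
            rw [e]; exact s2 _ (by omega)
      · simpa using v0
      · dsimp only
        split_ifs with h
        · have e : k - (j - i) = i := by omega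
          have e2 : j = k := by omega
          rw [e, he, e2]; exact vk
        · have e : k - (j - i) + (j - i) = k := by omega
          rw [e]; exact vk
      · have e0 : (if 0 ≤ i then s 0 else s (0 + (j - i))) = s 0 := by simp
        have e1 : (if k - (j - i) ≤ i then s (k - (j - i)) else s (k - (j - i) + (j - i))) = s k := by
          split_ifs with h
          · have e : k - (j - i) = i := by omega
            have e2 : j = k := by omega
            rw [e, he, e2]
          · have e : k - (j - i) + (j - i) = k := by omega
            rw [e]
        dsimp only
        rw [e0, e1]; exact hne
    have hch : ∀ i j, i < j → j ≤ k → (Hh G (s i) (s j) ↔ j = i + 1) := by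
      intro i j hij hj
      constructor
      swap
      · rintro rfl; exact s2 i (by omega)
      intro he
      by_contra hji
      refine hmin (k - (j - i - 1)) (by omega) ⟨fun l => if l ≤ i then s l else s (l + (j - i - 1)), ⟨?_, ?_⟩, ?_, ?_, ?_⟩
      · intro l hl
        dsimp only
        split_ifs with h
        · exact s1 l (by omega)
        · exact s1 _ (by omega)
      · intro l hl
        dsimp only
        by_cases h : l + 1 ≤ i
        · rw [if_pos h, if_pos (by omega)]; exact s2 l (by omega)
        · rw [if_neg h]
          split_ifs with h'
          · have : l = i := by omega
            subst this
            have e : l + 1 + (j - l - 1) = j := by omega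
            rw [e]; exact he
          · have e : l + 1 + (j - i - 1) = l + (j - i - 1) + 1 := by omega
            rw [e]; exact s2 _ (by omega)
      · simpa using v0
      · dsimp only
        rw [if_neg (by omega)]
        have e : k - (j - i - 1) + (j - i - 1) = k := by omega
        rw [e]; exact vk
      · have e0 : (if 0 ≤ i then s 0 else s (0 + (j - i - 1))) = s 0 := by simp
        have e : k - (j - i - 1) + (j - i - 1) = k := by omega
        dsimp only
        rw [e0, if_neg (by omega), e]; exact hne
    have hk0 : k ≠ 0 := by
      rintro rfl; exact hne rfl
    have hk1 : k ≠ 1 := by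
      rintro rfl
      apply hne
      have hh := s2 0 (by omega)
      rw [zero_add] at hh
      have h1 := gt _ (Finset.mem_insert_of_mem (s1 0 (by omega))) _ (Finset.mem_insert_of_mem (s1 1 (by omega))) v
        (Finset.mem_insert_self _ _) hh.2 (fun h => v0.2 h.symm) (fun h => vk.2 h.symm)
      rw [hf _ (s1 0 (by omega)) _ (s1 1 (by omega)) hh.1 hh.2] at h1
      linear_combination -h1
    refine ⟨k + 2, _, by omega, ic_apex hinj hch (v := v) (fun i hi h => hv (h ▸ s1 i hi)) hint, ?_⟩
    intro i hi
    beta_reduce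
    split_ifs with h
    · exact Finset.mem_insert_of_mem (s1 i h)
    · exact Finset.mem_insert_self _ _

theorem ic_rot {G : SimpleGraph β} {m : ℕ} {c : ℕ → β} (h : IC (Hh G) m c) {k : ℕ} (hk : k < m) (hm : 3 ≤ m) :
    IC (Hh G) m (fun i => if i + k < m then c (i + k) else c (i + k - m)) := by
  constructor
  · intro i j hij hj
    split_ifs with h1 h2 h3
    · exact h.inj _ _ (by omega) (by omega)
    · exact (h.inj _ _ (by omega) (by omega)).symm
    · omega
    · exact h.inj _ _ (by omega) (by omega)
  · intro i j hij hj
    split_ifs with h1 h2 h3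
    · rw [h.adj _ _ (by omega) (by omega)]; omega
    · rw [Hh_comm, h.adj _ _ (by omega) (by omega)]; omega
    · omega
    · rw [h.adj _ _ (by omega) (by omega)]; omega

theorem ic_walk {G : SimpleGraph β} {m : ℕ} {c : ℕ → β} (h : IC (Hh G) m c) (hm : 4 ≤ m) {W : Finset β}
    (hW : ∀ i < m, c i ∈ W) : Relation.ReflTransGen (St G W (c 0) (c 1)) (c 0) (c 1) := by
  have hne : ∀ x y i, x ≠ c i → y = c i → ({x, y} : Finset β) ≠ {c 0, c 1} → True := fun _ _ _ _ _ _ => trivial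
  have key : ∀ j, j + 1 < m → Relation.ReflTransGen (St G W (c 0) (c 1)) (c (m-1)) (c (m - 1 - j)) := by
    intro j
    induction j with
    | zero => intro _; exact Relation.ReflTransGen.refl
    | succ j ih =>
      intro hj
      refine (ih (by omega)).tail ⟨hW _ (by omega), hW _ (by omega), ?_, ?_⟩
      · intro hA
        refine ((h.adj (m - 1 - (j+1)) (m - 1 - j) (by omega) (by omega)).2 (by omega)).2 hA.symm
      · intro he
        have : c (m - 1 - j) ∈ ({c 0, c 1} : Finset β) := by rw [← he]; simp
        simp only [Finset.mem_insert, Finset.mem_singleton] at this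
        rcases this with h1 | h1
        · exact h.inj 0 _ (by omega) (by omega) h1.symm
        · exact h.inj 1 _ (by omega) (by omega) h1.symm
  refine Relation.ReflTransGen.head (b := c (m-1)) ⟨hW _ (by omega), hW _ (by omega), ?_, ?_⟩ ?_
  · exact ((h.adj 0 (m-1) (by omega) (by omega)).2 (by omega)).2
  · intro he
    have : c (m - 1) ∈ ({c 0, c 1} : Finset β) := by rw [← he]; simp
    simp only [Finset.mem_insert, Finset.mem_singleton] at this
    rcases this with h1 | h1
    · exact h.inj 0 _ (by omega) (by omega) h1.symm
    · exact h.inj 1 _ (by omega) (by omega) h1.symm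
  · have := key (m - 2) (by omega)
    have e : m - 1 - (m - 2) = 1 := by omega
    rwa [e] at this

theorem ic_crit {G : SimpleGraph β} {t : ℕ} (hF : Facts K G t) {m : ℕ} {c : ℕ → β} (h : IC (Hh G) m c)
    (hm : 4 ≤ m) (T : Finset β) (hT : ∀ x ∈ T, (∀ i < m, x ≠ c i) ∧ (G.Adj x (c 0) ∨ G.Adj x (c 1))) :
    t + 3 ≤ m + T.card ∧ m + T.card ≤ t + 4 := by
  classical
  have hcard : ((Finset.range m).image c ∪ T).card = m + T.card := by
    rw [Finset.card_union_of_disjoint, Finset.card_image_of_injOn, Finset.card_range]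
    · intro i hi j hj he
      simp only [Finset.coe_range, Set.mem_Iio] at hi hj
      rcases lt_trichotomy i j with h1 | h1 | h1
      · exact absurd he (h.inj i j h1 hj)
      · exact h1
      · exact absurd he.symm (h.inj j i h1 hi)
    · rw [Finset.disjoint_left]
      intro x hx hxT
      obtain ⟨i, hi, rfl⟩ := Finset.mem_image.1 hx
      exact (hT _ hxT).1 i (Finset.mem_range.1 hi) rfl
  have hW : ∀ i < m, c i ∈ (Finset.range m).image c ∪ T := fun i hi =>
    Finset.mem_union_left _ (Finset.mem_image_of_mem _ (Finset.mem_range.2 hi))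
  rw [← hcard]
  have h01 := (h.adj 0 1 (by omega) (by omega)).2 (Or.inl rfl)
  refine crit1 hF (hW 0 (by omega)) (hW 1 (by omega)) h01.1 h01.2 (ic_walk h hm hW) ?_
  intro w hw hw0 hw1
  rcases Finset.mem_union.1 hw with hw | hw
  · obtain ⟨i, hi, rfl⟩ := Finset.mem_image.1 hw
    rw [Finset.mem_range] at hi
    have i0 : i ≠ 0 := by rintro rfl; exact hw0 rfl
    have i1 : i ≠ 1 := by rintro rfl; exact hw1 rfl
    by_contra hcon
    push Not at hcon
    have a0 := (h.adj 0 i (by omega) hi).1 ⟨hw0.symm, fun h => hcon.1 h.symm⟩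
    have a1 := (h.adj 1 i (by omega) hi).1 ⟨hw1.symm, fun h => hcon.2 h.symm⟩
    omega
  · exact (hT w hw).2

theorem exists_cycle {G : SimpleGraph β} {t : ℕ} (hF : Facts K G t) :
    1 ≤ t ∧ ∃ c, IC (Hh G) (t+3) c := by
  classical
  obtain ⟨W, hW, g, ga, gt, gn⟩ := exists_g hF
  obtain ⟨m, c, hm, hc, hcW⟩ := cycle_of_g ga gt gn
  have h1 := (ic_crit hF hc hm ∅ (by simp)).1
  simp only [Finset.card_empty, add_zero] at h1
  have h2 : m ≤ W.card := by
    have : ((Finset.range m).image c).card = m := by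
      rw [Finset.card_image_of_injOn, Finset.card_range]
      intro i hi j hj he
      simp only [Finset.coe_range, Set.mem_Iio] at hi hj
      rcases lt_trichotomy i j with h1 | h1 | h1
      · exact absurd he (hc.inj i j h1 hj)
      · exact h1
      · exact absurd he.symm (hc.inj j i h1 hi)
    rw [← this]
    refine Finset.card_le_card fun x hx => ?_
    obtain ⟨i, hi, rfl⟩ := Finset.mem_image.1 hx
    exact hcW i (Finset.mem_range.1 hi)
  have : m = t + 3 := by omega
  subst this
  exact ⟨by omega, c, hc⟩

theorem cyc_mono {G : SimpleGraph β} {W F : Finset β} (h : Cyc K G W F) {W' : Finset β} (hW : W ⊆ W') :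
    Cyc K G W' F := by
  classical
  have key : ∀ T : Finset β, Disjoint W T → Cyc K G (W ∪ T) F := by
    intro T
    induction T using Finset.induction_on with
    | empty => intro _; simpa using h
    | insert w T hw ih =>
      intro hd
      rw [Finset.disjoint_insert_right] at hd
      have := cyc_ext (ih hd.2) (T := {w}) (by simp [hd.1, hw]) (by
        intro v hv x hx y hy hxv
        simp only [Finset.mem_singleton] at hv hx
        exact absurd (hx.trans hv.symm) hxv) (Finset.mem_singleton_self w)
      have e : W ∪ insert w T = W ∪ T ∪ {w} := by ext; simp only [Finset.mem_union, Finset.mem_insert, Finset.mem_singleton]; tauto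
      rw [e]
      simpa using this
  have := key (W' \ W) Finset.disjoint_sdiff
  rwa [Finset.union_sdiff_of_subset hW] at this

theorem cyc_susp {G : SimpleGraph β} {W F : Finset β} (h : Cyc K G W F) {s s' : β} (hs : s ∉ W) (hs' : s' ∉ W)
    (hss : s ≠ s') (h1 : ∀ y ∈ W, ¬ G.Adj s y) (h2 : ∀ y ∈ W, ¬ G.Adj s' y) :
    Cyc K G (W ∪ {s, s'}) (F ∪ {s}) := by
  classical
  have := cyc_ext h (T := {s, s'}) (by simp [hs, hs']) (by
    intro v hv x hx y hy hxv hyv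
    have key : ∀ a b, a ∈ W ∪ {s, s'} → x = b → v = a → True := fun _ _ _ _ _ => trivial
    simp only [Finset.mem_insert, Finset.mem_singleton, Finset.mem_union] at hv hx hy
    rcases hy with hy | hy
    · rcases hx with rfl | rfl
      · exact h1 y hy
      · exact h2 y hy
    · have : x = y := by
        rcases hv with rfl | rfl <;> rcases hx with rfl | rfl <;> rcases hy with rfl | rfl <;> tauto
      rw [this]; exact G.loopless.irrefl _) (v0 := s') (by simp)
  have e : ({s, s'} : Finset β).erase s' = {s} := by
    ext z; simp only [Finset.mem_erase, Finset.mem_insert, Finset.mem_singleton]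
    constructor
    · tauto
    · rintro rfl; exact ⟨hss, Or.inl rfl⟩
  rwa [e] at this

theorem crit0 {G : SimpleGraph β} {t : ℕ} (hF : Facts K G t) {W : Finset β} {x : β} (hx : x ∈ W) (hc : 2 ≤ W.card)
    (hf : ∀ w ∈ W, w ≠ x → G.Adj w x) : W.card ≤ t + 3 := by
  classical
  obtain ⟨y, hy, hyx⟩ := Finset.exists_mem_ne (by omega : 1 < W.card) x
  have h1 := cyc_susp (cyc_empty (K := K) G) (s := x) (s' := y) (by simp) (by simp) hyx.symm (by simp) (by simp)
  rw [Finset.empty_union, Finset.empty_union] at h1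
  have h2 := cyc_mono h1 (W' := W) (by intro z; simp only [Finset.mem_insert, Finset.mem_singleton]; rintro (rfl | rfl) <;> assumption)
  have := (crit hF h2 (fun w hw hwF => ⟨x, by simp, hf w hw (by simpa using hwF)⟩)).1
  simp only [Finset.card_singleton] at this
  omega

end cycsec
end AM

open Finsupp
set_option linter.unusedSectionVars false
set_option linter.unusedSimpArgs false
set_option linter.deprecated false
set_option linter.unusedVariables false
namespace AM

section bigsec
variable {K : Type} [Field K] {β : Type} [LinearOrder β] [Fintype β]

theorem lower_bound {G : SimpleGraph β} {t : ℕ} (hF : Facts K G t) : t + 4 ≤ Fintype.card β := by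
  classical
  obtain ⟨ht, c, hc⟩ := exists_cycle hF
  have hcc : ((Finset.range (t+3)).image c).card = t + 3 := by
    rw [Finset.card_image_of_injOn, Finset.card_range]
    intro i hi j hj he
    simp only [Finset.coe_range, Set.mem_Iio] at hi hj
    rcases lt_trichotomy i j with h1 | h1 | h1
    · exact absurd he (hc.inj i j h1 hj)
    · exact h1
    · exact absurd he.symm (hc.inj j i h1 hi)
  have h1 : t + 3 ≤ Fintype.card β := by rw [← hcc]; exact Finset.card_le_univ _
  by_contra hlt
  have h2 : Fintype.card β = t + 3 := by omega
  have h3 : (Finset.range (t+3)).image c = Finset.univ := by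
    rw [← Finset.card_eq_iff_eq_univ, hcc, h2]
  obtain ⟨W, hW⟩ := hF.ex2
  have h4 := NT_le hW
  have h5 : W.card ≤ t + 3 := by rw [← h2]; exact Finset.card_le_univ _
  have h6 : W.card ≠ t + 2 := by
    intro h
    rw [← h] at hW
    exact NT_top (Finset.card_pos.1 (by omega)) hW
  have h7 : W = Finset.univ := by rw [← Finset.card_eq_iff_eq_univ]; omega
  obtain ⟨f, hf1, hf2⟩ := NT_low (by omega) hW
  apply hf2
  have key : ∀ i, i < t + 3 → f (c i) = f (c 0) := by
    intro i
    induction i with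
    | zero => intro _; rfl
    | succ i ih =>
      intro hi
      rw [← ih (by omega)]
      refine (hf1 _ (by simp [h7]) _ (by simp [h7]) ?_).symm
      exact ((hc.adj i (i+1) (by omega) hi).2 (Or.inl rfl)).2
  refine ⟨f (c 0), fun x _ => ?_⟩
  have : x ∈ (Finset.range (t+3)).image c := by rw [h3]; simp
  obtain ⟨i, hi, rfl⟩ := Finset.mem_image.1 this
  exact key i (Finset.mem_range.1 hi)

theorem no_c4 {G : SimpleGraph β} {t : ℕ} (hF : Facts K G t) (ht : 2 ≤ t) {a b c d : β}
    (hab : Hh G a b) (hbc : Hh G b c) (hcd : Hh G c d) (hda : Hh G d a)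
    (hac : G.Adj a c) (hbd : G.Adj b d) : False := by
  have h : IC (Hh G) 4 (fun i => if i = 0 then a else if i = 1 then b else if i = 2 then c else d) := by
    constructor
    · intro i j hij hj
      have h2 := hac.ne
      have h3 := hbd.ne
      interval_cases j <;> interval_cases i <;> simp
      · exact hab.1
      · exact h2
      · exact hbc.1
      · exact hda.1.symm
      · exact h3
      · exact hcd.1
    · intro i j hij hj
      interval_cases j <;> interval_cases i <;> simp
      · exact hab
      · exact fun h => h.2 hac
      · exact hbc
      · exact hda.symm
      · exact fun h => h.2 hbd
      · exact hcd
  have := (ic_crit hF h le_rfl ∅ (by simp)).1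
  simp at this
  omega

theorem lem_L {G : SimpleGraph β} {t : ℕ} (hF : Facts K G t) {c : ℕ → β} (hc : IC (Hh G) (t+3) c)
    {r : β} (hr : ∀ i < t + 3, r ≠ c i) :
    ∀ N a j b, b - a ≤ N → a < j → j < b → b < t + 3 → Hh G r (c a) → ¬ Hh G r (c j) → Hh G r (c b) →
      t + 3 ≤ b - a + 2 := by
  intro N
  induction N with
  | zero => intro a j b h1 h2 h3; omega
  | succ N ih =>
    intro a j b hN haj hjb hb ha hj hbb
    by_cases h1 : ∃ l, a < l ∧ l < j ∧ Hh G r (c l)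
    · obtain ⟨l, h2, h3, h4⟩ := h1
      have := ih l j b (by omega) h3 hjb hb h4 hj hbb
      omega
    by_cases h2 : ∃ l, j < l ∧ l < b ∧ Hh G r (c l)
    · obtain ⟨l, h2, h3, h4⟩ := h2
      have := ih a j l (by omega) haj h2 (by omega) ha hj h4
      omega
    by_cases h0 : a = 0 ∧ b + 1 = t + 3
    · omega
    push Not at h1 h2
    have hic := ic_apex (G := G) (s := fun i => c (a + i)) (k := b - a) (v := r)
      (fun i k hik hk => hc.inj _ _ (by omega) (by omega))
      (fun i k hik hk => by
        rw [hc.adj _ _ (by omega) (by omega)]; omega)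
      (fun i hi => hr _ (by omega))
      (fun i hi => by
        constructor
        · intro h
          by_contra hcon
          rcases lt_trichotomy (a + i) j with h3 | h3 | h3
          · exact h1 _ (by omega) h3 h
          · rw [h3] at h; exact hj h
          · exact h2 _ h3 (by omega) h
        · rintro (rfl | rfl)
          · exact ha
          · rw [Nat.add_sub_cancel' (by omega)]; exact hbb)
    have := (ic_crit hF hic (by omega) ∅ (by simp)).1
    simpa using this

theorem one_nonadj {G : SimpleGraph β} {t : ℕ} (hF : Facts K G t) (ht : 1 ≤ t) {c : ℕ → β} (hc : IC (Hh G) (t+3) c)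
    {r r' : β} (hr : ∀ i < t + 3, r ≠ c i) (hr' : ∀ i < t + 3, r' ≠ c i) (hrr : r ≠ r') :
    (Hh G r (c 0) ∧ Hh G r (c 1)) ∨ (Hh G r' (c 0) ∧ Hh G r' (c 1)) := by
  classical
  by_contra hcon
  have key : ∀ r : β, (∀ i < t + 3, r ≠ c i) → ¬ (Hh G r (c 0) ∧ Hh G r (c 1)) → G.Adj r (c 0) ∨ G.Adj r (c 1) := by
    intro r hr h
    by_contra h'
    push Not at h'
    exact h ⟨⟨hr 0 (by omega), h'.1⟩, ⟨hr 1 (by omega), h'.2⟩⟩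
  push Not at hcon
  have := (ic_crit hF hc (by omega) {r, r'} (by
    intro x hx
    simp only [Finset.mem_insert, Finset.mem_singleton] at hx
    rcases hx with rfl | rfl
    · exact ⟨hr, key _ hr (fun h => hcon.1 h.1 h.2)⟩
    · exact ⟨hr', key _ hr' (fun h => hcon.2 h.1 h.2)⟩)).2
  rw [Finset.card_pair hrr] at this
  omega

/-- edge version at arbitrary index -/
theorem one_nonadj' {G : SimpleGraph β} {t : ℕ} (hF : Facts K G t) (ht : 1 ≤ t) {c : ℕ → β} (hc : IC (Hh G) (t+3) c)
    {r r' : β} (hr : ∀ i < t + 3, r ≠ c i) (hr' : ∀ i < t + 3, r' ≠ c i) (hrr : r ≠ r') (k : ℕ) (hk : k + 1 < t + 3) :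
    (Hh G r (c k) ∧ Hh G r (c (k+1))) ∨ (Hh G r' (c k) ∧ Hh G r' (c (k+1))) := by
  have := one_nonadj hF ht (ic_rot hc (k := k) (by omega) (by omega)) (r := r) (r' := r')
    (fun i hi => by split_ifs <;> exact hr _ (by omega)) (fun i hi => by split_ifs <;> exact hr' _ (by omega)) hrr
  rw [if_pos (by omega), if_pos (by omega), zero_add, add_comm 1 k] at this
  exact this

theorem one_nonadj'' {G : SimpleGraph β} {t : ℕ} (hF : Facts K G t) (ht : 1 ≤ t) {c : ℕ → β} (hc : IC (Hh G) (t+3) c)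
    {r r' : β} (hr : ∀ i < t + 3, r ≠ c i) (hr' : ∀ i < t + 3, r' ≠ c i) (hrr : r ≠ r') :
    (Hh G r (c (t+2)) ∧ Hh G r (c 0)) ∨ (Hh G r' (c (t+2)) ∧ Hh G r' (c 0)) := by
  have := one_nonadj hF ht (ic_rot hc (k := t+2) (by omega) (by omega)) (r := r) (r' := r')
    (fun i hi => by split_ifs <;> exact hr _ (by omega)) (fun i hi => by split_ifs <;> exact hr' _ (by omega)) hrr
  rw [if_pos (by omega), if_neg (by omega), zero_add, show 1 + (t + 2) - (t + 3) = 0 by omega] at this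
  exact this

theorem full_or {G : SimpleGraph β} {t : ℕ} (hF : Facts K G t) (ht : 2 ≤ t) {c : ℕ → β} (hc : IC (Hh G) (t+3) c)
    {r r' : β} (hr : ∀ i < t + 3, r ≠ c i) (hr' : ∀ i < t + 3, r' ≠ c i) (hrr : r ≠ r')
    {k l : ℕ} (hk : k < t + 3) (hl : l < t + 3) (h1 : ¬ Hh G r (c k)) (h2 : ¬ Hh G r' (c l)) : False := by
  -- rotate so that k = 0
  obtain ⟨c, hc, hr, hr', h1, l, hl, h2⟩ : ∃ c : ℕ → β, IC (Hh G) (t+3) c ∧ (∀ i < t + 3, r ≠ c i) ∧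
      (∀ i < t + 3, r' ≠ c i) ∧ ¬ Hh G r (c 0) ∧ ∃ l < t + 3, ¬ Hh G r' (c l) := by
    refine ⟨_, ic_rot hc hk (by omega), fun i hi => by split_ifs <;> exact hr _ (by omega),
      fun i hi => by split_ifs <;> exact hr' _ (by omega), ?_, ?_⟩
    · rw [if_pos (by omega), zero_add]; exact h1
    · by_cases hkl : k ≤ l
      · refine ⟨l - k, by omega, ?_⟩
        rw [if_pos (by omega), Nat.sub_add_cancel hkl]; exact h2
      · refine ⟨l + (t + 3) - k, by omega, ?_⟩
        rw [if_neg (by omega), show l + (t + 3) - k + k - (t + 3) = l by omega]; exact h2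
  have e0 : Hh G r' (c 0) ∧ Hh G r' (c 1) := by
    rcases one_nonadj' hF (by omega) hc hr hr' hrr 0 (by omega) with h | h
    · exact absurd h.1 h1
    · exact h
  have e1 : Hh G r' (c (t+2)) := by
    rcases one_nonadj'' hF (by omega) hc hr hr' hrr with h | h
    · exact absurd h.2 h1
    · exact h.1
  have l0 : l ≠ 0 := by rintro rfl; exact h2 e0.1
  have l1 : l ≠ 1 := by rintro rfl; exact h2 e0.2
  have l2 : l ≠ t + 2 := by rintro rfl; exact h2 e1
  have hn : ∀ i, 2 ≤ i → i ≤ t + 1 → ¬ Hh G r' (c i) := by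
    intro i hi1 hi2 hi
    rcases lt_trichotomy l i with h | h | h
    · have := lem_L hF hc hr' _ 1 l i le_rfl (by omega) h (by omega) e0.2 h2 hi
      omega
    · subst h; exact h2 hi
    · have := lem_L hF hc hr' _ i l (t+2) le_rfl h (by omega) (by omega) hi h2 e1
      omega
  have r1 : Hh G r (c 1) := by
    rcases one_nonadj' hF (by omega) hc hr hr' hrr 1 (by omega) with h | h
    · exact h.1
    · exact absurd h.2 (hn 2 (by omega) (by omega))
  have r2 : Hh G r (c (t+2)) := by
    rcases one_nonadj' hF (by omega) hc hr hr' hrr (t+1) (by omega) with h | h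
    · exact h.2
    · exact absurd h.1 (hn (t+1) (by omega) (by omega))
  refine no_c4 hF ht r1 ((hc.adj 0 1 (by omega) (by omega)).2 (by omega)).symm
    ((hc.adj 0 (t+2) (by omega) (by omega)).2 (by omega)) r2.symm ?_ ?_
  · by_contra h; exact h1 ⟨hr 0 (by omega), h⟩
  · by_contra h
    have := (hc.adj 1 (t+2) (by omega) (by omega)).1 ⟨hc.inj _ _ (by omega) (by omega), h⟩
    omega

theorem upper_big {G : SimpleGraph β} {t : ℕ} (hF : Facts K G t) (ht : 2 ≤ t)
    (hiso : ∀ v, ∃ w, G.Adj v w) : Fintype.card β ≤ t + 5 := by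
  classical
  by_contra hn
  obtain ⟨_, c, hc⟩ := exists_cycle hF
  let C := (Finset.range (t+3)).image c
  have hCc : C.card ≤ t + 3 := by
    have := Finset.card_image_le (s := Finset.range (t+3)) (f := c)
    rwa [Finset.card_range] at this
  let R := Finset.univ \ C
  have hRc : 3 ≤ R.card := by
    have : R.card = Fintype.card β - C.card := by
      rw [Finset.card_sdiff_of_subset (Finset.subset_univ _), Finset.card_univ]
    omega
  have hR : ∀ r ∈ R, ∀ i < t + 3, r ≠ c i := by
    rintro r hr i hi rfl
    exact (Finset.mem_sdiff.1 hr).2 (Finset.mem_image_of_mem _ (Finset.mem_range.2 hi))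
  have hR' : ∀ r, r ∉ R → ∃ i < t + 3, r = c i := by
    intro r hr
    have : r ∈ C := by
      by_contra h; exact hr (Finset.mem_sdiff.2 ⟨Finset.mem_univ _, h⟩)
    obtain ⟨i, hi, rfl⟩ := Finset.mem_image.1 this
    exact ⟨i, Finset.mem_range.1 hi, rfl⟩
  have notadj : ∀ i j, i + 1 < j → j < t + 3 → ¬ (i = 0 ∧ j = t + 2) → G.Adj (c i) (c j) := by
    intro i j h1 h2 h3
    by_contra h
    have := (hc.adj i j (by omega) h2).1 ⟨hc.inj _ _ (by omega) h2, h⟩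
    omega
  let Full : β → Prop := fun r => ∀ i < t + 3, Hh G r (c i)
  have hfull : ∀ r ∈ R, ∀ r' ∈ R, r ≠ r' → Full r ∨ Full r' := by
    intro r hr r' hr' hrr
    by_contra hcon
    simp only [Full] at hcon
    push Not at hcon
    obtain ⟨⟨k, hk, h1⟩, ⟨l, hl, h2⟩⟩ := hcon
    exact full_or hF ht hc (hR r hr) (hR r' hr') hrr hk hl h1 h2
  have hff : ∀ u u', Full u → Full u' → ¬ G.Adj u u' := by
    intro u u' hu hu' h
    exact no_c4 hF ht (hu 0 (by omega)) (hu' 0 (by omega)).symm (hu' 2 (by omega)) (hu 2 (by omega)).symm h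
      (notadj 0 2 (by omega) (by omega) (by omega))
  -- each full is adjacent to the unique nonfull
  have hfx : ∀ u ∈ R, Full u → ∃ x ∈ R, ¬ Full x ∧ G.Adj u x := by
    intro u hu hfu
    obtain ⟨x, hx⟩ := hiso u
    have hxR : x ∈ R := by
      by_contra h
      obtain ⟨i, hi, rfl⟩ := hR' x h
      exact (hfu i hi).2 hx
    exact ⟨x, hxR, fun h => hff u x hfu h hx, hx⟩
  obtain ⟨a, b, hab⟩ : ∃ a b, a ∈ R ∧ b ∈ R ∧ a ≠ b := by
    obtain ⟨a, ha, b, hb, h⟩ := Finset.one_lt_card.1 (by omega : 1 < R.card)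
    exact ⟨a, b, ha, hb, h⟩
  obtain ⟨u, hu, hfu⟩ : ∃ u ∈ R, Full u := by
    rcases hfull a hab.1 b hab.2.1 hab.2.2 with h | h
    · exact ⟨a, hab.1, h⟩
    · exact ⟨b, hab.2.1, h⟩
  obtain ⟨x, hx, hxf, hux⟩ := hfx u hu hfu
  have hRx : ∀ y ∈ R, y ≠ x → G.Adj y x := by
    intro y hy hyx
    have hfy : Full y := by
      rcases hfull y hy x hx hyx with h | h
      · exact h
      · exact absurd h hxf
    obtain ⟨z, hz, hzf, hyz⟩ := hfx y hy hfy
    have : z = x := by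
      by_contra h
      rcases hfull z hz x hx h with h | h
      · exact hzf h
      · exact hxf h
    rwa [this] at hyz
  have hcl : ∀ p q, p < t + 3 → q < t + 3 → Hh G x (c p) → Hh G x (c q) → ¬ G.Adj (c p) (c q) := by
    intro p q hp hq h1 h2 h3
    exact no_c4 hF ht h1 (hfu p hp).symm (hfu q hq) h2.symm hux.symm h3
  -- the nonneighbours lie in a pair
  obtain ⟨p, q, hpq⟩ : ∃ p q : β, ∀ i < t + 3, Hh G x (c i) → c i = p ∨ c i = q := by
    by_cases hex : ∃ i, i < t + 3 ∧ Hh G x (c i)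
    · let i := Nat.find hex
      have hi := Nat.find_spec hex
      have himin : ∀ j, j < t + 3 → Hh G x (c j) → i ≤ j := fun j h1 h2 => Nat.find_min' hex ⟨h1, h2⟩
      change i < t + 3 ∧ Hh G x (c i) at hi
      by_cases hi1 : i + 1 < t + 3 ∧ Hh G x (c (i+1))
      · refine ⟨c i, c (i+1), fun j hj hxj => ?_⟩
        have h1 := himin j hj hxj
        by_contra hcon
        push Not at hcon
        have h2 : j ≠ i := by rintro rfl; exact hcon.1 rfl
        have h3 : j ≠ i + 1 := by rintro rfl; exact hcon.2 rfl
        by_cases h4 : i = 0 ∧ j = t + 2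
        · exact hcl (i+1) j hi1.1 hj hi1.2 hxj (notadj _ _ (by omega) hj (by omega))
        · exact hcl i j hi.1 hj hi.2 hxj (notadj _ _ (by omega) hj (by omega))
      · refine ⟨c i, c (t+2), fun j hj hxj => ?_⟩
        have h1 := himin j hj hxj
        by_contra hcon
        push Not at hcon
        have h2 : j ≠ i := by rintro rfl; exact hcon.1 rfl
        have h3 : j ≠ t + 2 := by rintro rfl; exact hcon.2 rfl
        have h5 : j ≠ i + 1 := by rintro rfl; exact hi1 ⟨hj, hxj⟩
        exact hcl i j hi.1 hj hi.2 hxj (notadj _ _ (by omega) hj (by omega))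
    · exact ⟨x, x, fun i hi h => absurd ⟨i, hi, h⟩ hex⟩
  have hxp : ∀ y, y ≠ x → y ≠ p → y ≠ q → G.Adj y x := by
    intro y hyx hyp hyq
    by_cases hy : y ∈ R
    · exact hRx y hy hyx
    · obtain ⟨i, hi, rfl⟩ := hR' y hy
      by_contra h
      rcases hpq i hi ⟨hyx.symm, fun h' => h h'.symm⟩ with h | h
      · exact hyp h
      · exact hyq h
  let W : Finset β := insert x (Finset.univ \ {p, q})
  have hWc : t + 4 ≤ W.card := by
    have h1 : (Finset.univ \ {p, q} : Finset β).card ≤ W.card := Finset.card_le_card (Finset.subset_insert _ _)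
    rw [Finset.card_sdiff_of_subset (Finset.subset_univ _), Finset.card_univ] at h1
    have := Finset.card_le_two (a := p) (b := q)
    omega
  have := crit0 hF (W := W) (x := x) (Finset.mem_insert_self _ _) (by omega) (by
    intro w hw hwx
    rcases Finset.mem_insert.1 hw with h | h
    · exact absurd h hwx
    · simp only [Finset.mem_sdiff, Finset.mem_univ, Finset.mem_insert, Finset.mem_singleton, true_and, not_or] at h
      exact hxp w hwx h.1 h.2)
  omega

end bigsec
end AM

open Finsupp
set_option linter.unusedSectionVars false
set_option linter.unusedSimpArgs false
set_option linter.deprecated false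
set_option linter.unusedVariables false
namespace AM

section smallsec
variable {K : Type} [Field K] {β : Type} [LinearOrder β] [Fintype β]

/-- two disjoint edges with no edge in between -/
structure E2 (G : SimpleGraph β) (a a' b b' : β) : Prop where
  h1 : G.Adj a a'
  h2 : G.Adj b b'
  h3 : ¬ G.Adj a b
  h4 : ¬ G.Adj a b'
  h5 : ¬ G.Adj a' b
  h6 : ¬ G.Adj a' b'

theorem E2.swapL {G : SimpleGraph β} {a a' b b' : β} (h : E2 G a a' b b') : E2 G a' a b b' :=
  ⟨h.h1.symm, h.h2, h.h5, h.h6, h.h3, h.h4⟩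
theorem E2.swapR {G : SimpleGraph β} {a a' b b' : β} (h : E2 G a a' b b') : E2 G a a' b' b :=
  ⟨h.h1, h.h2.symm, h.h4, h.h3, h.h6, h.h5⟩
theorem E2.flip {G : SimpleGraph β} {a a' b b' : β} (h : E2 G a a' b b') : E2 G b b' a a' :=
  ⟨h.h2, h.h1, fun e => h.h3 e.symm, fun e => h.h5 e.symm, fun e => h.h4 e.symm, fun e => h.h6 e.symm⟩
theorem E2.ne {G : SimpleGraph β} {a a' b b' : β} (h : E2 G a a' b b') :
    a ≠ a' ∧ b ≠ b' ∧ a ≠ b ∧ a ≠ b' ∧ a' ≠ b ∧ a' ≠ b' :=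
  ⟨h.h1.ne, h.h2.ne, fun e => h.h4 (e ▸ h.h2), fun e => h.h3 (e ▸ h.h2.symm),
    fun e => h.h6 (e ▸ h.h2), fun e => h.h5 (e ▸ h.h2.symm)⟩

theorem cyc_e1 {G : SimpleGraph β} {a a' : β} (h : a ≠ a') : Cyc K G {a, a'} {a} := by
  have h1 := cyc_susp (cyc_empty (K := K) G) (s := a) (s' := a') (by simp) (by simp) h (by simp) (by simp)
  rwa [Finset.empty_union, Finset.empty_union] at h1

theorem cyc_e2 {G : SimpleGraph β} {a a' b b' : β} (h : E2 G a a' b b') :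
    Cyc K G ({a, a'} ∪ {b, b'}) ({a} ∪ {b}) := by
  obtain ⟨n1, n2, n3, n4, n5, n6⟩ := h.ne
  refine cyc_susp (cyc_e1 n1) ?_ ?_ n2 ?_ ?_
  · simp only [Finset.mem_insert, Finset.mem_singleton, not_or]; exact ⟨n3.symm, n5.symm⟩
  · simp only [Finset.mem_insert, Finset.mem_singleton, not_or]; exact ⟨n4.symm, n6.symm⟩
  · simp only [Finset.mem_insert, Finset.mem_singleton]
    rintro y (rfl | rfl)
    · exact h.flip.h3
    · exact h.flip.h4
  · simp only [Finset.mem_insert, Finset.mem_singleton]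
    rintro y (rfl | rfl)
    · exact h.flip.h5
    · exact h.flip.h6

theorem cyc_e3 {G : SimpleGraph β} {a a' b b' c c' : β} (h : E2 G a a' b b') (hac : E2 G a a' c c')
    (hbc : E2 G b b' c c') :
    Cyc K G ({a, a'} ∪ {b, b'} ∪ {c, c'}) ({a} ∪ {b} ∪ {c}) := by
  obtain ⟨n1, n2, n3, n4, n5, n6⟩ := hac.ne
  obtain ⟨m1, m2, m3, m4, m5, m6⟩ := hbc.ne
  refine cyc_susp (cyc_e2 h) ?_ ?_ n2 ?_ ?_
  · simp only [Finset.mem_insert, Finset.mem_singleton, Finset.mem_union, not_or]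
    exact ⟨⟨n3.symm, n5.symm⟩, m3.symm, m5.symm⟩
  · simp only [Finset.mem_insert, Finset.mem_singleton, Finset.mem_union, not_or]
    exact ⟨⟨n4.symm, n6.symm⟩, m4.symm, m6.symm⟩
  · simp only [Finset.mem_insert, Finset.mem_singleton, Finset.mem_union]
    rintro y ((rfl | rfl) | rfl | rfl)
    · exact hac.flip.h3
    · exact hac.flip.h4
    · exact hbc.flip.h3
    · exact hbc.flip.h4
  · simp only [Finset.mem_insert, Finset.mem_singleton, Finset.mem_union]
    rintro y ((rfl | rfl) | rfl | rfl)
    · exact hac.flip.h5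
    · exact hac.flip.h6
    · exact hbc.flip.h5
    · exact hbc.flip.h6

theorem cyc_e4 {G : SimpleGraph β} {a a' b b' c c' d d' : β} (h : E2 G a a' b b') (hac : E2 G a a' c c')
    (hbc : E2 G b b' c c') (had : E2 G a a' d d') (hbd : E2 G b b' d d') (hcd : E2 G c c' d d') :
    Cyc K G ({a, a'} ∪ {b, b'} ∪ {c, c'} ∪ {d, d'}) ({a} ∪ {b} ∪ {c} ∪ {d}) := by
  obtain ⟨n1, n2, n3, n4, n5, n6⟩ := had.ne
  obtain ⟨m1, m2, m3, m4, m5, m6⟩ := hbd.ne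
  obtain ⟨k1, k2, k3, k4, k5, k6⟩ := hcd.ne
  refine cyc_susp (cyc_e3 h hac hbc) ?_ ?_ n2 ?_ ?_
  · simp only [Finset.mem_insert, Finset.mem_singleton, Finset.mem_union, not_or]
    exact ⟨⟨⟨n3.symm, n5.symm⟩, m3.symm, m5.symm⟩, k3.symm, k5.symm⟩
  · simp only [Finset.mem_insert, Finset.mem_singleton, Finset.mem_union, not_or]
    exact ⟨⟨⟨n4.symm, n6.symm⟩, m4.symm, m6.symm⟩, k4.symm, k6.symm⟩
  · simp only [Finset.mem_insert, Finset.mem_singleton, Finset.mem_union]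
    rintro y (((rfl | rfl) | rfl | rfl) | rfl | rfl)
    · exact had.flip.h3
    · exact had.flip.h4
    · exact hbd.flip.h3
    · exact hbd.flip.h4
    · exact hcd.flip.h3
    · exact hcd.flip.h4
  · simp only [Finset.mem_insert, Finset.mem_singleton, Finset.mem_union]
    rintro y (((rfl | rfl) | rfl | rfl) | rfl | rfl)
    · exact had.flip.h5
    · exact had.flip.h6
    · exact hbd.flip.h5
    · exact hbd.flip.h6
    · exact hcd.flip.h5
    · exact hcd.flip.h6

theorem card_list (l : List β) (h : l.Nodup) : l.toFinset.card = l.length := List.toFinset_card_of_nodup h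

/-- criterion in list form (t = 1) -/
theorem crit_l {G : SimpleGraph β} (hF : Facts K G 1) {W F : Finset β} (h : Cyc K G W F)
    (l f : List β) (hl : l.Nodup) (hW : W ⊆ l.toFinset) (hfl : F.card ≤ f.length) (hff : f.toFinset ⊆ F)
    (hf : ∀ w ∈ l, w ∉ F → ∃ x ∈ f, G.Adj w x) : l.length ≤ f.length + 3 := by
  have h1 := (crit hF (cyc_mono h hW) (fun w hw hwF => by
    obtain ⟨x, hx, hh⟩ := hf w (List.mem_toFinset.1 hw) hwF
    exact ⟨x, hff (List.mem_toFinset.2 hx), hh⟩)).1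
  rw [card_list l hl] at h1
  omega

theorem no_e3_touch {G : SimpleGraph β} (hF : Facts K G 1) {a a' b b' c c' r : β} (h : E2 G a a' b b')
    (hac : E2 G a a' c c') (hbc : E2 G b b' c c') (hr : r ≠ a ∧ r ≠ a' ∧ r ≠ b ∧ r ≠ b' ∧ r ≠ c ∧ r ≠ c')
    (hra : G.Adj r a) : False := by
  have h1 := h.ne
  have h2 := hac.ne
  have h3 := hbc.ne
  have := crit_l hF (cyc_e3 h hac hbc) [r, a, a', b, b', c, c'] [a, b, c] (by
      simp only [List.nodup_cons, List.mem_cons, List.not_mem_nil, or_false, not_or, List.nodup_nil, and_true, not_false_eq_true]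
      tauto) (by
      intro x; simp only [Finset.mem_union, Finset.mem_insert, Finset.mem_singleton, List.mem_toFinset, List.mem_cons, List.not_mem_nil]; tauto)
    (by
      refine (Finset.card_union_le _ _).trans ?_
      refine (Nat.add_le_add_right (Finset.card_union_le _ _) _).trans ?_
      simp)
    (by intro x; simp only [Finset.mem_union, Finset.mem_insert, Finset.mem_singleton, List.mem_toFinset, List.mem_cons, List.not_mem_nil]; tauto)
    (by
      intro w hw hwF
      simp only [Finset.mem_union, Finset.mem_singleton, not_or, List.mem_cons, List.not_mem_nil, or_false] at hw hwF
      rcases hw with rfl | rfl | rfl | rfl | rfl | rfl | rfl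
      · exact ⟨a, by simp, hra⟩
      · exact absurd rfl hwF.1.1
      · exact ⟨a, by simp, h.h1.symm⟩
      · exact absurd rfl hwF.1.2
      · exact ⟨b, by simp, h.h2.symm⟩
      · exact absurd rfl hwF.2
      · exact ⟨c, by simp, hac.h2.symm⟩)
  simp at this

theorem no_e3 {G : SimpleGraph β} (hF : Facts K G 1) (hiso : ∀ v, ∃ w, G.Adj v w) (hn : 7 ≤ Fintype.card β)
    {a a' b b' c c' : β} (h : E2 G a a' b b')
    (hac : E2 G a a' c c') (hbc : E2 G b b' c c') : False := by
  have touch : ∀ r, r ≠ a ∧ r ≠ a' ∧ r ≠ b ∧ r ≠ b' ∧ r ≠ c ∧ r ≠ c' →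
      ¬ G.Adj r a ∧ ¬ G.Adj r a' ∧ ¬ G.Adj r b ∧ ¬ G.Adj r b' ∧ ¬ G.Adj r c ∧ ¬ G.Adj r c' := by
    intro r hr
    refine ⟨no_e3_touch hF h hac hbc hr, no_e3_touch hF h.swapL hac.swapL hbc (by tauto),
      no_e3_touch hF h.flip hbc hac (by tauto), no_e3_touch hF h.flip.swapL hbc.swapL hac (by tauto),
      no_e3_touch hF hac.flip hbc.flip h (by tauto), no_e3_touch hF hac.flip.swapL hbc.flip.swapL h (by tauto)⟩
  obtain ⟨r, hr⟩ : ∃ r, r ∉ ([a, a', b, b', c, c'] : List β).toFinset := by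
    by_contra hcon
    push Not at hcon
    have h1 : Finset.univ ⊆ ([a, a', b, b', c, c'] : List β).toFinset := fun x _ => hcon x
    have h2 := Finset.card_le_card h1
    have h3 := List.toFinset_card_le ([a, a', b, b', c, c'] : List β)
    rw [Finset.card_univ] at h2
    simp only [List.length_cons, List.length_nil] at h3
    omega
  simp only [List.mem_toFinset, List.mem_cons, List.not_mem_nil, or_false, not_or] at hr
  have tr := touch r hr
  obtain ⟨s, hs⟩ := hiso r
  have hs' : s ≠ a ∧ s ≠ a' ∧ s ≠ b ∧ s ≠ b' ∧ s ≠ c ∧ s ≠ c' := by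
    refine ⟨?_, ?_, ?_, ?_, ?_, ?_⟩ <;> (rintro rfl; tauto)
  have ts := touch s hs'
  have hrs := hs.ne
  have ea : E2 G a a' r s := ⟨h.h1, hs, fun e => tr.1 e.symm, fun e => ts.1 e.symm, fun e => tr.2.1 e.symm,
    fun e => ts.2.1 e.symm⟩
  have eb : E2 G b b' r s := ⟨h.h2, hs, fun e => tr.2.2.1 e.symm, fun e => ts.2.2.1 e.symm,
    fun e => tr.2.2.2.1 e.symm, fun e => ts.2.2.2.1 e.symm⟩
  have ec : E2 G c c' r s := ⟨hac.h2, hs, fun e => tr.2.2.2.2.1 e.symm, fun e => ts.2.2.2.2.1 e.symm,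
    fun e => tr.2.2.2.2.2 e.symm, fun e => ts.2.2.2.2.2 e.symm⟩
  have h1 := h.ne
  have h2 := hac.ne
  have h3 := hbc.ne
  have := crit_l hF (cyc_e4 h hac hbc ea eb ec) [r, s, a, a', b, b', c, c'] [a, b, c, r] (by
      simp only [List.nodup_cons, List.mem_cons, List.not_mem_nil, or_false, not_or, List.nodup_nil, and_true, not_false_eq_true]
      tauto) (by
      intro x; simp only [Finset.mem_union, Finset.mem_insert, Finset.mem_singleton, List.mem_toFinset, List.mem_cons, List.not_mem_nil]; tauto)
    (by
      refine (Finset.card_union_le _ _).trans ?_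
      refine (Nat.add_le_add_right (Finset.card_union_le _ _) _).trans ?_
      refine (Nat.add_le_add_right (Nat.add_le_add_right (Finset.card_union_le _ _) _) _).trans ?_
      simp)
    (by intro x; simp only [Finset.mem_union, Finset.mem_insert, Finset.mem_singleton, List.mem_toFinset, List.mem_cons, List.not_mem_nil]; tauto)
    (by
      intro w hw hwF
      simp only [Finset.mem_union, Finset.mem_singleton, not_or, List.mem_cons, List.not_mem_nil, or_false] at hw hwF
      rcases hw with rfl | rfl | rfl | rfl | rfl | rfl | rfl | rfl
      · exact absurd rfl hwF.2
      · exact ⟨r, by simp, hs.symm⟩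
      · exact absurd rfl hwF.1.1.1
      · exact ⟨a, by simp, h.h1.symm⟩
      · exact absurd rfl hwF.1.1.2
      · exact ⟨b, by simp, h.h2.symm⟩
      · exact absurd rfl hwF.1.2
      · exact ⟨c, by simp, hac.h2.symm⟩)
  simp at this

theorem P1 {G : SimpleGraph β} (hF : Facts K G 1) {a a' b b' r r' : β} (h : E2 G a a' b b')
    (hr : r ≠ a ∧ r ≠ a' ∧ r ≠ b ∧ r ≠ b') (hr' : r' ≠ a ∧ r' ≠ a' ∧ r' ≠ b ∧ r' ≠ b')
    (h1 : G.Adj r a ∨ G.Adj r b) (h2 : G.Adj r' a ∨ G.Adj r' b) : r = r' := by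
  by_contra hrr
  have hn := h.ne
  have := crit_l hF (cyc_e2 h) [r, r', a, a', b, b'] [a, b] (by
      simp only [List.nodup_cons, List.mem_cons, List.not_mem_nil, or_false, not_or, List.nodup_nil, and_true, not_false_eq_true]
      tauto) (by
      intro x; simp only [Finset.mem_union, Finset.mem_insert, Finset.mem_singleton, List.mem_toFinset, List.mem_cons, List.not_mem_nil]; tauto)
    (by
      refine (Finset.card_union_le _ _).trans ?_
      simp)
    (by intro x; simp only [Finset.mem_union, Finset.mem_insert, Finset.mem_singleton, List.mem_toFinset, List.mem_cons, List.not_mem_nil]; tauto)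
    (by
      intro w hw hwF
      simp only [Finset.mem_union, Finset.mem_singleton, not_or, List.mem_cons, List.not_mem_nil, or_false] at hw hwF
      rcases hw with rfl | rfl | rfl | rfl | rfl | rfl
      · rcases h1 with h1 | h1
        · exact ⟨a, by simp, h1⟩
        · exact ⟨b, by simp, h1⟩
      · rcases h2 with h1 | h1
        · exact ⟨a, by simp, h1⟩
        · exact ⟨b, by simp, h1⟩
      · exact absurd rfl hwF.1
      · exact ⟨a, by simp, h.h1.symm⟩
      · exact absurd rfl hwF.2
      · exact ⟨b, by simp, h.h2.symm⟩)
  simp at this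

theorem no_c5 {G : SimpleGraph β} (hF : Facts K G 1) {a a' s2 r s b b' : β}
    (e1 : G.Adj a a') (e2 : G.Adj a' s2) (e3 : G.Adj s2 r) (e4 : G.Adj r s) (e5 : G.Adj s a)
    (n1 : ¬ G.Adj a s2) (n2 : ¬ G.Adj a r) (n3 : ¬ G.Adj a' r) (n4 : ¬ G.Adj a' s) (n5 : ¬ G.Adj s2 s)
    (eb : G.Adj b b')
    (hb : ¬ G.Adj b a ∧ ¬ G.Adj b a' ∧ ¬ G.Adj b s2 ∧ ¬ G.Adj b r ∧ ¬ G.Adj b s)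
    (hb' : ¬ G.Adj b' a ∧ ¬ G.Adj b' a' ∧ ¬ G.Adj b' s2 ∧ ¬ G.Adj b' r ∧ ¬ G.Adj b' s) : False := by
  have hnd : ([a, a', s2, r, s, b, b'] : List β).Nodup := by
    have l := fun x => G.loopless.irrefl x
    have c := fun x y => G.adj_comm x y
    simp only [List.nodup_cons, List.mem_cons, List.not_mem_nil, or_false, not_or, List.nodup_nil, and_true, not_false_eq_true]
    refine ⟨⟨?_, ?_, ?_, ?_, ?_, ?_⟩, ⟨?_, ?_, ?_, ?_, ?_⟩, ⟨?_, ?_, ?_, ?_⟩, ⟨?_, ?_, ?_⟩, ⟨?_, ?_⟩, ?_⟩ <;>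
      (intro hx; subst hx; grind [SimpleGraph.adj_comm])
  have hnd' := hnd
  simp only [List.nodup_cons, List.mem_cons, List.not_mem_nil, or_false, not_or, List.nodup_nil, and_true, not_false_eq_true] at hnd'
  obtain ⟨⟨d1, d2, d3, d4, d5, d6⟩, ⟨d7, d8, d9, d10, d11⟩, ⟨d12, d13, d14, d15⟩, ⟨d16, d17, d18⟩, ⟨d19, d20⟩, d21⟩ := hnd'
  have hne : ∀ x y z : β, z ≠ a → z ≠ s2 → (z = x ∨ z = y) → ({x, y} : Finset β) ≠ {a, s2} := by
    intro x y z h1 h2 h3 h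
    have : z ∈ ({a, s2} : Finset β) := by rw [← h]; rcases h3 with rfl | rfl <;> simp
    simp only [Finset.mem_insert, Finset.mem_singleton] at this
    tauto
  have hcyc : Cyc K G {a, a', s2, r, s} {a, s2} := by
    refine cyc_poly (by simp) (by simp) d2 n1 ?_
    refine Relation.ReflTransGen.head (b := r) ⟨by simp, by simp, n2, hne _ _ r (Ne.symm d3) (Ne.symm d12) (by simp)⟩ ?_
    refine Relation.ReflTransGen.head (b := a') ⟨by simp, by simp, fun e => n3 e.symm, hne _ _ r (Ne.symm d3) (Ne.symm d12) (by simp)⟩ ?_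
    refine Relation.ReflTransGen.head (b := s) ⟨by simp, by simp, n4, hne _ _ s (Ne.symm d4) (Ne.symm d13) (by simp)⟩ ?_
    exact Relation.ReflTransGen.single ⟨by simp, by simp, fun e => n5 e.symm, hne _ _ s (Ne.symm d4) (Ne.symm d13) (by simp)⟩
  have h2 := cyc_susp hcyc (s := b) (s' := b')
    (by simp only [Finset.mem_insert, Finset.mem_singleton, not_or]; exact ⟨Ne.symm d5, Ne.symm d10, Ne.symm d14, Ne.symm d17, Ne.symm d19⟩)
    (by simp only [Finset.mem_insert, Finset.mem_singleton, not_or]; exact ⟨Ne.symm d6, Ne.symm d11, Ne.symm d15, Ne.symm d18, Ne.symm d20⟩)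
    d21
    (by
      simp only [Finset.mem_insert, Finset.mem_singleton]
      rintro y (rfl | rfl | rfl | rfl | rfl) <;> tauto)
    (by
      simp only [Finset.mem_insert, Finset.mem_singleton]
      rintro y (rfl | rfl | rfl | rfl | rfl) <;> tauto)
  have := crit_l hF h2 [a, a', s2, r, s, b, b'] [a, s2, b] hnd (by
      intro x; simp only [Finset.mem_union, Finset.mem_insert, Finset.mem_singleton, List.mem_toFinset, List.mem_cons, List.not_mem_nil]; tauto)
    (by
      refine (Finset.card_union_le _ _).trans ?_
      have := Finset.card_le_two (a := a) (b := s2)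
      simp; omega)
    (by intro x; simp only [Finset.mem_union, Finset.mem_insert, Finset.mem_singleton, List.mem_toFinset, List.mem_cons, List.not_mem_nil]; tauto)
    (by
      intro w hw hwF
      simp only [Finset.mem_union, Finset.mem_singleton, Finset.mem_insert, not_or, List.mem_cons, List.not_mem_nil, or_false] at hw hwF
      rcases hw with rfl | rfl | rfl | rfl | rfl | rfl | rfl
      · exact absurd rfl hwF.1.1
      · exact ⟨a, by simp, e1.symm⟩
      · exact absurd rfl hwF.1.2
      · exact ⟨s2, by simp, e3.symm⟩
      · exact ⟨a, by simp, e5⟩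
      · exact absurd rfl hwF.2
      · exact ⟨b, by simp, eb.symm⟩)
  simp at this

/-- deg bound (t = 1) -/
theorem no_deg4 {G : SimpleGraph β} (hF : Facts K G 1) {s x1 x2 x3 x4 : β} (hnd : [x1, x2, x3, x4].Nodup)
    (h1 : G.Adj x1 s) (h2 : G.Adj x2 s) (h3 : G.Adj x3 s) (h4 : G.Adj x4 s) : False := by
  have hnd2 : [s, x1, x2, x3, x4].Nodup := by
    rw [List.nodup_cons]
    refine ⟨?_, hnd⟩
    simp only [List.mem_cons, List.not_mem_nil, or_false, not_or]
    exact ⟨h1.ne.symm, h2.ne.symm, h3.ne.symm, h4.ne.symm⟩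
  have hc := card_list _ hnd2
  have := crit0 hF (W := [s, x1, x2, x3, x4].toFinset) (x := s) (by simp) (by rw [hc]; simp) (by
    intro w hw hws
    simp only [List.mem_toFinset, List.mem_cons, List.not_mem_nil, or_false] at hw
    rcases hw with rfl | rfl | rfl | rfl | rfl
    · exact absurd rfl hws
    all_goals assumption)
  rw [hc] at this
  simp at this

theorem small_core {G : SimpleGraph β} (hF : Facts K G 1) (hiso : ∀ v, ∃ w, G.Adj v w) (hn : 7 ≤ Fintype.card β)
    {a a' b b' r s : β} (h : E2 G a a' b b')
    (hr : r ≠ a ∧ r ≠ a' ∧ r ≠ b ∧ r ≠ b')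
    (ur : ¬ G.Adj r a ∧ ¬ G.Adj r a' ∧ ¬ G.Adj r b ∧ ¬ G.Adj r b')
    (hrs : G.Adj r s) (hs : s ≠ a ∧ s ≠ a' ∧ s ≠ b ∧ s ≠ b') (hsa : G.Adj s a) : False := by
  have hRab : ∀ q, q ≠ a ∧ q ≠ a' ∧ q ≠ b ∧ q ≠ b' → q ≠ s → ¬ G.Adj q a ∧ ¬ G.Adj q b ∧ ¬ G.Adj q b' := by
    intro q hq hqs
    refine ⟨fun e => hqs (P1 hF h hq hs (Or.inl e) (Or.inl hsa)), fun e => hqs (P1 hF h hq hs (Or.inr e) (Or.inl hsa)),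
      fun e => hqs (P1 hF h.swapR (by tauto) (by tauto) (Or.inr e) (Or.inl hsa))⟩
  have hne := h.ne
  obtain ⟨r2, hr2⟩ : ∃ r2, r2 ∉ ([a, a', b, b', r, s] : List β).toFinset := by
    by_contra hcon
    push Not at hcon
    have h1 : Finset.univ ⊆ ([a, a', b, b', r, s] : List β).toFinset := fun x _ => hcon x
    have h2 := Finset.card_le_card h1
    have h3 := List.toFinset_card_le ([a, a', b, b', r, s] : List β)
    rw [Finset.card_univ] at h2
    simp only [List.length_cons, List.length_nil] at h3
    omega
  simp only [List.mem_toFinset, List.mem_cons, List.not_mem_nil, or_false, not_or] at hr2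
  have k2 := hRab r2 (by tauto) (by tauto)
  have untouched : ∀ p q, G.Adj p q → (¬ G.Adj p a ∧ ¬ G.Adj p b ∧ ¬ G.Adj p b') → (¬ G.Adj q a ∧ ¬ G.Adj q b ∧ ¬ G.Adj q b') →
      ¬ G.Adj p a' → ¬ G.Adj q a' → False := by
    intro p q hpq hp hq hp' hq'
    exact no_e3 hF hiso hn h (c := p) (c' := q)
      ⟨h.h1, hpq, fun e => hp.1 e.symm, fun e => hq.1 e.symm, fun e => hp' e.symm, fun e => hq' e.symm⟩
      ⟨h.h2, hpq, fun e => hp.2.1 e.symm, fun e => hq.2.1 e.symm, fun e => hp.2.2 e.symm, fun e => hq.2.2 e.symm⟩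
  by_cases hsb : G.Adj s b ∨ G.Adj s b'
  · -- a' also has no other neighbours
    have ha' : ∀ q, q ≠ a ∧ q ≠ a' ∧ q ≠ b ∧ q ≠ b' → q ≠ s → ¬ G.Adj q a' := by
      intro q hq hqs e
      rcases hsb with e2 | e2
      · exact hqs (P1 hF h.swapL (by tauto) (by tauto) (Or.inl e) (Or.inr e2))
      · exact hqs (P1 hF h.swapL.swapR (by tauto) (by tauto) (Or.inl e) (Or.inr e2))
    have k2' := ha' r2 (by tauto) (by tauto)
    by_cases h2s : G.Adj r2 s
    · rcases hsb with e2 | e2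
      · refine no_deg4 hF (x1 := a) (x2 := b) (x3 := r) (x4 := r2) ?_ hsa.symm e2.symm hrs h2s
        simp only [List.nodup_cons, List.mem_cons, List.not_mem_nil, or_false, not_or, List.nodup_nil, and_true, not_false_eq_true]
        refine ⟨⟨hne.2.2.1, hr.1.symm, Ne.symm hr2.1⟩, ⟨hr.2.2.1.symm, Ne.symm hr2.2.2.1⟩, Ne.symm hr2.2.2.2.2.1⟩
      · refine no_deg4 hF (x1 := a) (x2 := b') (x3 := r) (x4 := r2) ?_ hsa.symm e2.symm hrs h2s
        simp only [List.nodup_cons, List.mem_cons, List.not_mem_nil, or_false, not_or, List.nodup_nil, and_true, not_false_eq_true]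
        refine ⟨⟨hne.2.2.2.1, hr.1.symm, Ne.symm hr2.1⟩, ⟨hr.2.2.2.symm, Ne.symm hr2.2.2.2.1⟩, Ne.symm hr2.2.2.2.2.1⟩
    · obtain ⟨q, hq⟩ := hiso r2
      have hq1 : q ≠ a ∧ q ≠ a' ∧ q ≠ b ∧ q ≠ b' := by
        refine ⟨?_, ?_, ?_, ?_⟩ <;> (rintro rfl; tauto)
      have hq2 : q ≠ s := by rintro rfl; exact h2s hq
      exact untouched r2 q hq k2 (hRab q hq1 hq2) k2' (ha' q hq1 hq2)
  · push Not at hsb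
    have hsa2 : E2 G s a b b' := ⟨hsa, h.h2, hsb.1, hsb.2, h.h3, h.h4⟩
    have hrne : r ≠ s := hrs.ne
    have hNs : ∀ q, q ≠ s → q ≠ a → q ≠ b → q ≠ b' → q ≠ r → ¬ G.Adj q s := by
      intro q h1 h2 h3 h4 h5 e
      exact h5 (P1 hF hsa2 ⟨h1, h2, h3, h4⟩ ⟨hrne, hr.1, hr.2.2.1, hr.2.2.2⟩ (Or.inl e) (Or.inl hrs))
    have hsa' : ¬ G.Adj a' s := hNs a' hs.2.1.symm hne.1.symm hne.2.2.2.2.1 hne.2.2.2.2.2 hr.2.1.symm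
    obtain ⟨s2, hs2, hs2s, hs2r, hs2a⟩ : ∃ s2, (s2 ≠ a ∧ s2 ≠ a' ∧ s2 ≠ b ∧ s2 ≠ b') ∧ s2 ≠ s ∧ s2 ≠ r ∧ G.Adj s2 a' := by
      by_cases h2a : G.Adj r2 a'
      · exact ⟨r2, by tauto, by tauto, by tauto, h2a⟩
      · obtain ⟨q, hq⟩ := hiso r2
        have hq1 : q ≠ a ∧ q ≠ a' ∧ q ≠ b ∧ q ≠ b' := by
          refine ⟨?_, ?_, ?_, ?_⟩ <;> (rintro rfl; tauto)
        have hq2 : q ≠ s := by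
          rintro rfl
          exact hNs r2 (by tauto) (by tauto) (by tauto) (by tauto) (by tauto) hq
        by_cases hqa : G.Adj q a'
        · exact ⟨q, hq1, hq2, by rintro rfl; exact ur.2.1 hqa, hqa⟩
        · exact (untouched r2 q hq k2 (hRab q hq1 hq2) h2a hqa).elim
    have hk := hRab s2 hs2 hs2s
    have hs2s' : ¬ G.Adj s2 s := hNs s2 hs2s hs2.1 hs2.2.2.1 hs2.2.2.2 hs2r
    have hrs2 : G.Adj s2 r := by
      by_contra hcon
      refine no_e3 hF hiso hn (a := s) (a' := r) (b := a') (b' := s2) (c := b) (c' := b') ?_ ?_ ?_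
      · exact ⟨hrs.symm, hs2a.symm, fun e => hsa' e.symm, fun e => hs2s' e.symm, ur.2.1, fun e => hcon e.symm⟩
      · exact ⟨hrs.symm, h.h2, hsb.1, hsb.2, ur.2.2.1, ur.2.2.2⟩
      · exact ⟨hs2a.symm, h.h2, h.h5, h.h6, hk.2.1, hk.2.2⟩
    exact no_c5 hF (a := a) (a' := a') (s2 := s2) (r := r) (s := s) (b := b) (b' := b') h.h1 hs2a.symm hrs2 hrs hsa
      (fun e => hk.1 e.symm) (fun e => ur.1 e.symm) (fun e => ur.2.1 e.symm) hsa' hs2s' h.h2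
      ⟨h.flip.h3, h.flip.h4, fun e => hk.2.1 e.symm, fun e => ur.2.2.1 e.symm, fun e => hsb.1 e.symm⟩
      ⟨h.flip.h5, h.flip.h6, fun e => hk.2.2 e.symm, fun e => ur.2.2.2 e.symm, fun e => hsb.2 e.symm⟩

theorem upper_small {G : SimpleGraph β} (hF : Facts K G 1)
    (hiso : ∀ v, ∃ w, G.Adj v w) : Fintype.card β ≤ 6 := by
  classical
  by_contra hn
  push Not at hn
  obtain ⟨_, c, hc⟩ := exists_cycle hF
  obtain ⟨a, a', b, b', h⟩ : ∃ a a' b b', E2 G a a' b b' := by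
    refine ⟨c 0, c 2, c 1, c 3, ?_, ?_, ?_, ?_, ?_, ?_⟩
    · by_contra h
      have := (hc.adj 0 2 (by omega) (by omega)).1 ⟨hc.inj _ _ (by omega) (by omega), h⟩
      omega
    · by_contra h
      have := (hc.adj 1 3 (by omega) (by omega)).1 ⟨hc.inj _ _ (by omega) (by omega), h⟩
      omega
    · exact ((hc.adj 0 1 (by omega) (by omega)).2 (by omega)).2
    · exact ((hc.adj 0 3 (by omega) (by omega)).2 (by omega)).2
    · exact ((hc.adj 1 2 (by omega) (by omega)).2 (by omega)).symm.2
    · exact ((hc.adj 2 3 (by omega) (by omega)).2 (by omega)).2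
  let R : Finset β := Finset.univ \ ([a, a', b, b'] : List β).toFinset
  have hRc : 2 < R.card := by
    have h3 := List.toFinset_card_le ([a, a', b, b'] : List β)
    have : R.card = Fintype.card β - ([a, a', b, b'] : List β).toFinset.card := by
      rw [Finset.card_sdiff_of_subset (Finset.subset_univ _), Finset.card_univ]
    simp only [List.length_cons, List.length_nil] at h3
    omega
  have hR : ∀ x ∈ R, x ≠ a ∧ x ≠ a' ∧ x ≠ b ∧ x ≠ b' := by
    intro x hx
    simpa [R, not_or] using hx
  obtain ⟨x, y, z, hx, hy, hz, hxy, hxz, hyz⟩ := Finset.two_lt_card.1 hRc |> fun ⟨x, hx, y, hy, z, hz, h⟩ => (⟨x, y, z, hx, hy, hz, h⟩ : ∃ x y z, x ∈ R ∧ y ∈ R ∧ z ∈ R ∧ x ≠ y ∧ x ≠ z ∧ y ≠ z)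
  have p1 : ∀ p ∈ R, ∀ q ∈ R, p ≠ q → ¬ ((G.Adj p a ∨ G.Adj p b) ∧ (G.Adj q a ∨ G.Adj q b)) :=
    fun p hp q hq hpq h' => hpq (P1 hF h (hR p hp) (hR q hq) h'.1 h'.2)
  have p2 : ∀ p ∈ R, ∀ q ∈ R, p ≠ q → ¬ ((G.Adj p a' ∨ G.Adj p b') ∧ (G.Adj q a' ∨ G.Adj q b')) :=
    fun p hp q hq hpq h' => hpq (P1 hF h.swapL.swapR (by have := hR p hp; tauto) (by have := hR q hq; tauto) h'.1 h'.2)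
  obtain ⟨r, hr, ur⟩ : ∃ r ∈ R, ¬ G.Adj r a ∧ ¬ G.Adj r a' ∧ ¬ G.Adj r b ∧ ¬ G.Adj r b' := by
    by_contra hcon
    have key : ∀ p ∈ R, (G.Adj p a ∨ G.Adj p b) ∨ (G.Adj p a' ∨ G.Adj p b') := by
      intro p hp
      by_contra h'
      push Not at h'
      exact hcon ⟨p, hp, h'.1.1, h'.2.1, h'.1.2, h'.2.2⟩
    rcases key x hx with a1 | a1 <;> rcases key y hy with a2 | a2 <;> rcases key z hz with a3 | a3 <;>
      first
      | exact p1 x hx y hy hxy ⟨a1, a2⟩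
      | exact p1 x hx z hz hxz ⟨a1, a3⟩
      | exact p1 y hy z hz hyz ⟨a2, a3⟩
      | exact p2 x hx y hy hxy ⟨a1, a2⟩
      | exact p2 x hx z hz hxz ⟨a1, a3⟩
      | exact p2 y hy z hz hyz ⟨a2, a3⟩
  obtain ⟨s, hs⟩ := hiso r
  have hs1 : s ≠ a ∧ s ≠ a' ∧ s ≠ b ∧ s ≠ b' := by
    refine ⟨?_, ?_, ?_, ?_⟩ <;> (rintro rfl; tauto)
  have hr1 := hR r hr
  clear p1 p2
  by_cases s1 : G.Adj s a
  · exact small_core hF hiso hn h hr1 ur hs hs1 s1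
  by_cases s2 : G.Adj s a'
  · exact small_core hF hiso hn h.swapL (by clear hs1 ur; tauto) (by clear hs1 hr1; tauto) hs (by clear hr1 ur; tauto) s2
  by_cases s3 : G.Adj s b
  · exact small_core hF hiso hn h.flip (by clear hs1 ur; tauto) (by clear hs1 hr1; tauto) hs (by clear hr1 ur; tauto) s3
  by_cases s4 : G.Adj s b'
  · exact small_core hF hiso hn h.flip.swapL (by clear hs1 ur; tauto) (by clear hs1 hr1; tauto) hs (by clear hr1 ur; tauto) s4
  exact no_e3 hF hiso hn h (c := r) (c' := s)
    ⟨h.h1, hs, fun e => ur.1 e.symm, fun e => s1 e.symm, fun e => ur.2.1 e.symm, fun e => s2 e.symm⟩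
    ⟨h.h2, hs, fun e => ur.2.2.1 e.symm, fun e => s3 e.symm, fun e => ur.2.2.2 e.symm, fun e => s4 e.symm⟩

end smallsec

theorem main (K : Type) [Field K] (n t : ℕ) (G : SimpleGraph (Fin n))
    (hiso : ∀ v : Fin n, ∃ w, G.Adj v w)
    (hidx : EP.gIndex K G = (t : ℕ∞)) (hpd : EP.gPd K G = t + 1) :
    n = t + 4 ∨ n = t + 5 := by
  have hF : Facts K G t := facts G t hidx hpd
  have h1 := lower_bound hF
  have ht := (exists_cycle hF).1
  have h2 : Fintype.card (Fin n) ≤ t + 5 := by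
    by_cases h : t = 1
    · subst h; exact upper_small hF hiso
    · exact upper_big hF (by omega) hiso
  rw [Fintype.card_fin] at h1 h2
  omega
end AM

/-- If `G` has no isolated vertex and `I(G)` has almost maximal finite
index `t` (that is, `index(I(G)) = t` and `pd(I(G)) = t + 1`), then `G` has `t + 4` or
`t + 5` vertices. -/
theorem statement9 (K : Type) [Field K] (n t : ℕ) (G : SimpleGraph (Fin n))
    (hiso : ∀ v : Fin n, ∃ w, G.Adj v w)
    (hidx : EP.gIndex K G = (t : ℕ∞)) (hpd : EP.gPd K G = t + 1) :
    n = t + 4 ∨ n = t + 5 := by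
  exact AM.main K n t G hiso hidx hpd
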